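/- Let G be a planar 4-connected graph on n vertices and let v be a vertex of G of degree 4 or 5. Then for every Hamiltonian cycle 𝔥 of G there exists a CDC 𝒮 of G of size at most n−1 such that at least one of the following holds: (a) 𝔥 ∈ 𝒮; or (b) n is odd and there are cycles C¹, C² ∈ 𝒮 such that E(C¹) ∩ E(C²) consists of a single edge e incident to v and the symmetric difference of C¹ and C² is 𝔥. Moreover, if n is even then (a) always holds. -/

import Mathlib

/-!
Alternative (a) always holds: every Hamiltonian cycle `H` of a planar 4-connected graph on `n`
vertices belongs to a cycle double cover with at most `n - 1` members, whatever the parity of `n`.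

The main tool is Hajós' bound for planar graphs (`PlanarCDC.hajos`): a planar graph with all degrees
even and `n` non-isolated vertices decomposes into at most `(n - 1) / 2` cycles. It is proved by
induction on the number of edges. A minimal counterexample is 2-connected, has no vertex of degree 2
with non-adjacent neighbours, and at every vertex of degree 4 each of the three pairings of the
neighbours has both pairs adjacent or neither; otherwise a splitting or suppression gives a smaller
graph whose decomposition lifts back. By the edge bound `3 * n - 6` there are two vertices of degree at
most 4, and a cycle through both can be chosen such that after its removal both can be suppressed
(`PlanarCDC.exists_ok`), which saves one cycle for two vertices.

Let `K` be the graph of chords, that is, `G` without the edges of `H`. For even `n`, take a set `J`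
of edges of `H` with the same degree parities as `K`. Then `K ∪ J` and `K ∪ (H \ J)` are even; their
decompositions together with `H` form a double cover by at most `1 + 2 * (n - 2) / 2` cycles
(`PlanarCDC.good_even`).

For odd `n` this yields one cycle too many. Instead, a cycle `T` of chords is added to the cover, `J`
is chosen inside `T ∪ H`, and `(K \ T) ∪ J` and `(K \ T) ∪ ((T ∪ H) \ J)` are decomposed. This
suffices as soon as each of these two even graphs has a vertex that is isolated or of degree 2 with
non-adjacent neighbours, since each of them then needs at most `(n - 3) / 2` cycles
(`PlanarCDC.good_odd`). Such vertices are provided by an end block of `K`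
(`PlanarCDC.exists_block`): by the edge bound it contains a vertex with two chords, or three
vertices with three chords, all different from its attachment vertex. A vertex with two chords serves
for both graphs at once (`PlanarCDC.good_two`). Among three vertices with three chords, two, `u` and
`v`, cut `H` into arcs of odd chord parity (`PlanarCDC.exists_arcs`), and `T` is a cycle of the block
through both. The edges of `J` at `u` and `v` are prescribed so that `v` is suppressible in one
graph and `u` in the other, and the rest of `J` is found by parity. This fails only if the
neighbourhoods of `u` and `v` have a special form, because 4-connectedness and planarity
strongly restrict the adjacencies among the neighbours of a vertex with three chords
(`PlanarCDC.no_K4`, `PlanarCDC.no_star`, `PlanarCDC.no_wheel4`). In the special cases `T` is rerouted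
through the third chord at `v` or `u` (`PlanarCDC.reroute`), after which the construction succeeds
(`PlanarCDC.Cfg.case_one`, `PlanarCDC.Cfg.case_two`).
-/

open SimpleGraph

attribute [local instance] Classical.propDecidable

/-- A cycle in a graph: a connected, 2-regular subgraph. -/
def IsCycleSubgraph {V : Type*} {G : SimpleGraph V} (C : G.Subgraph) : Prop :=
  C.coe.Connected ∧ ∀ v ∈ C.verts, (C.neighborSet v).ncard = 2

/-- A cycle double cover: a multiset of cycles covering every edge exactly twice
(counted with multiplicity). -/
def IsCDC {V : Type*} (G : SimpleGraph V) (S : Multiset G.Subgraph) : Prop :=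
  (∀ C ∈ S, IsCycleSubgraph C) ∧
  ∀ e ∈ G.edgeSet, S.countP (fun C => e ∈ C.edgeSet) = 2

/-- Graph minor relation (via branch sets). -/
def HasGraphMinor {V : Type*} {W : Type*} (G : SimpleGraph V) (H : SimpleGraph W) : Prop :=
  ∃ f : W → Set V,
    (∀ w, (f w).Nonempty) ∧
    (∀ w, (G.induce (f w)).Connected) ∧
    (Pairwise fun w₁ w₂ => Disjoint (f w₁) (f w₂)) ∧
    ∀ ⦃w₁ w₂⦄, H.Adj w₁ w₂ → ∃ v₁ ∈ f w₁, ∃ v₂ ∈ f w₂, G.Adj v₁ v₂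

/-- Planarity, via Wagner's theorem: no `K₅` minor and no `K_{3,3}` minor. -/
def IsPlanar {V : Type*} (G : SimpleGraph V) : Prop :=
  ¬ HasGraphMinor G (completeGraph (Fin 5)) ∧
  ¬ HasGraphMinor G (completeBipartiteGraph (Fin 3) (Fin 3))

/-- `k`-connectivity: more than `k` vertices, and removing fewer than `k`
vertices leaves a connected graph. -/
def IsKConnected {V : Type*} [Fintype V] (k : ℕ) (G : SimpleGraph V) : Prop :=
  k < Fintype.card V ∧ ∀ s : Set V, s.ncard < k → (G.induce sᶜ).Connected

/-- A Hamiltonian cycle: a cycle through all vertices. -/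
def IsHamCycle {V : Type*} (G : SimpleGraph V) (C : G.Subgraph) : Prop :=
  IsCycleSubgraph C ∧ C.verts = Set.univ

set_option linter.unusedSectionVars false
set_option linter.unusedVariables false

namespace PlanarCDC
noncomputable section
variable {V : Type*} [Fintype V]

/-! ### Degrees, paths and connected vertex sets -/

/-- The neighbours of `v`, as a finite set. -/
def nb (G : SimpleGraph V) (v : V) : Finset V := Finset.univ.filter (G.Adj v)

/-- The degree of `v`. -/
def dg (G : SimpleGraph V) (v : V) : ℕ := (nb G v).card

/-- The support of `G`: its non-isolated vertices. -/
def sp (G : SimpleGraph V) : Finset V := Finset.univ.filter (fun v => ∃ w, G.Adj v w)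

@[simp] theorem mem_nb {G : SimpleGraph V} {v w : V} : w ∈ nb G v ↔ G.Adj v w := by simp [nb]

@[simp] theorem mem_sp {G : SimpleGraph V} {v : V} : v ∈ sp G ↔ ∃ w, G.Adj v w := by simp [sp]

theorem dg_eq_zero {G : SimpleGraph V} {v : V} : dg G v = 0 ↔ v ∉ sp G := by
  simp [dg, Finset.eq_empty_iff_forall_notMem]

theorem dg_mono {A B : SimpleGraph V} (h : A ≤ B) (v : V) : dg A v ≤ dg B v :=
  Finset.card_le_card fun w hw => by simp at *; exact h hw

theorem nb_sup (A B : SimpleGraph V) (v : V) : nb (A ⊔ B) v = nb A v ∪ nb B v := by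
  ext; simp

theorem dg_sup {A B : SimpleGraph V} (h : Disjoint A B) (v : V) :
    dg (A ⊔ B) v = dg A v + dg B v := by
  rw [dg, nb_sup, Finset.card_union_of_disjoint]; rfl
  rw [Finset.disjoint_left]
  intro w h1 h2
  simp at h1 h2
  exact (disjoint_left.mp h) _ _ h1 h2

theorem dg_sdiff {A B : SimpleGraph V} (h : A ≤ B) (v : V) :
    dg (B \ A) v + dg A v = dg B v := by
  rw [← dg_sup disjoint_sdiff_self_left, sdiff_sup_cancel h]

theorem sp_sup (A B : SimpleGraph V) : sp (A ⊔ B) = sp A ∪ sp B := by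
  ext v; simp [exists_or]

theorem sp_mono {A B : SimpleGraph V} (h : A ≤ B) : sp A ⊆ sp B := by
  intro v; simp; exact fun w hw => ⟨w, h hw⟩

theorem ne_bot_iff_sp {A : SimpleGraph V} : A ≠ ⊥ ↔ (sp A).Nonempty := by
  rw [SimpleGraph.ne_bot_iff_exists_adj]
  simp [Finset.Nonempty]

theorem dg_edge {s t : V} (h : s ≠ t) (w : V) :
    dg (edge s t) w = (if w = s then 1 else 0) + (if w = t then 1 else 0) := by
  by_cases h1 : w = s
  · subst h1
    have : nb (edge w t) w = {t} := by ext x; simp [edge_adj]; grind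
    simp [dg, this, h]
  · by_cases h2 : w = t
    · subst h2
      have : nb (edge s w) w = {s} := by ext x; simp [edge_adj]; grind
      simp [dg, this, h1]
    · have : nb (edge s t) w = ∅ := by ext x; simp [edge_adj]; grind
      simp [dg, this, h1, h2]

theorem even_sum_dg (G : SimpleGraph V) : Even (∑ v, dg G v) := by
  have := G.sum_degrees_eq_twice_card_edges
  have h : ∀ v, dg G v = G.degree v := fun v => by
    rw [dg, nb, ← card_neighborFinset_eq_degree, neighborFinset_eq_filter]
  simp_rw [h, this]; simp

/-- The edges of `G` with both ends in `X`. -/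
def rs (G : SimpleGraph V) (X : Finset V) : SimpleGraph V where
  Adj a b := G.Adj a b ∧ a ∈ X ∧ b ∈ X
  symm := ⟨fun a b h => ⟨h.1.symm, h.2.2, h.2.1⟩⟩
  loopless := ⟨fun a h => G.loopless.1 a h.1⟩

@[simp] theorem rs_adj {G : SimpleGraph V} {X : Finset V} {a b : V} :
    (rs G X).Adj a b ↔ G.Adj a b ∧ a ∈ X ∧ b ∈ X := Iff.rfl

theorem rs_le (G : SimpleGraph V) (X : Finset V) : rs G X ≤ G := fun _ _ h => h.1

/-- Handshake lemma on a set that no edge leaves. -/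
theorem even_sum_closed {G : SimpleGraph V} {X : Finset V}
    (h : ∀ a ∈ X, ∀ b, G.Adj a b → b ∈ X) : Even (∑ v ∈ X, dg G v) := by
  have h1 := even_sum_dg (rs G X)
  have h2 : ∀ v, dg (rs G X) v = if v ∈ X then dg G v else 0 := by
    intro v
    split_ifs with hv
    · unfold dg; congr 1; ext w; simp; grind
    · unfold dg; simp only [Finset.card_eq_zero]; ext w; simp; grind
  simp_rw [h2] at h1
  simpa using h1

/-- `Pth A s t S`: the graph `A` is a path from `s` to `t` with vertex set `S`;
a single vertex is a path without edges. -/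
inductive Pth : SimpleGraph V → V → V → Finset V → Prop
  | nil (s : V) : Pth ⊥ s s {s}
  | cons {A : SimpleGraph V} {s s' t : V} {S : Finset V} :
      Pth A s' t S → s ∉ S → Pth (A ⊔ edge s s') s t (insert s S)

namespace Pth
variable {A B : SimpleGraph V} {s t y : V} {S S' : Finset V}

theorem left_mem (h : Pth A s t S) : s ∈ S := by cases h <;> simp
theorem right_mem (h : Pth A s t S) : t ∈ S := by induction h <;> simp_all

theorem adj_mem (h : Pth A s t S) {a b : V} (hab : A.Adj a b) : a ∈ S := by
  induction h with
  | nil s => simp at hab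
  | cons h hs ih => simp [edge_adj] at hab ⊢; have := h.left_mem; grind

theorem adj_mem' (h : Pth A s t S) {a b : V} (hab : A.Adj a b) : b ∈ S := h.adj_mem hab.symm

theorem cast' (h : Pth A s t S) (hA : A = B) (hS : S = S') : Pth B s t S' := hA ▸ hS ▸ h

theorem concat (h : Pth A s y S) (h' : Pth B y t S') (hS : ∀ w ∈ S, w ∈ S' → w = y) :
    Pth (A ⊔ B) s t (S ∪ S') := by
  induction h with
  | nil s => exact h'.cast' (by simp) (by simp [h'.left_mem])
  | @cons A s s' t S h hs ih =>
    refine ((ih h' (by grind)).cons (s := s) (s' := s') ?_).cast' ?_ ?_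
    · have := h.right_mem
      have := hS s (by simp)
      grind
    · rw [sup_right_comm]
    · simp

theorem split (h : Pth A s t S) (hy : y ∈ S) : ∃ A1 A2 S1 S2, Pth A1 s y S1 ∧ Pth A2 y t S2 ∧
    A1 ⊔ A2 = A ∧ S1 ∪ S2 = S ∧ (∀ w ∈ S1, w ∈ S2 → w = y) := by
  induction h with
  | nil s =>
    simp at hy; subst hy
    exact ⟨⊥, ⊥, {y}, {y}, .nil _, .nil _, by simp, by simp, by simp⟩
  | @cons A s s' t S h hs ih =>
    by_cases hys : y = s
    · subst hys
      exact ⟨⊥, _, {y}, _, .nil _, h.cons hs, by simp, by simp, by simp⟩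
    · obtain ⟨A1, A2, S1, S2, h1, h2, e1, e2, h3⟩ := ih (by grind)
      refine ⟨_, A2, _, S2, h1.cons (s := s) (by grind), h2, ?_, by simp [← e2], by grind⟩
      rw [← e1, sup_right_comm]

theorem single {s t : V} (h : s ≠ t) : Pth (edge s t) s t {s, t} :=
  ((nil t).cons (s := s) (by simpa)).cast' (by simp) rfl

theorem rev (h : Pth A s t S) : Pth A t s S := by
  induction h with
  | nil s => exact .nil s
  | @cons A s s' t S h hs ih =>
    have := h.left_mem
    refine (ih.concat (single (s := s') (t := s) ?_) ?_).cast' ?_ ?_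
    · grind
    · grind
    · rw [edge_comm]
    · ext; simp; grind

theorem ne_of_cons (h : Pth A s t S) (hst : s ≠ t) : ∃ A' s' S', Pth A' s' t S' ∧ s ∉ S' ∧
    A = A' ⊔ edge s s' ∧ S = insert s S' := by
  cases h with
  | nil => simp at hst
  | cons h hs => exact ⟨_, _, _, h, hs, rfl, rfl⟩

/-- Degrees along a path, in a form that also covers the one-vertex path. -/
theorem dg_eq (h : Pth A s t S) (w : V) : dg A w + (if w = s then 1 else 0) +
    (if w = t then 1 else 0) = if w ∈ S then 2 else 0 := by
  induction h with
  | nil s =>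
    have : dg (⊥ : SimpleGraph V) w = 0 := by simp [dg_eq_zero]
    simp [this]; grind
  | @cons A s s' t S h hs ih =>
    have hne : s ≠ s' := by have := h.left_mem; grind
    rw [dg_sup, dg_edge hne]
    · have := h.left_mem
      simp only [Finset.mem_insert]
      grind
    · rw [disjoint_left]
      intro a b h1 h2
      have := h.adj_mem h1; have := h.adj_mem' h1
      simp [edge_adj] at h2; grind

theorem cut (h : Pth A s t S) {X : Set V} (hX : ∀ a ∈ X, ∀ b, A.Adj a b → b ∈ X)
    {a : V} (ha : a ∈ X) (haS : a ∈ S) : ∀ b ∈ S, b ∈ X := by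
  induction h generalizing a with
  | nil s => simp_all
  | @cons A s s' t S h hs ih =>
    have hne : s ≠ s' := by have := h.left_mem; grind
    have hX' : ∀ a ∈ X, ∀ b, A.Adj a b → b ∈ X := fun a ha b hb => hX a ha b (Or.inl hb)
    have e1 : s ∈ X → s' ∈ X := fun h => hX _ h _ (by simp [edge_adj, hne])
    have e2 : s' ∈ X → s ∈ X := fun h => hX _ h _ (by simp [edge_adj, hne, hne.symm])
    have := h.left_mem
    have key : s' ∈ X := by
      by_cases e : a = s
      · exact e1 (e ▸ ha)
      · exact ih hX' ha (by grind) _ this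
    have h3 := ih hX' key this
    intro b hb
    rcases Finset.mem_insert.mp hb with rfl | hb
    · exact e2 key
    · exact h3 b hb

theorem sp_eq (h : Pth A s t S) (hst : s ≠ t) : sp A = S := by
  ext w
  have := h.dg_eq w
  have h0 := dg_eq_zero (G := A) (v := w)
  have := h.left_mem; have := h.right_mem
  grind

/-- A path from `x` into `P` inside `W` that stops as soon as it meets `P`. -/
theorem exists_of_reach {G : SimpleGraph V} {W : Finset V} {P : Set V} {x p : V}
    (h : Relation.ReflTransGen (fun a b => G.Adj a b ∧ b ∈ W) x p) (hx : x ∈ W) (hp : p ∈ P) :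
    ∃ y A S, Pth A x y S ∧ A ≤ G ∧ S ⊆ W ∧ y ∈ P ∧ ∀ w ∈ S, w ∈ P → w = y := by
  induction h using Relation.ReflTransGen.head_induction_on with
  | refl => exact ⟨p, ⊥, {p}, .nil p, bot_le, by simpa, hp, by simp⟩
  | @head a c hac hcp ih =>
    by_cases haP : a ∈ P
    · exact ⟨a, ⊥, {a}, .nil a, bot_le, by simpa, haP, by simp⟩
    · obtain ⟨y, A, S, h1, h2, h3, h4, h5⟩ := ih hac.2
      by_cases haS : a ∈ S
      · obtain ⟨A1, A2, S1, S2, g1, g2, g3, g4, g5⟩ := h1.split haS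
        exact ⟨y, A2, S2, g2, by grw [← h2, ← g3]; exact le_sup_right, by grind, h4, by grind⟩
      · refine ⟨y, _, _, h1.cons haS, sup_le h2 ?_, by grind, h4, by grind⟩
        intro a' b' hab
        simp [edge_adj] at hab
        rcases hab with ⟨⟨rfl, rfl⟩ | ⟨rfl, rfl⟩, _⟩
        exacts [hac.1, hac.1.symm]

end Pth

/-- `W` induces a connected subgraph of `G`, in cut form. -/
def ConnSet (G : SimpleGraph V) (W : Finset V) : Prop :=
  W.Nonempty ∧ ∀ X : Finset V, (∀ a ∈ X, ∀ b ∈ W, G.Adj a b → b ∈ X) →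
    ∀ a ∈ W, a ∈ X → ∀ b ∈ W, b ∈ X

/-- The vertices reachable from `w` along edges of `G` whose steps stay in `W`; for `w ∈ W` this is the
component of `w` in `W`. -/
def cmp (G : SimpleGraph V) (W : Finset V) (w : V) : Finset V :=
  Finset.univ.filter (Relation.ReflTransGen (fun a b => G.Adj a b ∧ b ∈ W) w)

section Conn
variable {G : SimpleGraph V} {W : Finset V} {w : V}

theorem mem_cmp_self : w ∈ cmp G W w := by simp [cmp, Relation.ReflTransGen.refl]

theorem cmp_closed {a b : V} (ha : a ∈ cmp G W w) (hab : G.Adj a b) (hb : b ∈ W) :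
    b ∈ cmp G W w := by
  simp [cmp] at *
  exact ha.tail ⟨hab, hb⟩

theorem cmp_subset (hw : w ∈ W) : cmp G W w ⊆ W := by
  intro x hx
  simp [cmp] at hx
  induction hx with
  | refl => exact hw
  | tail _ h _ => exact h.2

theorem cmp_conn : ConnSet G (cmp G W w) := by
  refine ⟨⟨w, mem_cmp_self⟩, fun X hX a ha haX b hb => ?_⟩
  have key : ∀ c, Relation.ReflTransGen (fun a b => G.Adj a b ∧ b ∈ W) w c → (w ∈ X ↔ c ∈ X) := by
    intro c hc
    induction hc with
    | refl => rfl
    | @tail d e h1 h2 ih =>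
      have hd : d ∈ cmp G W w := by simpa [cmp]
      rw [ih]
      exact ⟨fun h => hX d h e (cmp_closed hd h2.1 h2.2) h2.1,
        fun h => hX e h d hd h2.1.symm⟩
  have h1 := key a (by simpa [cmp] using ha)
  have h2 := key b (by simpa [cmp] using hb)
  tauto

theorem ConnSet.reach (h : ConnSet G W) {x y : V} (hx : x ∈ W) (hy : y ∈ W) :
    Relation.ReflTransGen (fun a b => G.Adj a b ∧ b ∈ W) x y := by
  have := h.2 (cmp G W x) (fun a ha b hb hab => cmp_closed ha hab hb) x hx mem_cmp_self y hy
  simpa [cmp] using this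

theorem ConnSet.path (h : ConnSet G W) {P : Set V} {x p : V} (hx : x ∈ W) (hp : p ∈ W)
    (hpP : p ∈ P) :
    ∃ y A S, Pth A x y S ∧ A ≤ G ∧ S ⊆ W ∧ y ∈ P ∧ ∀ w ∈ S, w ∈ P → w = y :=
  Pth.exists_of_reach (h.reach hx hp) hx hpP

theorem ConnSet.exists_adj (h : ConnSet G W) {X : Finset V} {a b : V} (ha : a ∈ W) (hb : b ∈ W)
    (haX : a ∈ X) (hbX : b ∉ X) : ∃ c ∈ X, ∃ d ∈ W, d ∉ X ∧ c ∈ W ∧ G.Adj c d := by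
  by_contra! hc
  have := h.2 (X ∩ W) (fun c hcX d hd hcd => by
    by_contra hdX
    exact hc c (by grind) d hd (by grind) (by grind) hcd) a ha (by grind) b hb
  grind

theorem ConnSet.mono {G' : SimpleGraph V} (h : ConnSet G W) (hG : G ≤ G') : ConnSet G' W :=
  ⟨h.1, fun X hX => h.2 X fun a ha b hb hab => hX a ha b hb (hG hab)⟩

theorem ConnSet.singleton (v : V) : ConnSet G {v} :=
  ⟨by simp, fun X _ a ha haX b hb => by simp_all⟩

theorem ConnSet.union {W' : Finset V} (h : ConnSet G W) (h' : ConnSet G W') {a b : V}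
    (ha : a ∈ W) (hb : b ∈ W') (hab : G.Adj a b ∨ a = b) : ConnSet G (W ∪ W') := by
  refine ⟨⟨a, by grind⟩, fun X hX x hx hxX y hy => ?_⟩
  have k1 := h.2 X fun a ha b hb => hX a ha b (by grind)
  have k2 := h'.2 X fun a ha b hb => hX a ha b (by grind)
  have e : a ∈ X ↔ b ∈ X := by
    rcases hab with hab | rfl
    · exact ⟨fun h => hX a h b (by grind) hab, fun h => hX b h a (by grind) hab.symm⟩
    · rfl
  grind

theorem ConnSet.pair {a b : V} (h : G.Adj a b) : ConnSet G {a, b} :=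
  (ConnSet.singleton a).union (ConnSet.singleton b) (by simp) (by simp) (Or.inl h)

theorem ConnSet.pth {A : SimpleGraph V} {s t : V} {S : Finset V} (h : Pth A s t S) (hA : A ≤ G) :
    ConnSet G S := by
  refine ConnSet.mono ⟨⟨s, h.left_mem⟩, fun X hX a ha haX b hb => ?_⟩ hA
  exact h.cut (X := X) (fun c hc d hcd => hX c hc d (h.adj_mem' hcd) hcd) haX ha b hb

theorem connSet_iff : ConnSet G W ↔ (G.induce (W : Set V)).Connected := by
  constructor
  · intro h
    have hne : Nonempty (W : Set V) := ⟨⟨_, h.1.choose_spec⟩⟩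
    refine ⟨fun x y => ?_⟩
    have := h.reach x.2 y.2
    have key : ∀ z, Relation.ReflTransGen (fun a b => G.Adj a b ∧ b ∈ W) x z →
        ∃ hz : z ∈ (W : Set V), (G.induce (W : Set V)).Reachable x ⟨z, hz⟩ := by
      intro z hz
      induction hz with
      | refl => exact ⟨x.2, Reachable.refl _⟩
      | @tail d e _ h2 ih =>
        obtain ⟨hd, ih⟩ := ih
        exact ⟨h2.2, ih.trans (Adj.reachable (by simpa using h2.1))⟩
    exact (key y this).2
  · intro h
    refine ⟨?_, fun X hX a ha haX b hb => ?_⟩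
    · obtain ⟨x⟩ := h.nonempty; exact ⟨x, x.2⟩
    · have hr := h.preconnected ⟨a, ha⟩ ⟨b, hb⟩
      rw [reachable_iff_reflTransGen] at hr
      have key : ∀ z, Relation.ReflTransGen (G.induce (W : Set V)).Adj ⟨a, ha⟩ z → z.1 ∈ X := by
        intro z hz
        induction hz with
        | refl => exact haX
        | @tail d e _ h2 ih => exact hX _ ih _ e.2 (by simpa using h2)
      exact key _ hr

end Conn

/-! ### Cycles -/

theorem edge_le' {G : SimpleGraph V} {a b : V} (h : G.Adj a b) : edge a b ≤ G := by
  intro a' b' hab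
  simp [edge_adj] at hab
  rcases hab with ⟨⟨rfl, rfl⟩ | ⟨rfl, rfl⟩, _⟩
  exacts [h, h.symm]

/-- `C` is (the edge set of) a cycle: nonempty, 2-regular on its support, and connected, the
last in cut form. -/
def IsCyc (C : SimpleGraph V) : Prop :=
  C ≠ ⊥ ∧ (∀ v, dg C v = 0 ∨ dg C v = 2) ∧
    ∀ X : Set V, (∀ a ∈ X, ∀ b, C.Adj a b → b ∈ X) → ∀ a ∈ X, a ∈ sp C → ∀ b ∈ sp C, b ∈ X

theorem IsCyc.dg_two {C : SimpleGraph V} (h : IsCyc C) {v : V} (hv : v ∈ sp C) : dg C v = 2 := by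
  have := h.2.1 v
  have := dg_eq_zero (G := C) (v := v)
  grind

theorem IsCyc.nb_pair {C : SimpleGraph V} (h : IsCyc C) {v : V} (hv : v ∈ sp C) :
    ∃ a b, a ≠ b ∧ nb C v = {a, b} := Finset.card_eq_two.mp (h.dg_two hv)

theorem isCyc_glue {A B : SimpleGraph V} {s t : V} {S S' : Finset V} (hA : Pth A s t S)
    (hB : Pth B s t S') (hst : s ≠ t) (hd : Disjoint A B)
    (hS : ∀ w ∈ S, w ∈ S' → w = s ∨ w = t) : IsCyc (A ⊔ B) := by
  have e : sp (A ⊔ B) = S ∪ S' := by rw [sp_sup, hA.sp_eq hst, hB.sp_eq hst]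
  have := hA.left_mem; have := hA.right_mem; have := hB.left_mem; have := hB.right_mem
  refine ⟨ne_bot_iff_sp.mpr (e ▸ ⟨s, by grind⟩), fun v => ?_, fun X hX a ha haS b hb => ?_⟩
  · rw [dg_sup hd]
    have h1 := hA.dg_eq v
    have h2 := hB.dg_eq v
    grind
  · rw [e] at haS hb
    have c1 := fun c hc hcS => hA.cut (X := X) (a := c) (fun a ha b hb => hX a ha b (Or.inl hb)) hc hcS
    have c2 := fun c hc hcS => hB.cut (X := X) (a := c) (fun a ha b hb => hX a ha b (Or.inr hb)) hc hcS
    grind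

theorem nb_eq_of_le {C T : SimpleGraph V} (hT : IsCyc T) (hC : ∀ v, dg C v = 0 ∨ dg C v = 2)
    (h : C ≤ T) {v : V} (hv : v ∈ sp C) : nb C v = nb T v := by
  refine Finset.eq_of_subset_of_card_le (fun w => by simpa using fun hw => h hw) ?_
  have h1 := hT.dg_two (sp_mono h hv)
  have h2 := hC v
  have := dg_eq_zero (G := C) (v := v)
  simp only [dg] at *
  grind

theorem isCyc_eq_of_le {C T : SimpleGraph V} (hT : IsCyc T) (h0 : C ≠ ⊥)
    (hC : ∀ v, dg C v = 0 ∨ dg C v = 2) (h : C ≤ T) : C = T := by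
  have key : ∀ v ∈ sp C, nb C v = nb T v := fun v hv => nb_eq_of_le hT hC h hv
  obtain ⟨c, hc⟩ := ne_bot_iff_sp.mp h0
  have hs := hT.2.2 (sp C : Set V) (fun a ha b hb => by
    have : b ∈ nb C a := by rw [key a ha]; simpa
    simp at this ⊢
    exact ⟨a, this.symm⟩) c hc (sp_mono h hc)
  refine le_antisymm h fun a b hab => ?_
  have : b ∈ nb C a := by rw [key a (hs a (by simp; exact ⟨b, hab⟩))]; simpa
  simpa using this

theorem IsCyc.conn {T : SimpleGraph V} (h : IsCyc T) : ConnSet T (sp T) := by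
  refine ⟨ne_bot_iff_sp.mp h.1, fun X hX a ha haX b hb => ?_⟩
  refine h.2.2 (X : Set V) (fun c hc d hcd => hX c hc d ?_ hcd) a haX ha b hb
  simp; exact ⟨c, hcd.symm⟩

/-- A cycle splits at two of its vertices into two internally disjoint paths. -/
theorem IsCyc.split {T : SimpleGraph V} (hT : IsCyc T) {v y : V} (hv : v ∈ sp T) (hy : y ∈ sp T)
    (hvy : v ≠ y) : ∃ A B S S', Pth A v y S ∧ Pth B v y S' ∧ A ⊔ B = T ∧ Disjoint A B ∧
      S ∪ S' = sp T ∧ ∀ w ∈ S, w ∈ S' → w = v ∨ w = y := by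
  obtain ⟨y', A, S, hA, hAT, hS, hy', -⟩ := hT.conn.path (P := {y}) hv hy rfl
  obtain rfl : y' = y := hy'
  set B := T \ A with hB
  have hdB : ∀ w, dg B w + dg A w = dg T w := fun w => dg_sdiff hAT w
  have h2 := hT.2.1
  have hTs : ∀ w, dg T w = 0 ↔ w ∉ sp T := fun w => dg_eq_zero
  -- by the handshake lemma the component of `v` in the complement of the first path reaches `y`
  have hyc : y' ∈ cmp B Finset.univ v := by
    by_contra hyc
    have hev := even_sum_closed (G := B) (X := cmp B Finset.univ v)
      (fun a ha b hab => cmp_closed ha hab (by simp))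
    rw [← Finset.add_sum_erase _ _ (mem_cmp_self (G := B) (W := Finset.univ) (w := v))] at hev
    have h1 : Even (∑ x ∈ (cmp B Finset.univ v).erase v, dg B x) := by
      refine Finset.even_sum _ fun x hx => ?_
      have := hdB x; have := h2 x; have := hA.dg_eq x
      have : x ≠ v := by grind
      have : x ≠ y' := by grind
      rw [Nat.even_iff]; grind
    have := hdB v; have := hT.dg_two hv; have := hA.dg_eq v; have := hA.left_mem
    have h3 : dg B v = 1 := by grind
    rw [h3] at hev
    rw [Nat.even_iff] at *; omega
  have hyr : Relation.ReflTransGen (fun a b => B.Adj a b ∧ b ∈ Finset.univ) v y' := by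
    simpa [cmp] using hyc
  obtain ⟨y'', C, S', hC, hCB, -, hy'', -⟩ := Pth.exists_of_reach (P := {y'}) hyr (by simp) rfl
  obtain rfl : y'' = y' := hy''
  have hd : Disjoint A C := by
    rw [hB] at hCB
    exact disjoint_sdiff_self_right.mono_right hCB
  have hSS : ∀ w ∈ S, w ∈ S' → w = v ∨ w = y'' := by
    intro w hw hw'
    have := hA.dg_eq w; have := hC.dg_eq w; have := hdB w; have := h2 w
    have := dg_mono hCB w
    grind
  have hcyc := isCyc_glue hA hC hvy hd hSS
  have hle : A ⊔ C ≤ T := sup_le hAT (hCB.trans sdiff_le)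
  have heq := isCyc_eq_of_le hT hcyc.1 hcyc.2.1 hle
  refine ⟨A, C, S, S', hA, hC, heq, hd, ?_, hSS⟩
  rw [← heq, sp_sup, hA.sp_eq hvy, hC.sp_eq hvy]

/-- Two vertices of a set that stays connected after deleting any one vertex lie on a common
cycle inside the set. -/
theorem exists_cyc_through {G : SimpleGraph V} {B : Finset V} (hB : ConnSet G B)
    (h2 : ∀ z ∈ B, ConnSet G (B.erase z)) (h3 : 3 ≤ B.card) {u v : V} (hu : u ∈ B) (hv : v ∈ B)
    (huv : u ≠ v) : ∃ T, IsCyc T ∧ T ≤ G ∧ sp T ⊆ B ∧ u ∈ sp T ∧ v ∈ sp T := by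
  have key := hB.2 (insert u (Finset.univ.filter fun w =>
    ∃ T, IsCyc T ∧ T ≤ G ∧ sp T ⊆ B ∧ u ∈ sp T ∧ w ∈ sp T)) ?_ u hu (by simp) v hv
  · simp at key ⊢; grind
  intro w hw w' hw' hadj
  by_cases hw'u : w' = u
  · simp [hw'u]
  simp only [Finset.mem_insert, Finset.mem_filter, Finset.mem_univ, true_and] at hw ⊢
  right
  have hcommon : ∀ T, IsCyc T → T ≤ G → sp T ⊆ B → u ∈ sp T → w ∈ sp T → w' ∉ sp T →
      (∃ y ∈ sp T, y ≠ w) →  ∃ T, IsCyc T ∧ T ≤ G ∧ sp T ⊆ B ∧ u ∈ sp T ∧ w' ∈ sp T := by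
    rintro T hT hTG hTB huT hwT hw'T ⟨y0, hy0, hy0w⟩
    obtain ⟨y, Q, SQ, hQ, hQG, hQS, hyP, hSP⟩ :=
      (h2 w (hTB hwT)).path (P := (sp T : Set V)) (x := w') (p := y0) (by grind) (by grind) hy0
    have hyw : w ≠ y := by have := hQS hQ.right_mem; grind
    have hyT : y ∈ sp T := hyP
    obtain ⟨A, C, S, S', hA, hC, hAC, hd, hSS, hcap⟩ := hT.split hwT hyT hyw
    have hwQ : w ∉ SQ := fun h => by have := hQS h; grind
    have hE : Pth (Q ⊔ edge w w') w y (insert w SQ) := hQ.cons hwQ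
    have hEG : Q ⊔ edge w w' ≤ G := sup_le hQG (edge_le' hadj)
    have main : ∀ A S, Pth A w y S → A ≤ T → u ∈ S →
        ∃ T, IsCyc T ∧ T ≤ G ∧ sp T ⊆ B ∧ u ∈ sp T ∧ w' ∈ sp T := by
      intro A S hA hAT huS
      have hST : S ⊆ sp T := by rw [← hA.sp_eq hyw]; exact sp_mono hAT
      have hdis : Disjoint A (Q ⊔ edge w w') := by
        rw [disjoint_left]
        intro a b h1 h3
        have a1 := hST (hA.adj_mem h1); have a2 := hST (hA.adj_mem' h1)
        have := h1.ne
        rcases h3 with h3 | h3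
        · have := hSP a (hQ.adj_mem h3) a1
          have := hSP b (hQ.adj_mem' h3) a2
          grind
        · simp [edge_adj] at h3; grind
      refine ⟨_, isCyc_glue hA hE hyw hdis ?_, sup_le (hAT.trans hTG) hEG, ?_, ?_, ?_⟩
      · intro x hx hx'
        have := hST hx
        rcases Finset.mem_insert.mp hx' with h | h
        · exact Or.inl h
        · exact Or.inr (hSP x h this)
      · rw [sp_sup, hA.sp_eq hyw, hE.sp_eq hyw]; have := hTB hwT; grind
      · rw [sp_sup, hA.sp_eq hyw]; grind
      · rw [sp_sup, hE.sp_eq hyw]; have := hQ.left_mem; grind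
    have huSS : u ∈ S ∪ S' := by rw [hSS]; exact huT
    rcases Finset.mem_union.mp huSS with h | h
    · exact main A S hA (hAC ▸ le_sup_left) h
    · exact main C S' hC (hAC ▸ le_sup_right) h
  by_cases hwu : w = u
  · subst hwu
    -- a neighbour `c ≠ w'` of `w`, then a path from `c` to `w'` avoiding `w`
    obtain ⟨z, hz, hz1⟩ : ∃ z ∈ B, z ∉ ({w, w'} : Finset V) := by
      by_contra! hc
      have := Finset.card_le_card (fun x hx => hc x hx : B ⊆ {w, w'})
      have := Finset.card_le_two (a := w) (b := w')
      omega
    obtain ⟨c, hc, d, hd, hdc, hc2, hcd⟩ := (h2 w' hw').exists_adj (X := {w}) (a := w) (b := z)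
      (by grind) (by grind) (by grind) (by grind)
    simp at hc; subst hc
    obtain ⟨y, Q, SQ, hQ, hQG, hQS, hyP, -⟩ :=
      (h2 c hu).path (P := {w'}) (x := d) (p := w') (by grind) (by grind) rfl
    obtain rfl : y = w' := hyP
    have hcQ : c ∉ SQ := fun h => by have := hQS h; grind
    have hne : c ≠ y := Ne.symm hw'u
    have hE := hQ.cons hcQ (s' := d)
    refine ⟨_, isCyc_glue hE (Pth.single hne) hne ?_ (by grind), ?_, ?_, ?_, ?_⟩
    · rw [disjoint_left]
      intro a b h1 h3
      simp only [edge_adj] at h3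
      rcases h1 with h1 | h1
      · have := hQ.adj_mem h1; have := hQ.adj_mem' h1; grind
      · simp only [edge_adj] at h1; grind
    · exact sup_le (sup_le hQG (edge_le' hcd)) (edge_le' hadj)
    · rw [sp_sup, hE.sp_eq hne, (Pth.single hne).sp_eq hne]; grind
    · rw [sp_sup, hE.sp_eq hne]; grind
    · rw [sp_sup, hE.sp_eq hne]; have := hQ.right_mem; grind
  · obtain ⟨T, hT, hTG, hTB, huT, hwT⟩ : ∃ T, IsCyc T ∧ T ≤ G ∧ sp T ⊆ B ∧ u ∈ sp T ∧ w ∈ sp T := by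
      grind
    by_cases hw'T : w' ∈ sp T
    · exact ⟨T, hT, hTG, hTB, huT, hw'T⟩
    · exact hcommon T hT hTG hTB huT hwT hw'T ⟨u, huT, Ne.symm hwu⟩

theorem Pth.eq_nil {A : SimpleGraph V} {s : V} {S : Finset V} (h : Pth A s s S) :
    A = ⊥ ∧ S = {s} := by
  cases h with
  | nil => exact ⟨rfl, rfl⟩
  | cons h hs => exact absurd h.right_mem hs

/-- Rerouting a cycle `T` at `v` through a further edge `vc`: an ear starting with `vc` ends in a
vertex `y` of `T`. If `y ≠ u`, one of the two new cycles passes `u` as before; if `y = u`, both new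
cycles pass through `u`. -/
theorem reroute {G T : SimpleGraph V} {B : Finset V} {u v c : V} (hT : IsCyc T) (hTG : T ≤ G)
    (hTB : sp T ⊆ B) (hv : v ∈ sp T) (hu : u ∈ sp T) (huv : u ≠ v) (hvc : G.Adj v c) (hcB : c ∈ B)
    (hcT : ¬ T.Adj v c) (h2 : ConnSet G (B.erase v)) :
    (∃ T', IsCyc T' ∧ T' ≤ G ∧ sp T' ⊆ B ∧ T'.Adj v c ∧ (∀ w, T'.Adj v w → w = c ∨ T.Adj v w) ∧
      nb T' u = nb T u ∧ (c ∈ sp T → (sp T').card < (sp T).card)) ∨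
    (∃ x₁ x₂ t₁ t₂ e T₁ T₂, IsCyc T₁ ∧ T₁ ≤ G ∧ sp T₁ ⊆ B ∧ IsCyc T₂ ∧ T₂ ≤ G ∧ sp T₂ ⊆ B ∧
      nb T v = {x₁, x₂} ∧ nb T u = {t₁, t₂} ∧ nb T₁ v = {c, x₁} ∧ nb T₂ v = {c, x₂} ∧
      nb T₁ u = {e, t₁} ∧ nb T₂ u = {e, t₂} ∧ ¬ T.Adj u e ∧
      (c ∈ sp T → c = u)) := by
  have hcv := hvc.ne
  obtain ⟨y, Q, SQ, hQ, hQG, hQS, hyP, hSP⟩ :=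
    h2.path (P := (sp T : Set V)) (x := c) (p := u) (by grind) (by grind) hu
  have hyT : y ∈ sp T := hyP
  have hvQ : v ∉ SQ := fun h => by have := hQS h; grind
  have hvy : v ≠ y := by have := hQ.right_mem; grind
  have hE : Pth (Q ⊔ edge v c) v y (insert v SQ) := hQ.cons hvQ
  have hEG : Q ⊔ edge v c ≤ G := sup_le hQG (edge_le' hvc)
  have hdT : Disjoint T (Q ⊔ edge v c) := by
    rw [disjoint_left]
    intro a b h1 h3
    have a1 : a ∈ sp T := by simp; exact ⟨b, h1⟩
    have a2 : b ∈ sp T := by simp; exact ⟨a, h1.symm⟩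
    have := h1.ne
    rcases h3 with h3 | h3
    · have := hSP a (hQ.adj_mem h3) a1
      have := hSP b (hQ.adj_mem' h3) a2
      grind
    · simp only [edge_adj] at h3
      have := h1.symm
      grind
  obtain ⟨A, C, S, S', hA, hC, hAC, hd, hSS, hcap⟩ := hT.split hv hyT hvy
  have hEv : nb (Q ⊔ edge v c) v = {c} := by
    ext w
    simp only [mem_nb, sup_adj, edge_adj, Finset.mem_singleton]
    constructor
    · rintro (h | h)
      · exact absurd (hQ.adj_mem h) hvQ
      · grind
    · rintro rfl; simp [hcv]
  -- facts common to the two new cycles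
  have main : ∀ A S, Pth A v y S → A ≤ T →
      IsCyc (A ⊔ (Q ⊔ edge v c)) ∧ A ⊔ (Q ⊔ edge v c) ≤ G ∧ sp (A ⊔ (Q ⊔ edge v c)) ⊆ B ∧
      nb (A ⊔ (Q ⊔ edge v c)) v = nb A v ∪ {c} := by
    intro A S hA hAT
    have hST : S ⊆ sp T := by rw [← hA.sp_eq hvy]; exact sp_mono hAT
    refine ⟨isCyc_glue hA hE hvy (hdT.mono_left hAT) ?_, sup_le (hAT.trans hTG) hEG, ?_, ?_⟩
    · intro x hx hx'
      have := hST hx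
      rcases Finset.mem_insert.mp hx' with h | h
      · exact Or.inl h
      · exact Or.inr (hSP x h this)
    · rw [sp_sup, hA.sp_eq hvy, hE.sp_eq hvy]; have := hTB hv; grind
    · rw [nb_sup, hEv]
  have hAT : A ≤ T := hAC ▸ le_sup_left
  have hCT : C ≤ T := hAC ▸ le_sup_right
  by_cases hyu : y = u
  · subst hyu
    right
    have one : ∀ A S w, Pth A v y S → (w = v ∨ w = y) → ∃ x, nb A w = {x} := by
      intro A S w hA hw
      have h1 := hA.dg_eq w
      have := hA.left_mem; have := hA.right_mem
      apply Finset.card_eq_one.mp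
      change dg A w = 1
      grind
    obtain ⟨x₁, hx₁⟩ := one A S v hA (by simp)
    obtain ⟨x₂, hx₂⟩ := one C S' v hC (by simp)
    obtain ⟨t₁, ht₁⟩ := one A S y hA (by simp)
    obtain ⟨t₂, ht₂⟩ := one C S' y hC (by simp)
    obtain ⟨e, he⟩ := one _ _ y hE (by simp)
    obtain ⟨m1, m2, m3, m4⟩ := main A S hA hAT
    obtain ⟨n1, n2, n3, n4⟩ := main C S' hC hCT
    refine ⟨x₁, x₂, t₁, t₂, e, _, _, m1, m2, m3, n1, n2, n3, ?_, ?_, ?_, ?_, ?_, ?_, ?_,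
      hSP c hQ.left_mem⟩
    · rw [← hAC, nb_sup, hx₁, hx₂]; rfl
    · rw [← hAC, nb_sup, ht₁, ht₂]; rfl
    · rw [m4, hx₁]; grind
    · rw [n4, hx₂]; grind
    · rw [nb_sup, he, ht₁]; grind
    · rw [nb_sup, he, ht₂]; grind
    · intro h
      have : e ∈ nb (Q ⊔ edge v c) y := by rw [he]; simp
      rw [mem_nb] at this
      exact disjoint_left.mp hdT _ _ h this
  · left
    have fin : ∀ A C S S', Pth A v y S → Pth C v y S' → A ≤ T → C ≤ T → S ∪ S' = sp T →
        (∀ w ∈ S, w ∈ S' → w = v ∨ w = y) → u ∈ S →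
        (∃ T', IsCyc T' ∧ T' ≤ G ∧ sp T' ⊆ B ∧ T'.Adj v c ∧
          (∀ w, T'.Adj v w → w = c ∨ T.Adj v w) ∧
          nb T' u = nb T u ∧ (c ∈ sp T → (sp T').card < (sp T).card)) := by
      intro A C S S' hA hC hAT hCT hSS hcap huS
      obtain ⟨m1, m2, m3, m4⟩ := main A S hA hAT
      refine ⟨_, m1, m2, m3, ?_, ?_, ?_, ?_⟩
      · simp [edge_adj, hcv]
      · intro w hw
        have : w ∈ nb A v ∪ {c} := by rw [← m4]; simpa using hw
        simp at this
        rcases this with h | h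
        · exact Or.inl h
        · exact Or.inr (hAT h)
      · have hAu : (nb A u).card = 2 := by
          have := hA.dg_eq u
          change dg A u = 2
          grind
        have e1 : nb A u = nb T u := Finset.eq_of_subset_of_card_le
          (fun w => by simpa using fun hw => hAT hw) (by rw [hAu]; exact (hT.dg_two hu).le)
        have e2 : nb A u = nb (A ⊔ (Q ⊔ edge v c)) u := Finset.eq_of_subset_of_card_le
          (by rw [nb_sup]; exact Finset.subset_union_left) (by
            rw [hAu]; refine (m1.dg_two ?_).le
            rw [sp_sup, hA.sp_eq hvy]; grind)
        rw [← e2, e1]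
      · intro hcT'
        obtain rfl := hSP c hQ.left_mem hcT'
        obtain ⟨-, hSQ⟩ := hQ.eq_nil
        obtain ⟨C', s', S'', hC', hvS, eC, eS⟩ := hC.ne_of_cons hvy
        have hvs : v ≠ s' := by have := hC'.left_mem; grind
        have hTs : T.Adj v s' := hCT (by rw [eC]; simp [edge_adj, hvs])
        have hsc : s' ≠ c := by rintro rfl; exact hcT hTs
        apply Finset.card_lt_card
        rw [Finset.ssubset_iff_of_subset]
        · refine ⟨s', by simp; exact ⟨v, hTs.symm⟩, ?_⟩
          rw [sp_sup, hA.sp_eq hvy, hE.sp_eq hvy, hSQ]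
          have := hcap s'
          have := hC'.left_mem
          grind
        · rw [sp_sup, hA.sp_eq hvy, hE.sp_eq hvy, hSQ]
          grind
    have huSS : u ∈ S ∪ S' := by rw [hSS]; exact hu
    rcases Finset.mem_union.mp huSS with h | h
    · exact fin A C S S' hA hC hAT hCT hSS hcap h
    · exact fin C A S' S hC hA hCT hAT (by rw [Finset.union_comm, hSS]) (by grind) h

/-! ### Subdivision, splitting off and cycle decompositions -/

/-- The cycle `C` with its edge `ab` subdivided by `v`. -/
def sbd (C : SimpleGraph V) (a b v : V) : SimpleGraph V := C \ edge a b ⊔ (edge a v ⊔ edge v b)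

/-- The graph `G` with the two edges `vx`, `vy` replaced by `xy`. -/
def spr (G : SimpleGraph V) (v x y : V) : SimpleGraph V := G \ (edge x v ⊔ edge v y) ⊔ edge x y

theorem sbd_adj {C : SimpleGraph V} {a b v p q : V} : (sbd C a b v).Adj p q ↔
    (C.Adj p q ∧ ¬ (p = a ∧ q = b) ∧ ¬ (p = b ∧ q = a)) ∨ ((p = a ∧ q = v) ∨ (p = v ∧ q = a) ∨
      (p = v ∧ q = b) ∨ (p = b ∧ q = v)) ∧ p ≠ q := by
  simp only [sbd, sup_adj, sdiff_adj, edge_adj]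
  have := @SimpleGraph.Adj.ne _ C p q
  grind

theorem spr_adj {C : SimpleGraph V} {x y v p q : V} : (spr C v x y).Adj p q ↔
    (C.Adj p q ∧ ¬ ((p = x ∧ q = v) ∨ (p = v ∧ q = x) ∨ (p = v ∧ q = y) ∨ (p = y ∧ q = v))) ∨
      (((p = x ∧ q = y) ∨ (p = y ∧ q = x)) ∧ p ≠ q) := by
  simp only [spr, sup_adj, sdiff_adj, edge_adj]
  have := @SimpleGraph.Adj.ne _ C p q
  grind

theorem edge_dg_le {C : SimpleGraph V} {a b : V} (h : C.Adj a b) (w : V) :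
    dg (C \ edge a b) w + ((if w = a then 1 else 0) + (if w = b then 1 else 0)) = dg C w := by
  rw [← dg_edge h.ne, dg_sdiff (edge_le' h)]

theorem dg_sbd {C : SimpleGraph V} {a b v : V} (hab : C.Adj a b) (hv : v ∉ sp C) (w : V) :
    dg (sbd C a b v) w = dg C w + if w = v then 2 else 0 := by
  have hva : v ≠ a := by rintro rfl; exact hv (by simp; exact ⟨_, hab⟩)
  have hvb : v ≠ b := by rintro rfl; exact hv (by simp; exact ⟨_, hab.symm⟩)
  have hne := hab.ne
  have hv' : ∀ x, ¬ C.Adj v x := by simpa using hv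
  rw [sbd, dg_sup, dg_sup, dg_edge hva.symm, dg_edge hvb, ← edge_dg_le hab w]
  · grind
  · rw [disjoint_left]; intro p q; simp only [edge_adj]; grind
  · rw [disjoint_left]; intro p q; simp only [edge_adj, sup_adj, sdiff_adj]
    have := hv' p; have := hv' q; have := C.adj_comm p q
    grind

theorem dg_spr {C : SimpleGraph V} {x y v : V} (hx : C.Adj v x) (hy : C.Adj v y) (hxy : x ≠ y)
    (h : ¬ C.Adj x y) (w : V) :
    dg (spr C v x y) w + (if w = v then 2 else 0) = dg C w := by
  have hvx := hx.ne; have hvy := hy.ne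
  have hle : edge x v ⊔ edge v y ≤ C := sup_le (edge_le' hx.symm) (edge_le' hy)
  rw [spr, dg_sup, dg_edge hxy, ← dg_sdiff hle w, dg_sup, dg_edge hvx.symm, dg_edge hvy]
  · grind
  · rw [disjoint_left]; intro p q; simp only [edge_adj]; grind
  · rw [disjoint_left]; intro p q; simp only [edge_adj, sup_adj, sdiff_adj]
    have := C.adj_comm x y
    grind

theorem IsCyc.sbd {C : SimpleGraph V} (hC : IsCyc C) {a b v : V} (hab : C.Adj a b)
    (hv : v ∉ sp C) : IsCyc (sbd C a b v) := by
  have hva : v ≠ a := by rintro rfl; exact hv (by simp; exact ⟨_, hab⟩)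
  have hvb : v ≠ b := by rintro rfl; exact hv (by simp; exact ⟨_, hab.symm⟩)
  have ea : a ∈ sp C := by simp; exact ⟨b, hab⟩
  have hsp : ∀ w ∈ sp (PlanarCDC.sbd C a b v), w ∈ sp C ∨ w = v := by
    intro w hw
    have h1 := dg_sbd hab hv w
    have h2 := dg_eq_zero (G := C) (v := w)
    have h3 := dg_eq_zero (G := PlanarCDC.sbd C a b v) (v := w)
    grind
  refine ⟨?_, fun w => ?_, fun X hX p hp hpS q hq => ?_⟩
  · rw [SimpleGraph.ne_bot_iff_exists_adj]
    exact ⟨a, v, by rw [sbd_adj]; simp [hva.symm]⟩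
  · have := hC.2.1 w
    have h2 := dg_eq_zero (G := C) (v := w)
    rw [dg_sbd hab hv w]; grind
  · have e1 : a ∈ X ↔ v ∈ X := ⟨fun h => hX a h v (by rw [sbd_adj]; simp [hva.symm]),
      fun h => hX v h a (by rw [sbd_adj]; simp [hva])⟩
    have e2 : b ∈ X ↔ v ∈ X := ⟨fun h => hX b h v (by rw [sbd_adj]; simp [hvb.symm]),
      fun h => hX v h b (by rw [sbd_adj]; simp [hvb])⟩
    have key := hC.2.2 X (fun c hc d hcd => by
      by_cases h : (c = a ∧ d = b) ∨ (c = b ∧ d = a)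
      · grind
      · exact hX c hc d (by rw [sbd_adj]; grind))
    have h1 := hsp p hpS
    have h2 := hsp q hq
    grind

theorem IsCyc.spr {C : SimpleGraph V} (hC : IsCyc C) {x y v : V} (hnb : nb C v = {x, y})
    (hxy : x ≠ y) (h : ¬ C.Adj x y) : IsCyc (spr C v x y) := by
  have hn : ∀ w, C.Adj v w ↔ w = x ∨ w = y := by intro w; rw [← mem_nb, hnb]; simp
  have hx : C.Adj v x := by simp [hn]
  have hy : C.Adj v y := by simp [hn]
  have hvx := hx.ne; have hvy := hy.ne
  have hsp : ∀ w ∈ sp (PlanarCDC.spr C v x y), w ∈ sp C ∧ w ≠ v := by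
    intro w hw
    have h1 := dg_spr hx hy hxy h w
    have h2 := dg_eq_zero (G := C) (v := w)
    have h3 := dg_eq_zero (G := PlanarCDC.spr C v x y) (v := w)
    have := hC.2.1 w
    grind
  refine ⟨?_, fun w => ?_, fun X hX p hp hpS q hq => ?_⟩
  · rw [SimpleGraph.ne_bot_iff_exists_adj]
    exact ⟨x, y, by rw [spr_adj]; simp [hxy]⟩
  · have := hC.2.1 w
    have h1 := dg_spr hx hy hxy h w
    have h2 := dg_eq_zero (G := C) (v := w)
    have h3 := dg_eq_zero (G := PlanarCDC.spr C v x y) (v := w)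
    have : v ∈ sp C := by simp; exact ⟨x, hx⟩
    have := hC.dg_two this
    grind
  · have e1 : x ∈ X ↔ y ∈ X := ⟨fun h => hX x h y (by rw [spr_adj]; simp [hxy]),
      fun h => hX y h x (by rw [spr_adj]; simp [hxy.symm])⟩
    have key := hC.2.2 {w | (w ≠ v ∧ w ∈ X) ∨ (w = v ∧ x ∈ X)} (fun c hc d hcd => by
      have := hn c; have := hn d; have := C.adj_comm c d
      simp only [Set.mem_ofPred_eq] at hc ⊢
      by_cases hcv : c = v
      · grind
      · by_cases hdv : d = v
        · grind
        · have := hX c (by grind) d (by rw [spr_adj]; grind)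
          grind) p (by have := hsp p hpS; grind) (hsp p hpS).1 q (hsp q hq).1
    have := hsp q hq
    grind

/-- `L` is a decomposition of the edge set of `G` into cycles. -/
def Dec (L : Multiset (SimpleGraph V)) (G : SimpleGraph V) : Prop :=
  (∀ C ∈ L, IsCyc C) ∧ ∀ a b, L.countP (fun C => C.Adj a b) = if G.Adj a b then 1 else 0

theorem Dec.nil : Dec 0 (⊥ : SimpleGraph V) := ⟨by simp, by simp⟩

theorem Dec.cons {L : Multiset (SimpleGraph V)} {G C : SimpleGraph V} (h : Dec L G) (hC : IsCyc C)
    (hd : Disjoint C G) : Dec (C ::ₘ L) (C ⊔ G) := by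
  refine ⟨by simpa using ⟨hC, h.1⟩, fun a b => ?_⟩
  rw [Multiset.countP_cons, h.2]
  have := disjoint_left.mp hd a b
  simp only [sup_adj]; grind

theorem Dec.add {L L' : Multiset (SimpleGraph V)} {G G' : SimpleGraph V} (h : Dec L G)
    (h' : Dec L' G') (hd : Disjoint G G') : Dec (L + L') (G ⊔ G') := by
  refine ⟨by simp; grind [h.1, h'.1], fun a b => ?_⟩
  rw [Multiset.countP_add, h.2, h'.2]
  have := disjoint_left.mp hd a b
  simp only [sup_adj]; grind

theorem Dec.le {L : Multiset (SimpleGraph V)} {G C : SimpleGraph V} (h : Dec L G) (hC : C ∈ L) :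
    C ≤ G := by
  intro a b hab
  have h1 : 0 < L.countP (fun C => C.Adj a b) := Multiset.countP_pos.mpr ⟨C, hC, hab⟩
  rw [h.2] at h1
  grind

theorem Dec.erase {L : Multiset (SimpleGraph V)} {G C : SimpleGraph V} (h : Dec L G) (hC : C ∈ L) :
    Dec (L.erase C) (G \ C) := by
  refine ⟨fun D hD => h.1 D (Multiset.mem_of_mem_erase hD), fun a b => ?_⟩
  have h1 := h.2 a b
  rw [← Multiset.cons_erase hC, Multiset.countP_cons] at h1
  have h2 := h.le hC (v := a) (w := b)
  simp only [sdiff_adj]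
  grind

/-- Pick out the cycle through a given edge. -/
theorem Dec.extract {L : Multiset (SimpleGraph V)} {G : SimpleGraph V} (h : Dec L G) {a b : V}
    (hab : G.Adj a b) : ∃ C L', IsCyc C ∧ C ≤ G ∧ C.Adj a b ∧ Dec L' (G \ C) ∧
      L.card = L'.card + 1 := by
  have h1 := h.2 a b
  simp only [hab, if_true] at h1
  obtain ⟨C, hC, hCab⟩ := Multiset.countP_pos.mp (by omega : 0 < L.countP (fun C => C.Adj a b))
  exact ⟨C, L.erase C, h.1 C hC, h.le hC, hCab, h.erase hC, by
    rw [Multiset.card_erase_add_one hC]⟩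

theorem Dec.cast {L : Multiset (SimpleGraph V)} {G G' : SimpleGraph V} (h : Dec L G)
    (e : G = G') : Dec L G' := e ▸ h

/-- Lifting a decomposition back over the suppression of a vertex of degree 2. -/
theorem Dec.unspr {L : Multiset (SimpleGraph V)} {G : SimpleGraph V} {v x y : V}
    (hnb : nb G v = {x, y}) (hxy : x ≠ y) (h : ¬ G.Adj x y) (hD : Dec L (spr G v x y)) :
    ∃ L', Dec L' G ∧ L'.card = L.card := by
  have hn : ∀ w, G.Adj v w ↔ w = x ∨ w = y := by intro w; rw [← mem_nb, hnb]; simp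
  have hvx : v ≠ x := ((hn x).2 (by simp)).ne
  have hvy : v ≠ y := ((hn y).2 (by simp)).ne
  obtain ⟨C, L', hC, hCle, hCxy, hD', hcard⟩ := hD.extract (a := x) (b := y)
    (by rw [spr_adj]; simp [hxy])
  have hv : ∀ w, ¬ C.Adj v w := fun w hw => by
    have := hCle hw; rw [spr_adj] at this; grind
  have hv' : ∀ w, ¬ C.Adj w v := fun w hw => hv w hw.symm
  have hCG := fun p q => @hCle p q
  simp only [spr_adj] at hCG
  have h' : ¬ G.Adj y x := fun h1 => h h1.symm
  have hn' : ∀ w, G.Adj w v ↔ w = x ∨ w = y := by intro w; rw [G.adj_comm, hn]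
  have hCyx := hCxy.symm
  refine ⟨PlanarCDC.sbd C x y v ::ₘ L', (hD'.cons (hC.sbd hCxy (by simpa using hv)) ?_).cast ?_,
    by simp [hcard]⟩
  · rw [disjoint_left]
    intro p q h1 h2
    simp only [sbd_adj, sdiff_adj, spr_adj] at h1 h2
    have := hn p; have := hn q
    grind
  · ext p q
    simp only [sup_adj, sbd_adj, sdiff_adj, spr_adj]
    have := hn p; have := hn q; have := hCG p q; have := hn' p; have := hn' q
    have := hv p; have := hv q; have := hv' p; have := hv' q; 
    have := @SimpleGraph.Adj.ne _ G p q
    grind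

/-- Lifting a decomposition back over the splitting-off of `x₁, x₂` at a vertex of degree 4 whose
other two neighbours `x₃, x₄` are adjacent. If the cycle through `x₁x₂` also passes through `v`, it
is shortcut along `x₃x₄`, and the cycle that used `x₃x₄` takes the detour through `v`. -/
theorem Dec.unspr_mixed {L : Multiset (SimpleGraph V)} {G : SimpleGraph V} {v x₁ x₂ x₃ x₄ : V}
    (hn : ∀ w, G.Adj v w ↔ w = x₁ ∨ w = x₂ ∨ w = x₃ ∨ w = x₄) (h12 : x₁ ≠ x₂) (h13 : x₁ ≠ x₃)
    (h14 : x₁ ≠ x₄) (h23 : x₂ ≠ x₃) (h24 : x₂ ≠ x₄) (h34 : x₃ ≠ x₄)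
    (h : ¬ G.Adj x₁ x₂) (hadj : G.Adj x₃ x₄) (hD : Dec L (spr G v x₁ x₂)) :
    ∃ L', Dec L' G ∧ L'.card = L.card := by
  have hv1 : v ≠ x₁ := ((hn _).2 (by simp)).ne
  have hv2 : v ≠ x₂ := ((hn _).2 (by simp)).ne
  have hv3 : v ≠ x₃ := ((hn _).2 (by simp)).ne
  have hv4 : v ≠ x₄ := ((hn _).2 (by simp)).ne
  obtain ⟨C, L', hC, hCle, hC12, hD', hcard⟩ := hD.extract (a := x₁) (b := x₂)
    (by rw [spr_adj]; simp [h12])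
  have hCG := fun p q => @hCle p q
  simp only [spr_adj] at hCG
  have h' : ¬ G.Adj x₂ x₁ := fun h1 => h h1.symm
  have hn' : ∀ w, G.Adj w v ↔ w = x₁ ∨ w = x₂ ∨ w = x₃ ∨ w = x₄ := by
    intro w; rw [G.adj_comm, hn]
  have hC21 := hC12.symm
  by_cases hvC : v ∈ sp C
  · have hnC : nb C v = {x₃, x₄} := by
      refine Finset.eq_of_subset_of_card_le (fun w hw => ?_) ?_
      · have hw' : C.Adj v w := by simpa using hw
        have := hCG v w hw'
        have := hn w
        simp; grind
      · rw [Finset.card_pair h34]; exact (hC.dg_two hvC).ge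
    have hcn : ∀ w, C.Adj v w ↔ w = x₃ ∨ w = x₄ := by intro w; rw [← mem_nb, hnC]; simp
    have hcn' : ∀ w, C.Adj w v ↔ w = x₃ ∨ w = x₄ := by intro w; rw [C.adj_comm, hcn]
    have hC34 : ¬ C.Adj x₃ x₄ := by
      intro h3
      have two : ∀ a b, C.Adj a v → C.Adj a b → b ≠ v → ∀ w, C.Adj a w → w = v ∨ w = b := by
        intro a b h1 h2 h3 w hw
        have : nb C a = {v, b} := by
          refine (Finset.eq_of_subset_of_card_le (fun w hw => ?_) ?_).symm
          · simp at hw ⊢; rcases hw with rfl | rfl <;> assumption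
          · rw [Finset.card_pair h3.symm]
            exact (hC.dg_two (by simp; exact ⟨_, h1⟩)).le
        have hw : w ∈ nb C a := by simpa
        rw [this] at hw; simpa using hw
      have := hC.2.2 {w | w = v ∨ w = x₃ ∨ w = x₄} (by
        rintro a (rfl | rfl | rfl) b hab
        · exact Or.inr ((hcn b).1 hab)
        · have := two a x₄ ((hcn' _).2 (by simp)) h3 hv4.symm b hab; grind
        · have := two a x₃ ((hcn' _).2 (by simp)) h3.symm hv3.symm b hab; grind)
        v (by simp) hvC x₁ (by simp; exact ⟨_, hC12⟩)
      grind
    have hC43 : ¬ C.Adj x₄ x₃ := fun h => hC34 h.symm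
    obtain ⟨C₁, L'', hC₁, hC₁le, hC₁34, hD'', hcard'⟩ := hD'.extract (a := x₃) (b := x₄)
      (by simp only [sdiff_adj, spr_adj]; grind)
    have hC₁G := fun p q => @hC₁le p q
    simp only [sdiff_adj, spr_adj] at hC₁G
    have hC₁43 := hC₁34.symm
    have hv : ∀ w, ¬ C₁.Adj v w := fun w hw => by
      have := hC₁G _ _ hw; have := hn w; have := hcn w; grind
    have hv' : ∀ w, ¬ C₁.Adj w v := fun w hw => hv w hw.symm
    have hS := hC.spr hnC h34 hC34
    have hS12 : (PlanarCDC.spr C v x₃ x₄).Adj x₁ x₂ := by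
      rw [spr_adj]; grind
    have hSv : v ∉ sp (PlanarCDC.spr C v x₃ x₄) := by
      simp only [mem_sp, spr_adj, not_exists]; intro w; have := hcn w; grind
    refine ⟨PlanarCDC.sbd (PlanarCDC.spr C v x₃ x₄) x₁ x₂ v ::ₘ PlanarCDC.sbd C₁ x₃ x₄ v ::ₘ L'',
      ((hD''.cons (hC₁.sbd hC₁34 (by simpa using hv)) ?_).cons (hS.sbd hS12 hSv) ?_).cast ?_,
      by simp [hcard, hcard']⟩
    · rw [disjoint_left]
      intro p q h1 h2
      simp only [sbd_adj, sdiff_adj, spr_adj] at h1 h2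
      have := hn p; have := hn q; have := hcn p; have := hcn q
      have := hcn' p; have := hcn' q
      grind
    · rw [disjoint_left]
      intro p q h1 h2
      simp only [sup_adj, sbd_adj, sdiff_adj, spr_adj] at h1 h2
      have := hC₁G p q; have := hv p; have := hv q; have := hv' p; have := hv' q
      grind
    · ext p q
      simp only [sup_adj, sbd_adj, sdiff_adj, spr_adj]
      have := hn p; have := hn q; have := hCG p q; have := hn' p; have := hn' q
      have := hv p; have := hv q; have := hv' p; have := hv' q; have := hC₁G p q
      have := hcn p; have := hcn q; have := hcn' p; have := hcn' q
      have := hadj.symm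
      have := @SimpleGraph.Adj.ne _ G p q
      grind
  · have hv : ∀ w, ¬ C.Adj v w := by simpa using hvC
    have hv' : ∀ w, ¬ C.Adj w v := fun w hw => hv w hw.symm
    refine ⟨PlanarCDC.sbd C x₁ x₂ v ::ₘ L', (hD'.cons (hC.sbd hC12 hvC) ?_).cast ?_,
      by simp [hcard]⟩
    · rw [disjoint_left]
      intro p q h1 h2
      simp only [sbd_adj, sdiff_adj, spr_adj] at h1 h2
      have := hn p; have := hn q
      grind
    · ext p q
      simp only [sup_adj, sbd_adj, sdiff_adj, spr_adj]
      have := hn p; have := hn q; have := hCG p q; have := hn' p; have := hn' q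
      have := hv p; have := hv q; have := hv' p; have := hv' q
      have := @SimpleGraph.Adj.ne _ G p q
      grind

/-! ### Minors and contractions -/

section Minor
variable {W : Type*} [Fintype W] {G N : SimpleGraph V} {M : SimpleGraph W}

/-- There is an edge of `G` between `A` and `B`. -/
def Tch (G : SimpleGraph V) (A B : Finset V) : Prop := ∃ a ∈ A, ∃ b ∈ B, G.Adj a b

theorem Tch.symm {A B : Finset V} (h : Tch G A B) : Tch G B A := by
  obtain ⟨a, ha, b, hb, h⟩ := h; exact ⟨b, hb, a, ha, h.symm⟩

/-- Minor models with finite branch sets. -/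
theorem minor_iff : HasGraphMinor G M ↔ ∃ f : W → Finset V, (∀ i, ConnSet G (f i)) ∧
    (∀ i j, i ≠ j → ∀ x ∈ f i, x ∉ f j) ∧ ∀ i j, M.Adj i j → Tch G (f i) (f j) := by
  constructor
  · rintro ⟨f, h1, h2, h3, h4⟩
    refine ⟨fun i => (f i).toFinset, fun i => ?_, fun i j hij x hx hx' => ?_, fun i j hij => ?_⟩
    · rw [connSet_iff, Set.coe_toFinset]; exact h2 i
    · simp at hx hx'
      exact Set.disjoint_left.mp (h3 hij) hx hx'
    · obtain ⟨a, ha, b, hb, hab⟩ := h4 hij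
      exact ⟨a, by simpa, b, by simpa, hab⟩
  · rintro ⟨f, h1, h2, h3⟩
    refine ⟨fun i => (f i : Set V), fun i => (h1 i).1, fun i => connSet_iff.mp (h1 i),
      fun i j hij => ?_, fun i j hij => ?_⟩
    · exact Set.disjoint_left.mpr (h2 i j hij)
    · exact h3 i j hij

theorem minor_mono (h : HasGraphMinor N M) (hle : N ≤ G) : HasGraphMinor G M := by
  rw [minor_iff] at *
  obtain ⟨f, h1, h2, h3⟩ := h
  refine ⟨f, fun i => (h1 i).mono hle, h2, fun i j hij => ?_⟩
  obtain ⟨a, ha, b, hb, hab⟩ := h3 i j hij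
  exact ⟨a, ha, b, hb, hle hab⟩

theorem planar_mono (h : IsPlanar G) (hle : N ≤ G) : IsPlanar N :=
  ⟨fun h' => h.1 (minor_mono h' hle), fun h' => h.2 (minor_mono h' hle)⟩

/-- The vertices that are merged into `a` when `X` is contracted to `w`. -/
def cl (X : Finset V) (w a : V) : Finset V := if a = w then insert w X else {a}

/-- Contraction of the set `X` to its vertex `w`; the other vertices of `X` become isolated. -/
def ctr (G : SimpleGraph V) (X : Finset V) (w : V) : SimpleGraph V where
  Adj a b := a ≠ b ∧ (a ∈ X → a = w) ∧ (b ∈ X → b = w) ∧ Tch G (cl X w a) (cl X w b)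
  symm := ⟨fun _ _ h => ⟨h.1.symm, h.2.2.1, h.2.1, h.2.2.2.symm⟩⟩
  loopless := ⟨fun _ h => h.1 rfl⟩

theorem ctr_adj {X : Finset V} {w a b : V} : (ctr G X w).Adj a b ↔
    a ≠ b ∧ (a ∈ X → a = w) ∧ (b ∈ X → b = w) ∧ Tch G (cl X w a) (cl X w b) := Iff.rfl

theorem minor_of_ctr {X : Finset V} {w : V} (hX : ConnSet G X) (hw : w ∈ X)
    (hM : ∀ i, ∃ j, M.Adj i j) (h : HasGraphMinor (ctr G X w) M) : HasGraphMinor G M := by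
  rw [minor_iff] at *
  obtain ⟨f, h1, h2, h3⟩ := h
  -- vertices of `X` other than `w` are isolated, so no branch set contains them
  have hf : ∀ i, ∀ x ∈ f i, x ∈ X → x = w := by
    intro i x hx hxX
    by_contra hxw
    have hiso : ∀ b, ¬ (ctr G X w).Adj x b := fun b hb => hxw (hb.2.1 hxX)
    have hsing := (h1 i).2 {x} (fun a ha b _ hab => by
      simp at ha; subst ha; exact absurd hab (hiso b)) x hx (by simp)
    obtain ⟨j, hj⟩ := hM i
    obtain ⟨a, ha, b, hb, hab⟩ := h3 i j hj
    have := hsing a ha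
    simp at this; subst this
    exact hiso b hab
  have hcl : ∀ i, ∀ a ∈ f i, cl X w a ⊆ f i ∪ (if w ∈ f i then X else ∅) := by
    intro i a ha x; unfold cl; grind
  refine ⟨fun i => f i ∪ (if w ∈ f i then X else ∅), fun i => ?_, fun i j hij x hx hx' => ?_,
    fun i j hij => ?_⟩
  · refine ⟨(h1 i).1.mono (by grind), fun Y hY => ?_⟩
    have hXY : w ∈ f i → ∀ a ∈ X, a ∈ Y → ∀ b ∈ X, b ∈ Y := fun hwi =>
      hX.2 Y fun a ha b hb => hY a ha b (by grind)
    have key := (h1 i).2 (Y ∩ f i) (fun a ha b hb hab => by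
      obtain ⟨-, -, -, a', ha', b', hb', hab'⟩ := hab
      have hb2 := hcl i b hb hb'
      have ha'Y : a' ∈ Y := by unfold cl at ha'; grind
      have := hY a' ha'Y b' hb2 hab'
      unfold cl at hb'
      grind)
    intro a ha haY b hb
    have hne : ∃ c ∈ f i, c ∈ Y := by
      by_cases haf : a ∈ f i
      · exact ⟨a, haf, haY⟩
      · by_cases hwi : w ∈ f i
        · exact ⟨w, hwi, hXY hwi a (by grind) haY w hw⟩
        · grind
    obtain ⟨c, hc, hcY⟩ := hne
    have := key c hc (by grind)
    grind
  · have := h2 i j hij; have := hf i; have := hf j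
    grind
  · obtain ⟨a, ha, b, hb, hab⟩ := h3 i j hij
    obtain ⟨-, -, -, a', ha', b', hb', hab'⟩ := hab
    exact ⟨a', hcl i a ha ha', b', hcl j b hb hb', hab'⟩

/-- A vertex with at most two neighbours, which are adjacent, is not needed in a model of a graph of
minimum degree at least 3. -/
theorem minor_del {v x y : V} (hn : ∀ w, N.Adj v w → w = x ∨ w = y) (hxy : N.Adj x y)
    (hvx : v ≠ x) (hvy : v ≠ y)
    (hM : ∀ i, ∃ j₁ j₂ j₃, j₁ ≠ j₂ ∧ j₁ ≠ j₃ ∧ j₂ ≠ j₃ ∧ M.Adj i j₁ ∧ M.Adj i j₂ ∧ M.Adj i j₃)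
    (h : HasGraphMinor N M) : HasGraphMinor (rs N (Finset.univ.erase v)) M := by
  rw [minor_iff] at *
  obtain ⟨f, h1, h2, h3⟩ := h
  have hvv : ¬ N.Adj v v := N.loopless.1 v
  have hns : ∀ i, v ∈ f i → ∃ z ∈ f i, z ≠ v ∧ N.Adj v z := by
    intro i hvi
    have : ∃ z ∈ f i, z ≠ v := by
      by_contra! hc
      obtain ⟨j₁, j₂, j₃, h12, h13, h23, a1, a2, a3⟩ := hM i
      have : ∀ j, M.Adj i j → x ∈ f j ∨ y ∈ f j := by
        intro j hj
        obtain ⟨a, ha, b, hb, hab⟩ := h3 i j hj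
        have := hc a ha; subst this
        have := hn b hab
        grind
      have b1 := this j₁ a1; have b2 := this j₂ a2; have b3 := this j₃ a3
      have := h2 j₁ j₂ h12; have := h2 j₁ j₃ h13; have := h2 j₂ j₃ h23
      grind
    obtain ⟨z, hz, hzv⟩ := this
    obtain ⟨c, hc, d, hd, hdX, -, hcd⟩ := (h1 i).exists_adj (X := {v}) hvi hz (by simp) (by simpa)
    simp at hc hdX; subst hc
    exact ⟨d, hd, hdX, hcd⟩
  refine ⟨fun i => (f i).erase v, fun i => ?_, fun i j hij x hx hx' => ?_, fun i j hij => ?_⟩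
  · refine ⟨?_, fun X hX a ha haX b hb => ?_⟩
    · by_cases hvi : v ∈ f i
      · obtain ⟨z, hz, hzv, -⟩ := hns i hvi
        exact ⟨z, by simp [*]⟩
      · simpa [Finset.erase_eq_of_notMem hvi] using (h1 i).1
    · simp only [rs_adj, Finset.mem_erase, Finset.mem_univ, and_true] at hX ha hb
      set X' := if (x ∈ X ∧ x ∈ f i) ∨ (y ∈ X ∧ y ∈ f i) then insert v (X ∩ f i) else (X ∩ f i).erase v with hX'
      have := (h1 i).2 X' (fun p hp q hq hpq => by
        have e1 := hX p; have e2 := hn q; have e3 := hn p; have e4 := hpq.symm; have e5 := hX x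
        have e6 := hX y; have e7 := hxy.symm; have e8 := hpq.ne
        have := hxy.ne
        have e9 : p ∈ X → p ≠ v → q ≠ v → q ∈ X := fun h1 h2 h3 => hX p h1 q ⟨h3, hq⟩ ⟨hpq, h2, h3⟩
        clear hX e1
        have e10 : q = v → p = x ∨ p = y := fun h => e3 (h ▸ e4)
        by_cases hc : (x ∈ X ∧ x ∈ f i) ∨ (y ∈ X ∧ y ∈ f i) <;>
          simp only [hX', hc, if_true, if_false, Finset.mem_insert, Finset.mem_inter,
            Finset.mem_erase] at hp ⊢ <;> grind) a ha.2 (by grind) b hb.2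
      grind
  · have := h2 i j hij; grind
  · obtain ⟨a, ha, b, hb, hab⟩ := h3 i j hij
    have hd := h2 i j hij.ne
    have := hxy.symm; have := hxy.ne
    have e4 := hab.symm
    by_cases hav : a = v
    · subst hav
      obtain ⟨z, hz, hzv, hvz⟩ := hns i ha
      have := hn z hvz; have := hn b hab
      exact ⟨z, by simp [*], b, by grind, by simp only [rs_adj]; grind⟩
    · by_cases hbv : b = v
      · subst hbv
        obtain ⟨z, hz, hzv, hvz⟩ := hns j hb
        have := hn z hvz; have := hn a hab.symm
        exact ⟨a, by grind, z, by simp [*], by simp only [rs_adj]; grind⟩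
      · exact ⟨a, by simp [*], b, by simp [*], by simp [*]⟩

theorem K5_three (i : Fin 5) : ∃ j₁ j₂ j₃, j₁ ≠ j₂ ∧ j₁ ≠ j₃ ∧ j₂ ≠ j₃ ∧
    (completeGraph (Fin 5)).Adj i j₁ ∧ (completeGraph (Fin 5)).Adj i j₂ ∧
    (completeGraph (Fin 5)).Adj i j₃ := by
  simp only [completeGraph, top_adj]; revert i; decide

theorem K33_three (i : Fin 3 ⊕ Fin 3) : ∃ j₁ j₂ j₃, j₁ ≠ j₂ ∧ j₁ ≠ j₃ ∧ j₂ ≠ j₃ ∧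
    (completeBipartiteGraph (Fin 3) (Fin 3)).Adj i j₁ ∧
    (completeBipartiteGraph (Fin 3) (Fin 3)).Adj i j₂ ∧
    (completeBipartiteGraph (Fin 3) (Fin 3)).Adj i j₃ := by
  rcases i with i | i
  · exact ⟨.inr 0, .inr 1, .inr 2, by simp⟩
  · exact ⟨.inl 0, .inl 1, .inl 2, by simp⟩

theorem planar_ctr {X : Finset V} {w : V} (h : IsPlanar G) (hX : ConnSet G X) (hw : w ∈ X) :
    IsPlanar (ctr G X w) :=
  ⟨fun h' => h.1 (minor_of_ctr hX hw (fun i => by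
      obtain ⟨j, -, -, -, -, -, hj, -⟩ := K5_three i; exact ⟨j, hj⟩) h'),
   fun h' => h.2 (minor_of_ctr hX hw (fun i => by
      obtain ⟨j, -, -, -, -, -, hj, -⟩ := K33_three i; exact ⟨j, hj⟩) h')⟩

theorem planar_of_del {v x y : V} (hn : ∀ w, N.Adj v w → w = x ∨ w = y) (hxy : N.Adj x y)
    (hvx : v ≠ x) (hvy : v ≠ y)
    (h : IsPlanar (rs N (Finset.univ.erase v))) : IsPlanar N :=
  ⟨fun h' => h.1 (minor_del hn hxy hvx hvy K5_three h'), fun h' => h.2 (minor_del hn hxy hvx hvy K33_three h')⟩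

theorem planar_rs_spr {v x y : V} (h : IsPlanar G) (hx : G.Adj v x) (hy : G.Adj v y) :
    IsPlanar (rs (spr G v x y) (Finset.univ.erase v)) := by
  refine planar_mono (planar_ctr (X := {x, v}) (w := x) h (ConnSet.pair hx.symm) (by simp))
    fun a b hab => ?_
  simp only [rs_adj, spr_adj, Finset.mem_erase, Finset.mem_univ, and_true] at hab
  have hne : a ≠ b := by have := @SimpleGraph.Adj.ne _ G a b; grind
  rw [ctr_adj]
  refine ⟨hne, by grind, by grind, ?_⟩
  have := hx.ne; have := hy.ne
  rcases hab.1 with h1 | ⟨⟨rfl, rfl⟩ | ⟨rfl, rfl⟩, -⟩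
  · exact ⟨a, by unfold cl; grind, b, by unfold cl; grind, h1.1⟩
  · exact ⟨v, by simp [cl], b, by unfold cl; grind, hy⟩
  · exact ⟨a, by unfold cl; grind, v, by simp [cl], hy.symm⟩

/-- Suppressing a vertex of degree 2 preserves planarity. -/
theorem planar_spr {v x y : V} (h : IsPlanar G) (hnb : nb G v = {x, y}) (hxy : x ≠ y) :
    IsPlanar (spr G v x y) := by
  have hn : ∀ w, G.Adj v w ↔ w = x ∨ w = y := by intro w; rw [← mem_nb, hnb]; simp
  have hx := (hn x).2 (by simp); have hy := (hn y).2 (by simp)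
  refine planar_mono (planar_rs_spr h hx hy) fun a b hab => ?_
  simp only [rs_adj, Finset.mem_erase, Finset.mem_univ, and_true]
  have := hx.ne; have := hy.ne
  rw [spr_adj] at *
  have := hn a; have := hn b; have := G.adj_comm a b
  grind

/-- Splitting off two non-adjacent neighbours of a degree-4 vertex preserves planarity if the other
two neighbours are adjacent. -/
theorem planar_spr_mixed {v x₁ x₂ x₃ x₄ : V} (hp : IsPlanar G)
    (hn : ∀ w, G.Adj v w ↔ w = x₁ ∨ w = x₂ ∨ w = x₃ ∨ w = x₄) (h13 : x₁ ≠ x₃)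
    (h14 : x₁ ≠ x₄) (h23 : x₂ ≠ x₃) (h24 : x₂ ≠ x₄)
    (hadj : G.Adj x₃ x₄) : IsPlanar (spr G v x₁ x₂) := by
  have hx := (hn x₁).2 (by simp); have hy := (hn x₂).2 (by simp)
  have := hx.ne; have := hy.ne
  refine planar_of_del (v := v) (x := x₃) (y := x₄) (fun w => ?_) ?_
    ((hn x₃).2 (by simp)).ne ((hn x₄).2 (by simp)).ne (planar_rs_spr hp hx hy)
  · rw [spr_adj]; have := hn w; grind
  · rw [spr_adj]; have := (hn x₃).2 (by simp); have := this.ne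
    have h4 := (hn x₄).2 (by simp); have := h4.ne
    grind

theorem not_K5 (h : IsPlanar G) {A B C D E : Finset V} (hA : ConnSet G A) (hB : ConnSet G B)
    (hC : ConnSet G C) (hD : ConnSet G D) (hE : ConnSet G E)
    (hd : ∀ x, (x ∈ A → x ∉ B ∧ x ∉ C ∧ x ∉ D ∧ x ∉ E) ∧ (x ∈ B → x ∉ C ∧ x ∉ D ∧ x ∉ E) ∧
      (x ∈ C → x ∉ D ∧ x ∉ E) ∧ (x ∈ D → x ∉ E))
    (hAB : Tch G A B) (hAC : Tch G A C) (hAD : Tch G A D) (hAE : Tch G A E) (hBC : Tch G B C)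
    (hBD : Tch G B D) (hBE : Tch G B E) (hCD : Tch G C D) (hCE : Tch G C E) (hDE : Tch G D E) :
    False := by
  refine h.1 (minor_iff.mpr ⟨![A, B, C, D, E], fun i => ?_, fun i j hij x hx => ?_,
    fun i j hij => ?_⟩)
  · fin_cases i <;> assumption
  · have := hd x
    fin_cases i <;> fin_cases j <;> simp at hij hx ⊢ <;> grind
  · have hij : i ≠ j := hij
    fin_cases i <;> fin_cases j <;> first | (exact absurd rfl hij) | assumption |
      (apply Tch.symm; assumption)

theorem not_K33 (h : IsPlanar G) {A B C D E F : Finset V} (hA : ConnSet G A) (hB : ConnSet G B)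
    (hC : ConnSet G C) (hD : ConnSet G D) (hE : ConnSet G E) (hF : ConnSet G F)
    (hd : ∀ x, (x ∈ A → x ∉ B ∧ x ∉ C ∧ x ∉ D ∧ x ∉ E ∧ x ∉ F) ∧
      (x ∈ B → x ∉ C ∧ x ∉ D ∧ x ∉ E ∧ x ∉ F) ∧
      (x ∈ C → x ∉ D ∧ x ∉ E ∧ x ∉ F) ∧ (x ∈ D → x ∉ E ∧ x ∉ F) ∧ (x ∈ E → x ∉ F))
    (hAD : Tch G A D) (hAE : Tch G A E) (hAF : Tch G A F) (hBD : Tch G B D) (hBE : Tch G B E)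
    (hBF : Tch G B F) (hCD : Tch G C D) (hCE : Tch G C E) (hCF : Tch G C F) : False := by
  refine h.2 (minor_iff.mpr ⟨Sum.elim ![A, B, C] ![D, E, F], fun i => ?_, fun i j hij x hx => ?_,
    fun i j hij => ?_⟩)
  · rcases i with i | i <;> fin_cases i <;> assumption
  · have := hd x
    rcases i with i | i <;> rcases j with j | j <;> fin_cases i <;> fin_cases j <;>
      simp at hij hx ⊢ <;> grind
  · rcases i with i | i <;> rcases j with j | j <;> simp at hij <;> fin_cases i <;> fin_cases j <;>
      first | assumption | (apply Tch.symm; assumption)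

end Minor

/-! ### The edge bound for planar graphs -/

section EdgeBound
variable {G : SimpleGraph V}

theorem card4 {N : Finset V} (h : N.card = 4) : ∃ a b c d, a ≠ b ∧ a ≠ c ∧ a ≠ d ∧ b ≠ c ∧ b ≠ d ∧
    c ≠ d ∧ N = {a, b, c, d} := by
  obtain ⟨a, T, haT, rfl, hT⟩ := Finset.card_eq_succ.mp h
  obtain ⟨b, c, d, h1, h2, h3, rfl⟩ := Finset.card_eq_three.mp hT
  exact ⟨a, b, c, d, by grind⟩

theorem exists_card_five {N : Finset V} (h : N.card = 5) {a b : V} (ha : a ∈ N) (hb : b ∈ N)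
    (hab : a ≠ b) : ∃ c d e, c ≠ d ∧ c ≠ e ∧ d ≠ e ∧ a ≠ c ∧ a ≠ d ∧ a ≠ e ∧ b ≠ c ∧ b ≠ d ∧ b ≠ e ∧
      N = {a, b, c, d, e} := by
  have : (N \ {a, b}).card = 3 := by
    rw [Finset.card_sdiff_of_subset (by grind), Finset.card_pair hab, h]
  obtain ⟨c, d, e, h1, h2, h3, hN⟩ := Finset.card_eq_three.mp this
  have : ∀ x, x ∈ N \ {a, b} ↔ x ∈ ({c, d, e} : Finset V) := by rw [hN]; simp
  have h1' := this a; have h2' := this b; have hc := this c; have hd := this d; have he := this e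
  refine ⟨c, d, e, h1, h2, h3, ?_, ?_, ?_, ?_, ?_, ?_, ?_⟩
  all_goals first | (ext x; have := this x; grind) | grind

theorem sum_ind {S : Finset V} {v : V} (h : nb G v ⊆ S) :
    ∑ w ∈ S, (if G.Adj v w then 1 else 0) = dg G v := by
  rw [Finset.sum_boole, dg]; simp; congr 1; ext w; have := @h w; simp at this ⊢; grind

theorem dg_del (v : V) {w : V} (hw : w ≠ v) :
    dg (rs G (Finset.univ.erase v)) w + (if G.Adj v w then 1 else 0) = dg G w := by
  have : nb (rs G (Finset.univ.erase v)) w = (nb G w).erase v := by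
    ext x; simp; grind
  rw [dg, this, dg]
  split_ifs with h
  · rw [Finset.card_erase_add_one (by simp [h.symm])]
  · rw [Finset.erase_eq_of_notMem (by simp; exact fun h' => h h'.symm)]; simp

theorem sum_del {S : Finset V} (hS : sp G ⊆ S) {v : V} (hv : v ∈ S) :
    ∑ w ∈ S.erase v, dg (rs G (Finset.univ.erase v)) w + 2 * dg G v = ∑ w ∈ S, dg G w := by
  rw [← Finset.add_sum_erase S _ hv]
  have h1 : ∑ w ∈ S.erase v, dg G w = ∑ w ∈ S.erase v, dg (rs G (Finset.univ.erase v)) w +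
      ∑ w ∈ S.erase v, (if G.Adj v w then 1 else 0) := by
    rw [← Finset.sum_add_distrib]
    exact Finset.sum_congr rfl fun w hw => (dg_del v (by grind)).symm
  rw [h1, sum_ind]
  · ring
  · intro w hw
    simp at hw
    simp [hw.ne.symm]; exact hS (by simp; exact ⟨v, hw.symm⟩)

theorem sum_ctr {S : Finset V} (hS : sp G ⊆ S) {v x : V} (hx : G.Adj v x) :
    ∑ w ∈ S, dg G w ≤ ∑ w ∈ S.erase v, dg (ctr G {x, v} x) w + 2 + 2 * (nb G v ∩ nb G x).card := by
  have hvS : v ∈ S := hS (by simp; exact ⟨x, hx⟩)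
  have hxS : x ∈ S := hS (by simp; exact ⟨v, hx.symm⟩)
  have hne := hx.ne
  rw [← Finset.add_sum_erase S _ hvS, ← Finset.add_sum_erase (S.erase v) (dg G) (a := x) (by grind),
    ← Finset.add_sum_erase (S.erase v) (dg _) (a := x) (by grind)]
  have hadj : ∀ a b, a ≠ b → a ≠ v → b ≠ v → (G.Adj a b ∨ (a = x ∧ G.Adj v b) ∨ (b = x ∧ G.Adj v a)) →
      (ctr G {x, v} x).Adj a b := by
    intro a b h1 h2 h3 h
    refine ⟨h1, by grind, by grind, ?_⟩
    rcases h with h | ⟨rfl, h⟩ | ⟨rfl, h⟩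
    · exact ⟨a, by unfold cl; grind, b, by unfold cl; grind, h⟩
    · exact ⟨v, by simp [cl], b, by unfold cl; grind, h⟩
    · exact ⟨a, by unfold cl; grind, v, by simp [cl], h.symm⟩
  have h1 : dg G v + dg G x ≤ dg (ctr G {x, v} x) x + 2 + (nb G v ∩ nb G x).card := by
    have e1 := Finset.card_union_add_card_inter (nb G v) (nb G x)
    have e2 : ((nb G v ∪ nb G x) \ {x, v}).card ≤ dg (ctr G {x, v} x) x :=
      Finset.card_le_card fun w hw => by
        simp at hw ⊢; exact hadj _ _ (by grind) hne.symm (by grind) (by grind)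
    have e3 := Finset.le_card_sdiff {x, v} (nb G v ∪ nb G x)
    have e4 : ({x, v} : Finset V).card ≤ 2 := Finset.card_le_two
    simp only [dg] at *
    omega
  have h2 : ∀ w ∈ (S.erase v).erase x, dg G w ≤ dg (ctr G {x, v} x) w +
      (if w ∈ nb G v ∩ nb G x then 1 else 0) := by
    intro w hw
    have hwx : w ≠ x := by grind
    have hwv : w ≠ v := by grind
    by_cases hwv' : G.Adj v w
    · by_cases hwx' : G.Adj x w
      · have : ((nb G w).erase v).card ≤ dg (ctr G {x, v} x) w := Finset.card_le_card fun z hz => by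
          simp at hz ⊢; exact hadj _ _ hz.2.ne hwv hz.1 (Or.inl hz.2)
        rw [Finset.card_erase_of_mem (by simp [hwv'.symm])] at this
        simp [hwv', hwx', dg] at *; omega
      · have : (insert x ((nb G w).erase v)).card ≤ dg (ctr G {x, v} x) w :=
          Finset.card_le_card fun z hz => by
            simp at hz ⊢
            exact hadj _ _ (by rcases hz with rfl | hz; exacts [hwx, hz.2.ne]) hwv (by grind) (by grind)
        rw [Finset.card_insert_of_notMem (by simp [G.adj_comm w x, hwx']),
          Finset.card_erase_of_mem (by simp [hwv'.symm])] at this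
        simp [hwx', dg] at *; omega
    · have : (nb G w).card ≤ dg (ctr G {x, v} x) w := Finset.card_le_card fun z hz => by
        simp at hz ⊢; exact hadj _ _ hz.ne hwv (by rintro rfl; exact hwv' hz.symm) (Or.inl hz)
      simp [dg] at *; omega
  have h3 := Finset.sum_le_sum h2
  rw [Finset.sum_add_distrib] at h3
  have h4 : ∑ w ∈ (S.erase v).erase x, (if w ∈ nb G v ∩ nb G x then 1 else 0) ≤
      (nb G v ∩ nb G x).card := by
    rw [Finset.sum_boole]; simp
    exact Finset.card_le_card fun w => by simp
  omega

/-- If every vertex of the link of `v` has at least three neighbours in the link, and the link has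
four or five vertices, there is a `K₅` minor. -/
theorem link_K5 (hp : IsPlanar G) {v : V} (h4 : 4 ≤ dg G v) (h5 : dg G v ≤ 5)
    (hl : ∀ x, G.Adj v x → 3 ≤ (nb G v ∩ nb G x).card) : False := by
  obtain ⟨N, hN⟩ : ∃ N, N = nb G v := ⟨_, rfl⟩
  rw [← hN] at hl
  have hNm : ∀ x, x ∈ N ↔ G.Adj v x := by simp [hN]
  have hvN : v ∉ N := by simp [hN]
  have sing : ∀ a b, G.Adj a b → Tch G {a} {b} := fun a b h => ⟨a, by simp, b, by simp, h⟩
  have K4 : ∀ a b c d, a ∈ N → b ∈ N → c ∈ N → d ∈ N → G.Adj a b → G.Adj a c → G.Adj a d →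
      G.Adj b c → G.Adj b d → G.Adj c d → False := by
    intro a b c d ha hb hc hd ab ac ad bc bd cd
    have := ab.ne; have := ac.ne; have := ad.ne; have := bc.ne; have := bd.ne; have := cd.ne
    exact not_K5 hp (ConnSet.singleton v) (ConnSet.singleton a) (ConnSet.singleton b)
      (ConnSet.singleton c) (ConnSet.singleton d) (by
        intro x; simp only [Finset.mem_singleton]; grind) (sing _ _ ((hNm a).1 ha))
      (sing _ _ ((hNm b).1 hb)) (sing _ _ ((hNm c).1 hc)) (sing _ _ ((hNm d).1 hd))
      (sing _ _ ab) (sing _ _ ac) (sing _ _ ad) (sing _ _ bc) (sing _ _ bd) (sing _ _ cd)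
  have hNc : N.card = 4 ∨ N.card = 5 := by rw [dg, ← hN] at h4 h5; omega
  have hcard : ∀ a ∈ N, ∀ X ⊆ N, a ∈ X → (∀ b ∈ X, ¬ G.Adj a b) → 3 + X.card ≤ N.card := by
    intro a ha X hX haX hb
    have h1 := hl a ((hNm a).1 ha)
    have h2 : (N ∩ nb G a) ∪ X ⊆ N := by grind
    have h3 := Finset.card_le_card h2
    rw [Finset.card_union_of_disjoint (by
      rw [Finset.disjoint_left]; intro x hx hx'; simp at hx; exact hb x hx' hx.2)] at h3
    omega
  have haa : ∀ a, ¬ G.Adj a a := fun a => G.loopless.1 a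
  rcases hNc with hc | hc
  · obtain ⟨a, b, c, d, ab, ac, ad, bc, bd, cd, hNe⟩ := card4 hc
    have key : ∀ p ∈ N, ∀ q ∈ N, p ≠ q → G.Adj p q := by
      intro p hp q hq hpq
      by_contra hadj
      have := hcard p hp {p, q} (by
        intro x hx; simp only [Finset.mem_insert, Finset.mem_singleton] at hx
        rcases hx with rfl | rfl <;> assumption) (by simp) (by
        intro b hb; simp at hb; rcases hb with rfl | rfl; exacts [haa _, hadj])
      rw [Finset.card_pair hpq] at this; omega
    have ha : a ∈ N := by simp [hNe]
    have hb : b ∈ N := by simp [hNe]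
    have hc : c ∈ N := by simp [hNe]
    have hd : d ∈ N := by simp [hNe]
    exact K4 a b c d ha hb hc hd (key a ha b hb ab) (key a ha c hc ac) (key a ha d hd ad)
      (key b hb c hc bc) (key b hb d hd bd) (key c hc d hd cd)
  · have key : ∀ p ∈ N, ∀ q ∈ N, ∀ r ∈ N, p ≠ q → p ≠ r → q ≠ r → G.Adj p q ∨ G.Adj p r := by
      intro p hp q hq r hr hpq hpr hqr
      by_contra! hadj
      have := hcard p hp {p, q, r} (by
        intro x hx; simp only [Finset.mem_insert, Finset.mem_singleton] at hx
        rcases hx with rfl | rfl | rfl <;> assumption) (by simp) (by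
        intro b hb; simp at hb; rcases hb with rfl | rfl | rfl; exacts [haa _, hadj.1, hadj.2])
      rw [Finset.card_eq_three.mpr ⟨p, q, r, hpq, hpr, hqr, rfl⟩] at this; omega
    have big : ∀ a b c d e, a ≠ b → a ∈ N → b ∈ N → c ∈ N → d ∈ N → e ∈ N → G.Adj a c → G.Adj c b →
        G.Adj a d → G.Adj a e → G.Adj b d → G.Adj b e → G.Adj d e → c ≠ d → c ≠ e → False := by
      intro a b c d e ab ha hb hc hd he ac cb ad ae bd be de hcd hce
      have := ac.ne; have := cb.ne; have := ad.ne; have := ae.ne; have := bd.ne; have := be.ne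
      have := de.ne
      have l := fun x hx => sing _ _ ((hNm x).1 hx)
      refine not_K5 hp (ConnSet.singleton v) (ConnSet.pair ac) (ConnSet.singleton b)
        (ConnSet.singleton d) (ConnSet.singleton e) (by
        have := ((hNm a).1 ha).ne; have := ((hNm b).1 hb).ne; have := ((hNm c).1 hc).ne
        have := ((hNm d).1 hd).ne; have := ((hNm e).1 he).ne
        clear key hcard sing K4 hl l; intro x; simp only [Finset.mem_insert, Finset.mem_singleton]
        refine ⟨?_, ?_, ?_, ?_⟩ <;> grind) ⟨v, by simp, a, by simp, (hNm a).1 ha⟩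
        (l b hb) (l d hd) (l e he) ⟨c, by simp, b, by simp, cb⟩ ⟨a, by simp, d, by simp, ad⟩
        ⟨a, by simp, e, by simp, ae⟩ (sing _ _ bd) (sing _ _ be) (sing _ _ de)
    by_cases hex : ∃ a ∈ N, ∃ b ∈ N, a ≠ b ∧ ¬ G.Adj a b
    · obtain ⟨a, ha, b, hb, hab, hnab⟩ := hex
      obtain ⟨c, d, e, cd, ce, de, ac, ad, ae, bc, bd, be, hNe⟩ := exists_card_five hc ha hb hab
      have hc : c ∈ N := by simp [hNe]
      have hd : d ∈ N := by simp [hNe]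
      have he : e ∈ N := by simp [hNe]
      have hnba : ¬ G.Adj b a := fun h => hnab h.symm
      have hac := (key a ha b hb c hc hab ac bc).resolve_left hnab
      have had := (key a ha b hb d hd hab ad bd).resolve_left hnab
      have hae := (key a ha b hb e he hab ae be).resolve_left hnab
      have hbc := (key b hb a ha c hc hab.symm bc ac).resolve_left hnba
      have hbd := (key b hb a ha d hd hab.symm bd ad).resolve_left hnba
      have hbe := (key b hb a ha e he hab.symm be ae).resolve_left hnba
      rcases key e he d hd c hc de.symm ce.symm cd.symm with h | h
      · exact big a b c d e hab ha hb hc hd he hac hbc.symm had hae hbd hbe h.symm cd ce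
      · exact big a b d c e hab ha hb hd hc he had hbd.symm hac hae hbc hbe h.symm cd.symm de
    · push Not at hex
      obtain ⟨a, ha, b, hb, hab⟩ := Finset.one_lt_card.mp (by omega : 1 < N.card)
      obtain ⟨c, d, e, cd, ce, de, ac, ad, ae, bc, bd, be, hNe⟩ := exists_card_five hc ha hb hab
      have hc : c ∈ N := by simp [hNe]
      have hd : d ∈ N := by simp [hNe]
      exact K4 a b c d ha hb hc hd (hex a ha b hb hab) (hex a ha c hc ac) (hex a ha d hd ad)
        (hex b hb c hc bc) (hex b hb d hd bd) (hex c hc d hd cd)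

theorem dg_le_of_sp {S : Finset V} (hS : sp G ⊆ S) {v : V} (hv : v ∈ S) : dg G v + 1 ≤ S.card := by
  rw [← Finset.card_erase_add_one hv]
  refine Nat.succ_le_succ (Finset.card_le_card fun w hw => ?_)
  simp at hw ⊢
  exact ⟨hw.ne.symm, hS (by simp; exact ⟨v, hw.symm⟩)⟩

theorem even_sum_sp {S : Finset V} (hS : sp G ⊆ S) : Even (∑ v ∈ S, dg G v) :=
  even_sum_closed fun a _ b hab => hS (by simp; exact ⟨a, hab.symm⟩)

theorem exists_sub {S : Finset V} (k m : ℕ) : ∀ G : SimpleGraph V, sp G ⊆ S →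
    ∑ v ∈ S, dg G v = 2 * k + 2 * m → ∃ G' ≤ G, ∑ v ∈ S, dg G' v = 2 * k := by
  induction m with
  | zero => exact fun G _ h => ⟨G, le_rfl, h⟩
  | succ m ih =>
    intro G hS h
    have : ∃ a ∈ S, dg G a ≠ 0 := by
      by_contra! h0
      rw [Finset.sum_eq_zero h0] at h; omega
    obtain ⟨a, ha, h0⟩ := this
    have : a ∈ sp G := by rw [ne_eq, dg_eq_zero] at h0; simpa using h0
    obtain ⟨b, hab⟩ := mem_sp.mp this
    have hb : b ∈ S := hS (by simp; exact ⟨a, hab.symm⟩)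
    have hs : ∑ w ∈ S, dg (G \ edge a b) w + 2 = ∑ w ∈ S, dg G w := by
      have := Finset.sum_congr (s₁ := S) rfl fun w _ => (edge_dg_le hab w).symm
      rw [this, Finset.sum_add_distrib, Finset.sum_add_distrib]
      simp [ha, hb]
    obtain ⟨G', h1, h2⟩ := ih (G \ edge a b) ((sp_mono sdiff_le).trans hS) (by omega)
    exact ⟨G', h1.trans sdiff_le, h2⟩

/-- A planar graph on `n ≥ 3` vertices has at most `3 * n - 6` edges. In a minimal counterexample,
which may be thinned to exactly `3 * n - 5` edges, some vertex has degree at most 5, and neither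
deleting it nor contracting one of its edges leads to a smaller counterexample. -/
theorem edge_bound_aux (m : ℕ) : ∀ (G : SimpleGraph V) (S : Finset V), IsPlanar G → sp G ⊆ S →
    S.card = m + 3 → ∑ v ∈ S, dg G v + 12 ≤ 6 * S.card := by
  induction m with
  | zero =>
    intro G S hp hS h3
    have := Finset.sum_le_card_nsmul S (dg G) 2 fun v hv => by have := dg_le_of_sp hS hv; omega
    rw [smul_eq_mul] at this
    change ∑ v ∈ S, dg G v ≤ _ at this; omega
  | succ m ih =>
    intro G₀ S hp₀ hS₀ h3
    by_contra hcon
    obtain ⟨k, hk⟩ := even_sum_sp hS₀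
    obtain ⟨G, hG, hsum⟩ := exists_sub (S := S) (3 * S.card - 5) (k - (3 * S.card - 5)) G₀ hS₀ (by omega)
    have hp := planar_mono hp₀ hG
    have hS := (sp_mono hG).trans hS₀
    have hn5 : m ≠ 0 := by
      rintro rfl
      have := Finset.sum_le_card_nsmul S (dg G) 3 fun v hv => by have := dg_le_of_sp hS hv; omega
      rw [smul_eq_mul] at this
      change ∑ v ∈ S, dg G v ≤ _ at this; omega
    have : ∃ v ∈ S, dg G v ≤ 5 := by
      by_contra! hc
      have := Finset.card_nsmul_le_sum S (dg G) 6 (fun v hv => hc v hv)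
      rw [smul_eq_mul] at this
      change _ ≤ ∑ v ∈ S, dg G v at this; omega
    obtain ⟨v, hv, hv5⟩ := this
    have hce := Finset.card_erase_of_mem hv
    by_cases h3v : dg G v ≤ 3
    · have h1 := sum_del hS hv
      have := ih (rs G (Finset.univ.erase v)) (S.erase v) (planar_mono hp (rs_le _ _)) (by
        intro w hw; simp at hw ⊢
        obtain ⟨x, hx⟩ := hw
        exact ⟨hx.2.1, hS (by simp; exact ⟨x, hx.1⟩)⟩) (by omega)
      omega
    · refine link_K5 hp (v := v) (by omega) hv5 fun x hx => ?_
      by_contra hlt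
      have h1 := sum_ctr hS hx
      have := ih (ctr G {x, v} x) (S.erase v) (planar_ctr hp (ConnSet.pair hx.symm) (by simp)) (by
        intro w hw
        rw [mem_sp] at hw
        obtain ⟨z, -, h2, -, a, ha, b, -, hab⟩ := hw
        have e1 := hS (show a ∈ sp G by simp; exact ⟨b, hab⟩)
        have e2 := hS (show x ∈ sp G by simp; exact ⟨v, hx.symm⟩)
        have := hx.ne
        unfold cl at ha
        grind) (by omega)
      omega

theorem edge_bound {S : Finset V} (hp : IsPlanar G) (hS : sp G ⊆ S) (h3 : 3 ≤ S.card) :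
    ∑ v ∈ S, dg G v + 12 ≤ 6 * S.card :=
  edge_bound_aux (S.card - 3) G S hp hS (by omega)

end EdgeBound

/-! ### Hajós' bound for planar even graphs -/

section Hajos
variable {G : SimpleGraph V}

/-- `G` decomposes into at most `k / 2` cycles. -/
def Bd (G : SimpleGraph V) (k : ℕ) : Prop := ∃ L, Dec L G ∧ 2 * L.card ≤ k

theorem Bd.mono {k l : ℕ} (h : Bd G k) (hkl : k ≤ l) : Bd G l := by
  obtain ⟨L, h1, h2⟩ := h; exact ⟨L, h1, h2.trans hkl⟩

/-- All planar even graphs with degree sum below `m` satisfy Hajós' bound. -/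
def HajosBelow (V : Type*) [Fintype V] (m : ℕ) : Prop :=
  ∀ G : SimpleGraph V, IsPlanar G → (∀ v, Even (dg G v)) → ∑ v, dg G v < m → Bd G ((sp G).card - 1)

theorem mem_sp_of {a b : V} (h : G.Adj a b) : a ∈ sp G := mem_sp.mpr ⟨b, h⟩

theorem even_sdiff {A : SimpleGraph V} (h : A ≤ G) (hA : ∀ v, Even (dg A v))
    (hG : ∀ v, Even (dg G v)) (v : V) : Even (dg (G \ A) v) := by
  have h1 := dg_sdiff h v
  have := hA v; have := hG v
  rw [← h1, Nat.even_add] at this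
  tauto

theorem IsCyc.even {T : SimpleGraph V} (hT : IsCyc T) (v : V) : Even (dg T v) := by
  rcases hT.2.1 v with h | h <;> rw [h] <;> decide

theorem sum_dg_pos (h : G ≠ ⊥) : 0 < ∑ v, dg G v := by
  obtain ⟨v, hv⟩ := ne_bot_iff_sp.mp h
  refine Finset.sum_pos' (fun _ _ => Nat.zero_le _) ⟨v, by simp, ?_⟩
  by_contra h0
  exact dg_eq_zero.mp (by omega) hv

theorem sum_dg_sdiff {A : SimpleGraph V} (h : A ≤ G) :
    ∑ v, dg (G \ A) v + ∑ v, dg A v = ∑ v, dg G v := by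
  rw [← Finset.sum_add_distrib]
  exact Finset.sum_congr rfl fun v _ => dg_sdiff h v

theorem card_sp_ge (hE : ∀ v, Even (dg G v)) (h : G ≠ ⊥) : 3 ≤ (sp G).card := by
  obtain ⟨v, hv⟩ := ne_bot_iff_sp.mp h
  have h1 : dg G v ≠ 0 := fun h => dg_eq_zero.mp h hv
  have h2 := dg_le_of_sp (Finset.Subset.refl _) hv
  obtain ⟨k, hk⟩ := hE v
  omega

/-- A set of vertices whose edges all stay inside or go to one vertex `v` splits the graph into two
smaller even graphs. -/
theorem bd_split (hp : IsPlanar G) (hE : ∀ v, Even (dg G v)) (ih : HajosBelow V (∑ v, dg G v))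
    {Y : Finset V} {v a b : V} (hv : v ∉ Y) (hY : ∀ a ∈ Y, ∀ b, G.Adj a b → b = v ∨ b ∈ Y)
    (ha : a ∈ Y) (haG : a ∈ sp G) (hb : b ∉ Y) (hbv : b ≠ v) (hbG : b ∈ sp G) :
    Bd G ((sp G).card - 1) := by
  obtain ⟨B, hB⟩ : ∃ B, B = rs G Yᶜ := ⟨_, rfl⟩
  obtain ⟨A, hA⟩ : ∃ A, A = G \ B := ⟨_, rfl⟩
  have hBG : B ≤ G := hB ▸ rs_le _ _
  have hAG : A ≤ G := hA ▸ sdiff_le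
  have hAadj : ∀ x y, A.Adj x y ↔ G.Adj x y ∧ (x ∈ Y ∨ y ∈ Y) := by
    intro x y; rw [hA, sdiff_adj, hB, rs_adj]; simp; grind
  have dA : ∀ x ∈ Y, dg A x = dg G x := by
    intro x hx; unfold dg; congr 1; ext y; simp [hAadj, hx]
  have dA0 : ∀ x ∉ Y, x ≠ v → dg A x = 0 := by
    intro x hx hxv; rw [dg_eq_zero]; simp [hAadj]
    intro y hxy; have := hY y; have := hxy.symm; grind
  have EA : ∀ x, Even (dg A x) := by
    intro x
    by_cases hx : x ∈ Y
    · rw [dA x hx]; exact hE x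
    · by_cases hxv : x = v
      · subst hxv
        have h1 := even_sum_dg A
        rw [← Finset.add_sum_erase _ _ (Finset.mem_univ x), Nat.even_add] at h1
        refine h1.mpr (Finset.even_sum _ fun y hy => ?_)
        by_cases hyY : y ∈ Y
        · rw [dA y hyY]; exact hE y
        · rw [dA0 y hyY (by grind)]; decide
      · rw [dA0 x hx hxv]; decide
  have eB : G \ A = B := by rw [hA, sdiff_sdiff_right_self, inf_eq_right.mpr hBG]
  have EB : ∀ x, Even (dg B x) := by rw [← eB]; exact even_sdiff hAG EA hE
  have A0 : A ≠ ⊥ := by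
    obtain ⟨c, hc⟩ := mem_sp.mp haG
    exact ne_bot_iff_exists_adj.mpr ⟨a, c, by rw [hAadj]; exact ⟨hc, Or.inl ha⟩⟩
  have B0 : B ≠ ⊥ := by
    obtain ⟨c, hc⟩ := mem_sp.mp hbG
    refine ne_bot_iff_exists_adj.mpr ⟨b, c, ?_⟩
    rw [hB, rs_adj]
    have := hY c; have := hc.symm
    simp; grind
  have s1 := sum_dg_sdiff hAG
  rw [eB] at s1
  have := sum_dg_pos A0; have := sum_dg_pos B0
  obtain ⟨L, hL, cL⟩ := ih A (planar_mono hp hAG) EA (by omega)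
  obtain ⟨M, hM, cM⟩ := ih B (planar_mono hp hBG) EB (by omega)
  have hd : Disjoint A B := hA ▸ disjoint_sdiff_self_left
  have hU : A ⊔ B = G := by rw [hA]; exact sdiff_sup_cancel hBG
  refine ⟨L + M, (hL.add hM hd).cast hU, ?_⟩
  have c1 := card_sp_ge EA A0
  have c2 := card_sp_ge EB B0
  have c3 : (sp A ∩ sp B).card ≤ 1 := by
    refine (Finset.card_le_card (t := {v}) fun x hx => ?_).trans (by simp)
    have hx1 := (Finset.mem_inter.mp hx).1
    have hx2 := (Finset.mem_inter.mp hx).2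
    have : x ∉ Y := by
      obtain ⟨y, hy⟩ := mem_sp.mp hx2
      rw [hB, rs_adj] at hy; simp at hy; exact hy.2.1
    by_contra hxv
    exact dg_eq_zero.mp (dA0 x this (by simpa using hxv)) hx1
  have c4 := Finset.card_union_add_card_inter (sp A) (sp B)
  rw [← sp_sup, hU] at c4
  rw [Multiset.card_add]
  omega

/-- Hence either the bound holds or the graph is 2-connected. -/
theorem bd_or_conn (hp : IsPlanar G) (hE : ∀ v, Even (dg G v)) (ih : HajosBelow V (∑ v, dg G v))
    (h0 : G ≠ ⊥) :
    Bd G ((sp G).card - 1) ∨ (ConnSet G (sp G) ∧ ∀ z ∈ sp G, ConnSet G ((sp G).erase z)) := by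
  by_contra! hc
  obtain ⟨hn, hc⟩ := hc
  have c3 := card_sp_ge hE h0
  have conn : ∀ z, ConnSet G ((sp G).erase z) := by
    intro z
    refine ⟨?_, fun X hX a ha haX b hb => ?_⟩
    · rw [← Finset.card_pos]; have := Finset.pred_card_le_card_erase (s := sp G) (a := z); omega
    · by_contra hbX
      refine hn (bd_split hp hE ih (Y := X ∩ (sp G).erase z) (v := z) (a := a) (b := b) (by simp) ?_
        (by grind) (by grind) (by grind) (by grind) (by grind))
      intro c hc d hcd
      have := hX c (by grind) d
      have := mem_sp_of hcd.symm
      grind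
  obtain ⟨z, hz, hz'⟩ := hc ⟨ne_bot_iff_sp.mp h0, fun X hX a ha haX b hb => by
    by_contra hbX
    obtain ⟨v, hbv⟩ := mem_sp.mp hb
    refine hn (bd_split hp hE ih (Y := X ∩ sp G) (v := v) (a := a) (b := b) ?_ ?_
      (by grind) (by grind) (by grind) hbv.ne (by grind))
    · have := hX v; have := hbv.symm; grind
    · intro c hc d hcd
      have := hX c (by grind) d (mem_sp_of hcd.symm) hcd
      have := mem_sp_of hcd.symm
      grind⟩
  exact hz' (conn z)

/-- `v` is isolated, or has degree 2 with non-adjacent neighbours. -/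
def Supp (G : SimpleGraph V) (v : V) : Prop :=
  v ∉ sp G ∨ ∃ x y, nb G v = {x, y} ∧ x ≠ y ∧ ¬ G.Adj x y

theorem sp_spr {v x y : V} (hnb : nb G v = {x, y}) (hxy : x ≠ y) (h : ¬ G.Adj x y) :
    sp (spr G v x y) ⊆ (sp G).erase v := by
  have hn : ∀ w, G.Adj v w ↔ w = x ∨ w = y := by intro w; rw [← mem_nb, hnb]; simp
  intro w hw
  have h1 := dg_spr ((hn x).2 (by simp)) ((hn y).2 (by simp)) hxy h w
  have h0 := dg_eq_zero (G := G) (v := w)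
  have h0' := dg_eq_zero (G := spr G v x y) (v := w)
  by_cases hwv : w = v
  · subst hwv
    have : dg G w = 2 := by rw [dg, hnb, Finset.card_pair hxy]
    grind
  · grind

theorem even_spr {v x y : V} (hE : ∀ v, Even (dg G v)) (hx : G.Adj v x) (hy : G.Adj v y)
    (hxy : x ≠ y) (h : ¬ G.Adj x y) (w : V) : Even (dg (spr G v x y) w) := by
  have h1 := dg_spr hx hy hxy h w
  have h2 := hE w
  rw [← h1, Nat.even_add] at h2
  refine h2.mpr ?_
  split_ifs <;> decide

theorem sum_spr {v x y : V} (hx : G.Adj v x) (hy : G.Adj v y)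
    (hxy : x ≠ y) (h : ¬ G.Adj x y) : ∑ w, dg (spr G v x y) w + 2 = ∑ w, dg G w := by
  have : ∀ w, _ := fun w => dg_spr hx hy hxy h w
  rw [← Finset.sum_congr rfl fun w _ => this w, Finset.sum_add_distrib]
  simp

theorem bd_supp {m : ℕ} (ih : HajosBelow V m) (hp : IsPlanar G) (hE : ∀ v, Even (dg G v))
    (hm : ∑ v, dg G v < m) {v : V} (hv : Supp G v) : Bd G (((sp G).erase v).card - 1) := by
  rcases hv with hv | ⟨x, y, hnb, hxy, hadj⟩
  · rw [Finset.erase_eq_of_notMem hv]; exact ih G hp hE hm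
  · have hn : ∀ w, G.Adj v w ↔ w = x ∨ w = y := by intro w; rw [← mem_nb, hnb]; simp
    have hx := (hn x).2 (by simp); have hy := (hn y).2 (by simp)
    have h1 := sum_spr hx hy hxy hadj
    obtain ⟨L, hL, cL⟩ := ih (spr G v x y) (planar_spr hp hnb hxy) (even_spr hE hx hy hxy hadj)
      (by omega)
    obtain ⟨L', hL', cL'⟩ := Dec.unspr hnb hxy hadj hL
    have := Finset.card_le_card (sp_spr hnb hxy hadj)
    exact ⟨L', hL', by omega⟩

theorem bd_supp_two {m : ℕ} (ih : HajosBelow V m) (hp : IsPlanar G) (hE : ∀ v, Even (dg G v))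
    (hm : ∑ v, dg G v < m) {u v : V} (hu : Supp G u) (hv : Supp G v) (huv : u ≠ v)
    (hadj : ¬ G.Adj u v) (hne : nb G u = nb G v → u ∉ sp G) :
    Bd G ((((sp G).erase u).erase v).card - 1) := by
  rcases hu with hu | ⟨x, y, hnb, hxy, hxy'⟩
  · rw [Finset.erase_eq_of_notMem hu]; exact bd_supp ih hp hE hm hv
  · have hn : ∀ w, G.Adj u w ↔ w = x ∨ w = y := by intro w; rw [← mem_nb, hnb]; simp
    have hx := (hn x).2 (by simp); have hy := (hn y).2 (by simp)
    have h1 := sum_spr hx hy hxy hxy'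
    have hne' : nb G u ≠ nb G v := fun h => hne h (mem_sp_of hx)
    have hvx : v ≠ x := by rintro rfl; exact hadj hx
    have hvy : v ≠ y := by rintro rfl; exact hadj hy
    have env : nb (spr G u x y) v = nb G v := by
      ext w; simp only [mem_nb, spr_adj]
      have := hn v; have := G.adj_comm u v; grind
    have hv' : Supp (spr G u x y) v := by
      rcases hv with hv | ⟨x', y', hnb', hne2, hadj2⟩
      · left
        rw [← dg_eq_zero, dg, env]; rwa [← dg_eq_zero] at hv
      · right
        refine ⟨x', y', env.trans hnb', hne2, ?_⟩
        rw [spr_adj]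
        rintro (h | h)
        · exact hadj2 h.1
        · apply hne'
          rw [hnb, hnb']; grind
    obtain ⟨L, hL, cL⟩ := bd_supp (v := v) ih (planar_spr hp hnb hxy)
      (even_spr hE hx hy hxy hxy') (by omega) hv'
    obtain ⟨L', hL', cL'⟩ := Dec.unspr hnb hxy hxy' hL
    have := Finset.card_le_card (Finset.erase_subset_erase v (sp_spr hnb hxy hxy'))
    exact ⟨L', hL', by omega⟩

/-- Removing a cycle that makes two vertices suppressible pays for itself. -/
theorem bd_red (hp : IsPlanar G) (hE : ∀ v, Even (dg G v)) (ih : HajosBelow V (∑ v, dg G v))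
    {T : SimpleGraph V} {u v : V} (hT : IsCyc T) (hTG : T ≤ G) (huG : u ∈ sp G) (hvG : v ∈ sp G)
    (hu : Supp (G \ T) u) (hv : Supp (G \ T) v) (huv : u ≠ v) (hadj : ¬ (G \ T).Adj u v)
    (hne : nb (G \ T) u = nb (G \ T) v → u ∉ sp (G \ T)) : Bd G ((sp G).card - 1) := by
  have s1 := sum_dg_sdiff hTG
  have := sum_dg_pos hT.1
  obtain ⟨L, hL, cL⟩ := bd_supp_two ih (planar_mono hp sdiff_le) (even_sdiff hTG hT.even hE)
    (by omega) hu hv huv hadj hne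
  refine ⟨T ::ₘ L, (hL.cons hT disjoint_sdiff_self_right).cast (sup_sdiff_cancel_right hTG), ?_⟩
  have c3 := card_sp_ge hE (fun h => hT.1 (by rw [h] at hTG; exact le_bot_iff.mp hTG))
  have c1 : ((sp (G \ T)).erase u).erase v ⊆ ((sp G).erase u).erase v :=
    Finset.erase_subset_erase _ (Finset.erase_subset_erase _ (sp_mono sdiff_le))
  have c1 := Finset.card_le_card c1
  have c2 := Finset.card_erase_of_mem (Finset.mem_erase.mpr ⟨huv.symm, hvG⟩)
  have c4 := Finset.card_erase_of_mem huG
  rw [Multiset.card_cons]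
  omega

end Hajos

/-! ### Cycles through two vertices of small degree -/

section Pairs
variable {G : SimpleGraph V}

/-- The neighbours of `v` are the four distinct vertices `a, b, c, d`. -/
def N4 (G : SimpleGraph V) (v a b c d : V) : Prop :=
  a ≠ b ∧ a ≠ c ∧ a ≠ d ∧ b ≠ c ∧ b ≠ d ∧ c ≠ d ∧ ∀ w, G.Adj v w ↔ w = a ∨ w = b ∨ w = c ∨ w = d

theorem exists_N4 {v : V} (h : dg G v = 4) : ∃ a b c d, N4 G v a b c d := by
  obtain ⟨a, b, c, d, h1, h2, h3, h4, h5, h6, h7⟩ := card4 h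
  exact ⟨a, b, c, d, h1, h2, h3, h4, h5, h6, fun w => by rw [← mem_nb, h7]; simp⟩

theorem N4.dg {v a b c d : V} (h : N4 G v a b c d) : dg G v = 4 := by
  obtain ⟨h1, h2, h3, h4, h5, h6, h7⟩ := h
  have : nb G v = {a, b, c, d} := by ext w; simp [h7]
  rw [PlanarCDC.dg, this]
  rw [Finset.card_insert_of_notMem (by simp [*]), Finset.card_insert_of_notMem (by simp [*]),
    Finset.card_pair h6]

theorem N4.exists_of_pair {v x y : V} (h : PlanarCDC.dg G v = 4) (hx : G.Adj v x) (hy : G.Adj v y)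
    (hxy : x ≠ y) : ∃ c d, N4 G v x y c d := by
  obtain ⟨a, b, c, d, h1, h2, h3, h4, h5, h6, h7⟩ := exists_N4 h
  have hx' := (h7 x).1 hx; have hy' := (h7 y).1 hy
  have : ∃ p q, p ≠ q ∧ p ≠ x ∧ p ≠ y ∧ q ≠ x ∧ q ≠ y ∧ ∀ w, (w = a ∨ w = b ∨ w = c ∨ w = d) ↔
      w = x ∨ w = y ∨ w = p ∨ w = q := by
    rcases hx' with rfl | rfl | rfl | rfl <;> rcases hy' with rfl | rfl | rfl | rfl
    all_goals first
      | exact absurd rfl hxy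
      | exact ⟨c, d, by grind⟩
      | exact ⟨b, d, by grind⟩
      | exact ⟨b, c, by grind⟩
      | exact ⟨a, d, by grind⟩
      | exact ⟨a, c, by grind⟩
      | exact ⟨a, b, by grind⟩
  obtain ⟨p, q, i1, i2, i3, i4, i5, i6⟩ := this
  exact ⟨p, q, hxy, i2.symm, i4.symm, i3.symm, i5.symm, i1, fun w => (h7 w).trans (i6 w)⟩

theorem N4.nb_sdiff {T : SimpleGraph V} {v a b c d : V} (h : N4 G v a b c d) (hT : nb T v = {a, b}) :
    nb (G \ T) v = {c, d} := by
  obtain ⟨h1, h2, h3, h4, h5, h6, h7⟩ := h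
  have hn : ∀ w, T.Adj v w ↔ w = a ∨ w = b := by intro w; rw [← mem_nb, hT]; simp
  ext w; simp [sdiff_adj, h7, hn]; grind

/-- Each of the three pairings of the link of a degree-4 vertex has both pairs adjacent or neither,
and not all six pairs are adjacent. -/
def Pure (G : SimpleGraph V) : Prop :=
  (∀ v a b c d, N4 G v a b c d → G.Adj a b → G.Adj c d) ∧
  ∀ v a b c d, N4 G v a b c d → G.Adj a b → G.Adj a c → ¬ G.Adj a d

theorem N4.swap {v a b c d : V} (h : N4 G v a b c d) : N4 G v c d a b := by
  unfold N4 at *; grind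
theorem N4.swap' {v a b c d : V} (h : N4 G v a b c d) : N4 G v b a c d := by
  unfold N4 at *; grind
theorem N4.swap'' {v a b c d : V} (h : N4 G v a b c d) : N4 G v a b d c := by
  unfold N4 at *; grind
theorem N4.mid {v a b c d : V} (h : N4 G v a b c d) : N4 G v a c b d := by
  unfold N4 at *; grind

/-- The two edges of `T` at `w` lead to non-adjacent vertices, if `w` has degree 4. -/
def Ok (G T : SimpleGraph V) (w : V) : Prop :=
  dg G w = 4 → ∀ x y, T.Adj w x → T.Adj w y → ¬ G.Adj x y

/-- `w` has degree 4 and some neighbour of `w` is adjacent to exactly one other neighbour. In a graph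
that is `Pure` this means that the link of `w` is a perfect matching. -/
def Two (G : SimpleGraph V) (w : V) : Prop :=
  ∃ a b c d, N4 G w a b c d ∧ G.Adj a b ∧ ¬ G.Adj a c ∧ ¬ G.Adj a d

theorem Ok.congr {T T' : SimpleGraph V} {w : V} (h : Ok G T w) (e : nb T' w = nb T w) :
    Ok G T' w := by
  intro h4 x y hx hy
  rw [← mem_nb, e, mem_nb] at hx hy
  exact h h4 x y hx hy

theorem Two.unique (hP : Pure G) {w x y z : V} (h : Two G w) (hx : G.Adj w x) (hy : G.Adj w y)
    (hz : G.Adj w z) (hxy : G.Adj x y) (hxz : G.Adj x z) : y = z := by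
  obtain ⟨a, b, c, d, hN, h1, h2, h3⟩ := h
  have p1 := hP.1 _ _ _ _ _ hN h1
  have p2 : ¬ G.Adj b d := fun h => h2 (hP.1 _ _ _ _ _ hN.mid.swap h)
  have p3 : ¬ G.Adj b c := fun h => h3 (hP.1 _ _ _ _ _ hN.swap''.mid.swap h)
  have e := hN.2.2.2.2.2.2
  have hx := (e x).1 hx; have hy := (e y).1 hy; have hz := (e z).1 hz
  have := hxy.ne; have := hxz.ne
  have := G.adj_comm a c; have := G.adj_comm a d; have := G.adj_comm b c; have := G.adj_comm b d
  grind

theorem nb_adj {T : SimpleGraph V} {v a b : V} (h : nb T v = {a, b}) (w : V) :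
    T.Adj v w ↔ w = a ∨ w = b := by rw [← mem_nb, h]; simp

theorem nb_sbd {T : SimpleGraph V} {a b c w : V} (h1 : w ≠ a) (h2 : w ≠ b) (h3 : w ≠ c) :
    nb (sbd T a b c) w = nb T w := by
  ext x; simp only [mem_nb, sbd_adj]; grind

/-- Rerouting at `v` through an unused edge makes a cycle through `u` and `v` pass `v` between
non-adjacent neighbours if the link of `v` is a matching, without spoiling this property at `u`. -/
theorem make_ok2 (hP : Pure G) {T : SimpleGraph V} {u v : V}
    (h2 : ConnSet G ((sp G).erase v)) (hT : IsCyc T) (hTG : T ≤ G) (hu : u ∈ sp T) (hv : v ∈ sp T)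
    (huv : u ≠ v) : ∃ T', IsCyc T' ∧ T' ≤ G ∧ u ∈ sp T' ∧ v ∈ sp T' ∧ (Two G v → Ok G T' v) ∧
      ((Two G u → Ok G T u) → Two G u → Ok G T' u) := by
  by_cases h : Two G v → Ok G T v
  · exact ⟨T, hT, hTG, hu, hv, h, id⟩
  push Not at h
  obtain ⟨hv2, hnok⟩ := h
  unfold Ok at hnok
  push Not at hnok
  obtain ⟨h4, x, y, hx, hy, hxy⟩ := hnok
  obtain ⟨c, d, hN⟩ := N4.exists_of_pair h4 (hTG hx) (hTG hy) hxy.ne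
  have e := hN.2.2.2.2.2.2
  have hvc : G.Adj v c := by rw [e]; simp
  have hnT : nb T v = {x, y} := by
    symm
    refine Finset.eq_of_subset_of_card_le ?_ ?_
    · intro w hw; simp at hw; rcases hw with rfl | rfl <;> simpa
    · rw [Finset.card_pair hxy.ne]; exact (hT.dg_two hv).le
  have hxc : ¬ G.Adj x c := fun h =>
    hN.2.2.2.1 (hv2.unique hP (hTG hx) (hTG hy) hvc hxy h)
  have hyc : ¬ G.Adj y c := fun h =>
    hN.2.1 (hv2.unique hP (hTG hy) (hTG hx) hvc hxy.symm h)
  have hcT : ¬ T.Adj v c := by rw [nb_adj hnT]; have := hN.2.1; have := hN.2.2.2.1; grind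
  have okv : ∀ T' : SimpleGraph V, (∀ w, T'.Adj v w → w = c ∨ T.Adj v w) → IsCyc T' → T'.Adj v c →
      Ok G T' v := by
    intro T' h hT' hc _ p q hp hq hpq
    have hp' := h p hp; have hq' := h q hq
    rw [nb_adj hnT] at hp' hq'
    have := hT'.dg_two (mem_sp_of hc)
    have h3 : ({p, q, c} : Finset V).card ≤ 2 := by
      rw [← this]
      refine Finset.card_le_card fun w hw => ?_
      simp at hw; rcases hw with rfl | rfl | rfl <;> simpa
    have hne := hpq.ne
    have := G.adj_comm p q; have := G.adj_comm y c; have := G.adj_comm x c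
    by_cases e1 : p = c
    · grind
    by_cases e2 : q = c
    · grind
    rw [Finset.card_eq_three.mpr ⟨p, q, c, hne, e1, e2, rfl⟩] at h3
    omega
  rcases reroute hT hTG (sp_mono hTG) hv hu huv hvc (mem_sp_of hvc.symm) hcT h2 with
    ⟨T', k1, k2, k3, k4, k5, k6, -⟩ | ⟨x₁, x₂, t₁, t₂, f, T₁, T₂, a1, a2, a3, b1, b2, b3, ev, eu, e1, e2,
      e3, e4, huf, -⟩
  · refine ⟨T', k1, k2, ?_, mem_sp_of k4, fun _ => okv T' k5 k1 k4, fun h hu2 => (h hu2).congr k6⟩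
    rw [mem_sp] at hu ⊢
    simp_rw [← mem_nb, k6]; simpa using hu
  · have Tc1 := nb_adj e1; have Tc2 := nb_adj e2; have Tu1 := nb_adj e3; have Tu2 := nb_adj e4
    have Tv := nb_adj ev; have Tu := nb_adj eu
    have g1 : Ok G T₁ v := okv T₁ (by intro w; rw [Tc1, Tv]; tauto) a1 (by simp [Tc1])
    have g2 : Ok G T₂ v := okv T₂ (by intro w; rw [Tc2, Tv]; tauto) b1 (by simp [Tc2])
    have m1 : u ∈ sp T₁ := mem_sp_of ((Tu1 f).2 (by simp))
    have m2 : u ∈ sp T₂ := mem_sp_of ((Tu2 f).2 (by simp))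
    have n1 : v ∈ sp T₁ := mem_sp_of ((Tc1 c).2 (by simp))
    have n2 : v ∈ sp T₂ := mem_sp_of ((Tc2 c).2 (by simp))
    by_cases hft : G.Adj f t₁
    · refine ⟨T₂, b1, b2, m2, n2, fun _ => g2, fun _ hu2 _ p q hp hq hpq => ?_⟩
      have hft2 : ¬ G.Adj f t₂ := by
        intro h
        have := hu2.unique hP (a2 ((Tu1 f).2 (by simp))) (a2 ((Tu1 t₁).2 (by simp)))
          (b2 ((Tu2 t₂).2 (by simp))) hft h
        have h5 := hT.dg_two hu
        rw [dg, eu, this] at h5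
        simp at h5
      rw [Tu2] at hp hq
      have := hpq.ne; have := G.adj_comm f t₂
      grind
    · refine ⟨T₁, a1, a2, m1, n1, fun _ => g1, fun _ hu2 _ p q hp hq hpq => ?_⟩
      rw [Tu1] at hp hq
      have := hpq.ne; have := G.adj_comm f t₁
      grind

/-- A shortest admissible cycle through `u` and `v` contains no end `c` of an unused edge at `v`, if the
link of `v` is not a matching, since rerouting along `vc` would give a shorter one. -/
theorem no_chord {T : SimpleGraph V} {u v c : V}
    (h2 : ConnSet G ((sp G).erase v)) (hT : IsCyc T) (hTG : T ≤ G) (hu : u ∈ sp T) (hv : v ∈ sp T)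
    (huv : u ≠ v) (hmin : ∀ T', IsCyc T' → T' ≤ G → u ∈ sp T' → v ∈ sp T' → (Two G u → Ok G T' u) →
      (Two G v → Ok G T' v) → (sp T).card ≤ (sp T').card)
    (hnv : ¬ Two G v) (hok : Two G u → Ok G T u) (hvc : G.Adj v c) (hcT : ¬ T.Adj v c)
    (hadj : ¬ G.Adj u v) : c ∉ sp T := by
  intro hc
  rcases reroute hT hTG (sp_mono hTG) hv hu huv hvc (mem_sp_of hvc.symm) hcT h2 with
    ⟨T', k1, k2, k3, k4, k5, k6, k7⟩ | ⟨x₁, x₂, t₁, t₂, f, T₁, T₂, -, -, -, -, -, -, -, -, -, -,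
      -, -, -, h⟩
  · have := hmin T' k1 k2 (by
      rw [mem_sp] at hu ⊢
      simp_rw [← mem_nb, k6]; simpa using hu) (mem_sp_of k4) (fun h => (hok h).congr k6)
      (fun h => absurd h hnv)
    have := k7 hc
    omega
  · exact hadj (h hc ▸ hvc).symm

/-- `T` passes `v` between the adjacent vertices `a, b`, and the link of `v` is the 4-cycle
`a b d c`. -/
def Bad4 (G T : SimpleGraph V) (v a b c d : V) : Prop :=
  N4 G v a b c d ∧ nb T v = {a, b} ∧ G.Adj a b ∧ G.Adj c d ∧ G.Adj a c ∧ G.Adj b d ∧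
    ¬ G.Adj a d ∧ ¬ G.Adj b c

theorem Bad4.swap {T : SimpleGraph V} {v a b c d : V} (h : Bad4 G T v a b c d) :
    Bad4 G T v b a d c := by
  obtain ⟨h1, h2, h3, h4, h5, h6, h7, h8⟩ := h
  exact ⟨h1.swap'.swap'', by rw [h2, Finset.pair_comm], h3.symm, h4.symm, h6, h5, h8, h7⟩

theorem exists_bad4 (hP : Pure G) {T : SimpleGraph V} {v : V} (hT : IsCyc T) (hTG : T ≤ G)
    (hv : v ∈ sp T) (hok : ¬ Ok G T v) (h2 : Two G v → Ok G T v) :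
    ∃ a b c d, Bad4 G T v a b c d := by
  have hn2 : ¬ Two G v := fun h => hok (h2 h)
  unfold Ok at hok
  push Not at hok
  obtain ⟨h4, x, y, hx, hy, hxy⟩ := hok
  obtain ⟨c, d, hN⟩ := N4.exists_of_pair h4 (hTG hx) (hTG hy) hxy.ne
  have hnT : nb T v = {x, y} := by
    symm
    refine Finset.eq_of_subset_of_card_le ?_ ?_
    · intro w hw; simp at hw; rcases hw with rfl | rfl <;> simpa
    · rw [Finset.card_pair hxy.ne]; exact (hT.dg_two hv).le
  have hcd := hP.1 _ _ _ _ _ hN hxy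
  by_cases hc : G.Adj x c
  · have hd := hP.2 _ _ _ _ _ hN hxy hc
    exact ⟨x, y, c, d, hN, hnT, hxy, hcd, hc, hP.1 _ _ _ _ _ hN.mid hc, hd,
      fun h => hd (hP.1 _ _ _ _ _ hN.swap''.mid.swap h)⟩
  · by_cases hd : G.Adj x d
    · exact ⟨x, y, d, c, hN.swap'', hnT, hxy, hcd.symm, hd, hP.1 _ _ _ _ _ hN.swap''.mid hd, hc,
        fun h => hc (hP.1 _ _ _ _ _ hN.mid.swap h)⟩
    · exact absurd ⟨x, y, c, d, hN, hxy, hc, hd⟩ hn2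

/-- Replacing the edge `va` by the detour `v c a` makes the cycle pass `v` between the non-adjacent
vertices `b` and `c`. -/
theorem Bad4.repair {T : SimpleGraph V} {v a b c d : V} (h : Bad4 G T v a b c d) (hT : IsCyc T)
    (hTG : T ≤ G) (hc : c ∉ sp T) : IsCyc (sbd T v a c) ∧ sbd T v a c ≤ G ∧ sp T ⊆ sp (sbd T v a c) ∧
      sp (sbd T v a c) ⊆ insert c (sp T) ∧ Ok G (sbd T v a c) v := by
  obtain ⟨hN, h2, h3, h4, h5, h6, h7, h8⟩ := h
  have hva : T.Adj v a := by rw [nb_adj h2]; simp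
  have hd := dg_sbd hva hc
  have e := hN.2.2.2.2.2.2
  have hvc := (e c).2 (by simp)
  refine ⟨hT.sbd hva hc, ?_, ?_, ?_, ?_⟩
  · refine sup_le (sdiff_le.trans hTG) (sup_le (edge_le' hvc) (edge_le' h5.symm))
  · intro w hw
    have := hd w; have := dg_eq_zero (G := T) (v := w)
    have := dg_eq_zero (G := PlanarCDC.sbd T v a c) (v := w); grind
  · intro w hw
    have := hd w; have := dg_eq_zero (G := T) (v := w)
    have := dg_eq_zero (G := PlanarCDC.sbd T v a c) (v := w); grind
  · intro _ p q hp hq hpq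
    rw [sbd_adj, nb_adj h2] at hp hq
    have := hN.1; have := hva.ne; have := hvc.ne; have := hpq.ne; have := G.adj_comm b c
    grind

/-- Two non-adjacent vertices lie on a common cycle that passes each of them, if of
degree 4, between non-adjacent neighbours. A shortest cycle through both that already does so at
the vertices whose link is a matching has no chord at a bad vertex, and is repaired by detours
through the unused neighbours. -/
theorem exists_ok (hP : Pure G) (hB : ConnSet G (sp G)) (h2 : ∀ z ∈ sp G, ConnSet G ((sp G).erase z))
    (h3 : 3 ≤ (sp G).card) {u v : V} (hu : u ∈ sp G) (hv : v ∈ sp G) (huv : u ≠ v)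
    (hadj : ¬ G.Adj u v) :
    ∃ T, IsCyc T ∧ T ≤ G ∧ u ∈ sp T ∧ v ∈ sp T ∧ Ok G T u ∧ Ok G T v := by
  obtain ⟨T₀, hT₀⟩ : ∃ T, IsCyc T ∧ T ≤ G ∧ u ∈ sp T ∧ v ∈ sp T ∧ (Two G u → Ok G T u) ∧
      (Two G v → Ok G T v) := by
    obtain ⟨T, a1, a2, a3, a4, a5⟩ := exists_cyc_through hB h2 h3 hu hv huv
    obtain ⟨T', b1, b2, b3, b4, b5, b6⟩ := make_ok2 hP (h2 v hv) a1 a2 a4 a5 huv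
    obtain ⟨T'', c1, c2, c3, c4, c5, c6⟩ := make_ok2 hP (h2 u hu) b1 b2 b4 b3 huv.symm
    exact ⟨T'', c1, c2, c4, c3, c5, c6 b5⟩
  obtain ⟨T, ⟨hT, hTG, hu', hv', oku, okv⟩, hmin⟩ := exists_minimalFor_of_wellFoundedLT
    (fun T : SimpleGraph V => IsCyc T ∧ T ≤ G ∧ u ∈ sp T ∧ v ∈ sp T ∧ (Two G u → Ok G T u) ∧
      (Two G v → Ok G T v)) (fun T : SimpleGraph V => (sp T).card) ⟨T₀, hT₀⟩
  have hmin1 : ∀ T', IsCyc T' → T' ≤ G → u ∈ sp T' → v ∈ sp T' → (Two G u → Ok G T' u) →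
      (Two G v → Ok G T' v) → (sp T).card ≤ (sp T').card := by
    intro T' b1 b2 b3 b4 b5 b6
    by_contra hlt
    exact hlt (hmin ⟨b1, b2, b3, b4, b5, b6⟩ (by simp only; omega))
  have hmin2 : ∀ T', IsCyc T' → T' ≤ G → v ∈ sp T' → u ∈ sp T' → (Two G v → Ok G T' v) →
      (Two G u → Ok G T' u) → (sp T).card ≤ (sp T').card :=
    fun T' b1 b2 b3 b4 b5 b6 => hmin1 T' b1 b2 b4 b3 b6 b5
  have hadj' : ¬ G.Adj v u := fun h => hadj h.symm
  -- the unused neighbours of a bad vertex lie off `T`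
  have offv : ∀ a b c d, Bad4 G T v a b c d → c ∉ sp T := by
    intro a b c d h
    have e := h.1.2.2.2.2.2.2
    refine no_chord (h2 v hv) hT hTG hu' hv' huv hmin1 ?_ oku ((e c).2 (by simp)) ?_ hadj
    · intro h2; exact okv h2 h.1.dg _ _ ((nb_adj h.2.1 a).2 (by simp))
        ((nb_adj h.2.1 b).2 (by simp)) h.2.2.1
    · rw [nb_adj h.2.1]; obtain ⟨h1, h2, h3, h4, -⟩ := h.1; grind
  have offu : ∀ a b c d, Bad4 G T u a b c d → c ∉ sp T := by
    intro a b c d h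
    have e := h.1.2.2.2.2.2.2
    refine no_chord (h2 u hu) hT hTG hv' hu' huv.symm hmin2 ?_ okv ((e c).2 (by simp)) ?_ hadj'
    · intro h2; exact oku h2 h.1.dg _ _ ((nb_adj h.2.1 a).2 (by simp))
        ((nb_adj h.2.1 b).2 (by simp)) h.2.2.1
    · rw [nb_adj h.2.1]; obtain ⟨h1, h2, h3, h4, -⟩ := h.1; grind
  -- a repair at one vertex does not change the cycle at the other
  have keep : ∀ u v (T : SimpleGraph V) a b c d, u ≠ v → ¬ G.Adj u v → u ∈ sp T → c ∉ sp T →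
      Bad4 G T v a b c d → nb (sbd T v a c) u = nb T u := by
    intro u v T a b c d huv hadj hu hc h
    refine nb_sbd huv ?_ ?_
    · rintro rfl; exact hadj ((h.1.2.2.2.2.2.2 u).2 (by simp)).symm
    · rintro rfl; exact hc hu
  by_cases ov : Ok G T v
  · by_cases ou : Ok G T u
    · exact ⟨T, hT, hTG, hu', hv', ou, ov⟩
    · obtain ⟨a, b, c, d, hb⟩ := exists_bad4 hP hT hTG hu' ou oku
      have hc := offu _ _ _ _ hb
      obtain ⟨r1, r2, r3, r4, r5⟩ := hb.repair hT hTG hc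
      exact ⟨_, r1, r2, r3 hu', r3 hv', r5, ov.congr (keep _ _ _ _ _ _ _ huv.symm hadj' hv' hc hb)⟩
  · obtain ⟨a, b, c, d, hb⟩ := exists_bad4 hP hT hTG hv' ov okv
    have hc := offv _ _ _ _ hb
    obtain ⟨r1, r2, r3, r4, r5⟩ := hb.repair hT hTG hc
    have ek := keep _ _ _ _ _ _ _ huv hadj hu' hc hb
    by_cases ou : Ok G T u
    · exact ⟨_, r1, r2, r3 hu', r3 hv', ou.congr ek, r5⟩
    · have : ∃ a' b' c' d', Bad4 G T u a' b' c' d' ∧ c' ≠ c := by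
        obtain ⟨a', b', c', d', hb'⟩ := exists_bad4 hP hT hTG hu' ou oku
        by_cases hcc : c' = c
        · exact ⟨_, _, _, _, hb'.swap, by rw [← hcc]; exact hb'.1.2.2.2.2.2.1.symm⟩
        · exact ⟨_, _, _, _, hb', hcc⟩
      obtain ⟨a', b', c', d', hb', hcc⟩ := this
      have hc' := offu _ _ _ _ hb'
      have hb'' : Bad4 G (sbd T v a c) u a' b' c' d' := ⟨hb'.1, ek.trans hb'.2.1, hb'.2.2⟩
      have hc'' : c' ∉ sp (sbd T v a c) := fun h => by have := r4 h; grind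
      obtain ⟨q1, q2, q3, q4, q5⟩ := hb''.repair r1 r2 hc''
      exact ⟨_, q1, q2, q3 (r3 hu'), q3 (r3 hv'), q5,
        r5.congr (keep _ _ _ _ _ _ _ huv.symm hadj' (r3 hv') hc'' hb'')⟩

end Pairs

/-! ### Proof of Hajós' bound -/

section HajosMain
variable {G : SimpleGraph V}

theorem supp_of_two {T : SimpleGraph V} {v : V} (hT : IsCyc T) (hTG : T ≤ G) (hv : v ∈ sp T)
    (h : dg G v = 2) : v ∉ sp (G \ T) := by
  rw [← dg_eq_zero]
  have := dg_sdiff hTG v; have := hT.dg_two hv; omega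

/-- A cycle that passes a degree-4 vertex between non-adjacent neighbours leaves two non-adjacent
neighbours, by purity. -/
theorem supp_of_ok (hP : Pure G) {T : SimpleGraph V} {v : V} (hT : IsCyc T) (hTG : T ≤ G)
    (hv : v ∈ sp T) (h : dg G v = 4) (hok : Ok G T v) :
    ∃ x y, nb (G \ T) v = {x, y} ∧ x ≠ y ∧ ¬ G.Adj x y := by
  obtain ⟨a, b, hab, hnb⟩ := hT.nb_pair hv
  have ha := (nb_adj hnb a).2 (by simp); have hb := (nb_adj hnb b).2 (by simp)
  obtain ⟨c, d, hN⟩ := N4.exists_of_pair h (hTG ha) (hTG hb) hab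
  exact ⟨c, d, hN.nb_sdiff hnb, hN.2.2.2.2.2.1, fun hcd => hok h a b ha hb (hP.1 _ _ _ _ _ hN.swap hcd)⟩

theorem Supp.of_pair {T : SimpleGraph V} {v : V}
    (h : ∃ x y, nb (G \ T) v = {x, y} ∧ x ≠ y ∧ ¬ G.Adj x y) : Supp (G \ T) v := by
  obtain ⟨x, y, h1, h2, h3⟩ := h
  exact Or.inr ⟨x, y, h1, h2, fun h => h3 (by rw [sdiff_adj] at h; exact h.1)⟩

theorem bd_deg2 (hp : IsPlanar G) (hE : ∀ v, Even (dg G v)) (ih : HajosBelow V (∑ v, dg G v))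
    {v x y : V} (hnb : nb G v = {x, y}) (hxy : x ≠ y) (hadj : ¬ G.Adj x y) :
    Bd G ((sp G).card - 1) := by
  have hx := (nb_adj hnb x).2 (by simp); have hy := (nb_adj hnb y).2 (by simp)
  have h1 := sum_spr hx hy hxy hadj
  obtain ⟨L, hL, cL⟩ := ih (spr G v x y) (planar_spr hp hnb hxy) (even_spr hE hx hy hxy hadj)
    (by omega)
  obtain ⟨L', hL', cL'⟩ := Dec.unspr hnb hxy hadj hL
  have := Finset.card_le_card ((sp_spr hnb hxy hadj).trans (Finset.erase_subset _ _))
  exact ⟨L', hL', by omega⟩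

/-- Splitting off the non-adjacent pair `a`, `b` at `v` is reversible when the other pair is
adjacent. -/
theorem bd_mixed (hp : IsPlanar G) (hE : ∀ v, Even (dg G v)) (ih : HajosBelow V (∑ v, dg G v))
    {v a b c d : V} (hN : N4 G v a b c d) (hab : ¬ G.Adj a b) (hcd : G.Adj c d) :
    Bd G ((sp G).card - 1) := by
  obtain ⟨n1, n2, n3, n4, n5, n6, e⟩ := hN
  have hx := (e a).2 (by simp); have hy := (e b).2 (by simp)
  have h1 := sum_spr hx hy n1 hab
  obtain ⟨L, hL, cL⟩ := ih (spr G v a b) (planar_spr_mixed hp e n2 n3 n4 n5 hcd)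
    (even_spr hE hx hy n1 hab) (by omega)
  obtain ⟨L', hL', cL'⟩ := Dec.unspr_mixed e n1 n2 n3 n4 n5 n6 hab hcd hL
  have : sp (spr G v a b) ⊆ sp G := by
    intro w hw
    have h1 := dg_spr hx hy n1 hab w
    have h0 := dg_eq_zero (G := G) (v := w)
    have h0' := dg_eq_zero (G := spr G v a b) (v := w)
    grind
  have := Finset.card_le_card this
  exact ⟨L', hL', by omega⟩

theorem cyc4 {a u b v : V} (h1 : a ≠ u) (h2 : a ≠ b) (h3 : a ≠ v) (h4 : u ≠ b) (h5 : u ≠ v)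
    (h6 : b ≠ v) : IsCyc (edge a u ⊔ edge u b ⊔ (edge a v ⊔ edge v b)) := by
  have p1 := ((Pth.single h4).cons (s := a) (by simp [h1, h2])).cast' (B := edge a u ⊔ edge u b)
    (by rw [sup_comm]) rfl
  have p2 := ((Pth.single h6.symm).cons (s := a) (by simp [h2, h3])).cast' (B := edge a v ⊔ edge v b)
    (by rw [sup_comm]) rfl
  refine isCyc_glue p1 p2 h2 ?_ (by grind)
  rw [disjoint_left]
  intro x y
  simp only [sup_adj, edge_adj]
  grind

theorem cyc6 {a u b d v c : V} (h1 : a ≠ u) (h2 : a ≠ b) (h3 : a ≠ v) (h4 : u ≠ b) (h5 : u ≠ v)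
    (h6 : b ≠ v) (h7 : c ≠ a) (h8 : c ≠ u) (h9 : c ≠ b) (h10 : c ≠ v) (h11 : d ≠ a) (h12 : d ≠ u)
    (h13 : d ≠ b) (h14 : d ≠ v) (h15 : c ≠ d) :
    IsCyc (edge a u ⊔ edge u b ⊔ (edge d b ⊔ edge v d ⊔ edge c v ⊔ edge a c)) := by
  have p1 := ((Pth.single h4).cons (s := a) (by simp [h1, h2])).cast' (B := edge a u ⊔ edge u b)
    (by rw [sup_comm]) rfl
  have p2 := (((Pth.single h13).cons (s := v) (by simp [h14.symm, h6.symm])).cons (s := c)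
    (by simp [h9, h10, h15])).cons (s := a) (by simp [h2, h3, h7.symm, h11.symm])
  refine isCyc_glue p1 p2 h2 ?_ (by simp; grind)
  rw [disjoint_left]
  intro x y
  simp only [sup_adj, edge_adj]
  clear p1 p2
  rintro (h | h) <;> grind

theorem no_three_twins (hp : IsPlanar G) {u v w : V} (huv : u ≠ v) (huw : u ≠ w) (hvw : v ≠ w)
    (h1 : nb G u = nb G v) (h2 : nb G u = nb G w) (h3 : dg G u = 4) : False := by
  obtain ⟨a, b, c, d, ab, ac, ad, bc, bd, cd, e⟩ := exists_N4 h3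
  have eu := e
  have ev : ∀ x, G.Adj v x ↔ x = a ∨ x = b ∨ x = c ∨ x = d := by
    intro x; rw [← mem_nb, ← h1, mem_nb, e]
  have ew : ∀ x, G.Adj w x ↔ x = a ∨ x = b ∨ x = c ∨ x = d := by
    intro x; rw [← mem_nb, ← h2, mem_nb, e]
  have sing : ∀ a b, G.Adj a b → Tch G {a} {b} := fun a b h => ⟨a, by simp, b, by simp, h⟩
  have l : ∀ y, y = a ∨ y = b ∨ y = c ∨ y = d → y ≠ u ∧ y ≠ v ∧ y ≠ w := fun y hy =>
    ⟨((eu y).2 hy).ne.symm, ((ev y).2 hy).ne.symm, ((ew y).2 hy).ne.symm⟩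
  have la := l a (by simp); have lb := l b (by simp); have lc := l c (by simp)
  refine not_K33 hp (ConnSet.singleton u) (ConnSet.singleton v) (ConnSet.singleton w)
    (ConnSet.singleton a) (ConnSet.singleton b) (ConnSet.singleton c) ?_
    (sing _ _ (by simp [eu])) (sing _ _ (by simp [eu])) (sing _ _ (by simp [eu]))
    (sing _ _ (by simp [ev])) (sing _ _ (by simp [ev])) (sing _ _ (by simp [ev]))
    (sing _ _ (by simp [ew])) (sing _ _ (by simp [ew])) (sing _ _ (by simp [ew]))
  intro x
  simp only [Finset.mem_singleton]
  clear e eu ev ew l sing h1 h2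
  obtain ⟨a1, a2, a3⟩ := la; obtain ⟨b1, b2, b3⟩ := lb; obtain ⟨c1, c2, c3⟩ := lc
  refine ⟨?_, ?_, ?_, ?_, ?_⟩ <;> grind

/-- Among at least six vertices of degree 4 there are two non-adjacent ones with different
neighbourhoods, or with a common neighbourhood around which a 6-cycle can be drawn. -/
theorem choose_pair (hp : IsPlanar G) (hP : Pure G) {S : Finset V} (hS : ∀ v ∈ S, dg G v = 4)
    (h6 : 6 ≤ S.card) : ∃ u ∈ S, ∃ v ∈ S, u ≠ v ∧ ¬ G.Adj u v ∧ (nb G u ≠ nb G v ∨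
      nb G u = nb G v ∧ ∃ a b c d, N4 G u a b c d ∧ G.Adj a c ∧ G.Adj b d ∧ ¬ G.Adj a b ∧
        ¬ G.Adj c d) := by
  by_contra! hcon
  obtain ⟨u, hu⟩ : S.Nonempty := Finset.card_pos.mp (by omega)
  obtain ⟨v, hv⟩ : ((S.erase u) \ nb G u).Nonempty := by
    rw [← Finset.card_pos]
    have h1 := Finset.le_card_sdiff (nb G u) (S.erase u)
    have h2 : (nb G u).card = 4 := hS u hu
    rw [Finset.card_erase_of_mem hu] at h1
    omega
  simp at hv
  obtain ⟨⟨hvu, hvS⟩, hnadj⟩ := hv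
  obtain ⟨htw, hno⟩ := hcon u hu v hvS (Ne.symm hvu) hnadj
  have hsub : (S.erase u).erase v ⊆ nb G u := by
    intro w hw
    simp at hw
    simp
    by_contra hc
    obtain ⟨e, -⟩ := hcon u hu w hw.2.2 (Ne.symm hw.2.1) hc
    exact no_three_twins hp (Ne.symm hvu) (Ne.symm hw.2.1) (Ne.symm hw.1) htw e (hS u hu)
  have heq : (S.erase u).erase v = nb G u := by
    refine Finset.eq_of_subset_of_card_le hsub ?_
    have h2 : (nb G u).card = 4 := hS u hu
    rw [Finset.card_erase_of_mem (by simp [hvS, hvu]), Finset.card_erase_of_mem hu]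
    omega
  have hNS : ∀ w, G.Adj u w → w ∈ S := by
    intro w hw; rw [← mem_nb, ← heq] at hw; grind
  have lab : ∀ x y z t, N4 G u x y z t → ¬ G.Adj x y := by
    intro x y z t hN hxy
    have hzt := hP.1 _ _ _ _ _ hN hxy
    by_cases hxz : G.Adj x z
    · have hxt := hP.2 _ _ _ _ _ hN hxy hxz
      exact hxt (hP.1 _ _ _ _ _ hN.swap''.mid.swap
        (hno htw x t y z hN.swap''.mid hxy hzt.symm hxt))
    · exact hxz (hP.1 _ _ _ _ _ hN.mid.swap (hno htw x z y t hN.mid hxy hzt hxz))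
  obtain ⟨a, b, c, d, hN⟩ := exists_N4 (hS u hu)
  have e := hN.2.2.2.2.2.2
  have ha := hNS a ((e a).2 (by simp)); have hb := hNS b ((e b).2 (by simp))
  have hc := hNS c ((e c).2 (by simp))
  obtain ⟨h1, -⟩ := hcon a ha b hb hN.1 (lab _ _ _ _ hN)
  obtain ⟨h2, -⟩ := hcon a ha c hc hN.2.1 (lab _ _ _ _ hN.mid)
  exact no_three_twins hp hN.1 hN.2.1 hN.2.2.2.1 h1 h2 (hS a ha)

/-- The induction step for Hajós' bound: in a minimal counterexample the edge bound provides a vertex of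
degree 2 and another of degree at most 4, or six vertices of degree 4, and two of them become
suppressible after the removal of a suitable cycle. -/
theorem hajos_step (hp : IsPlanar G) (hE : ∀ v, Even (dg G v)) (ih : HajosBelow V (∑ v, dg G v)) :
    Bd G ((sp G).card - 1) := by
  by_cases h0 : G = ⊥
  · subst h0; exact ⟨0, Dec.nil, by simp⟩
  rcases bd_or_conn hp hE ih h0 with h | ⟨hB, h2⟩
  · exact h
  have h3 := card_sp_ge hE h0
  by_contra hbd
  have hd2 : ∀ v x y, nb G v = {x, y} → x ≠ y → G.Adj x y := by
    intro v x y hnb hxy; by_contra hc; exact hbd (bd_deg2 hp hE ih hnb hxy hc)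
  have hP : Pure G := by
    have h1 : ∀ v a b c d, N4 G v a b c d → G.Adj a b → G.Adj c d := by
      intro v a b c d hN hab; by_contra hc; exact hbd (bd_mixed hp hE ih hN.swap hc hab)
    refine ⟨h1, fun v a b c d hN hab hac had => ?_⟩
    have hcd := h1 _ _ _ _ _ hN hab
    have hbd' := h1 _ _ _ _ _ hN.mid hac
    have hbc := h1 _ _ _ _ _ hN.swap''.mid had
    have e := hN.2.2.2.2.2.2
    have sing : ∀ a b, G.Adj a b → Tch G {a} {b} := fun a b h => ⟨a, by simp, b, by simp, h⟩
    have l : ∀ y, y = a ∨ y = b ∨ y = c ∨ y = d → v ≠ y := fun y hy => ((e y).2 hy).ne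
    have la := l a (by simp); have lb := l b (by simp); have lc := l c (by simp)
    have ld := l d (by simp)
    obtain ⟨n1, n2, n3, n4, n5, n6, -⟩ := hN
    refine not_K5 hp (ConnSet.singleton v) (ConnSet.singleton a) (ConnSet.singleton b)
      (ConnSet.singleton c) (ConnSet.singleton d) ?_ (sing _ _ ((e a).2 (by simp)))
      (sing _ _ ((e b).2 (by simp))) (sing _ _ ((e c).2 (by simp))) (sing _ _ ((e d).2 (by simp)))
      (sing _ _ hab) (sing _ _ hac) (sing _ _ had) (sing _ _ hbc) (sing _ _ hbd') (sing _ _ hcd)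
    intro x; simp only [Finset.mem_singleton]
    clear l e sing h1 ih hd2 h2 hB
    grind
  have hsum := edge_bound hp (Finset.Subset.refl (sp G)) h3
  have hdg : ∀ v ∈ sp G, dg G v ≠ 0 := fun v hv h => dg_eq_zero.mp h hv
  have hmem : ∀ v, dg G v ≠ 0 → v ∈ sp G := fun v h => by
    by_contra hc; exact h (dg_eq_zero.mpr hc)
  by_cases hz : ∃ z, dg G z = 2
  · obtain ⟨z, hz⟩ := hz
    have hzG := hmem z (by omega)
    obtain ⟨v, hvG, hvz, hv4⟩ : ∃ v ∈ sp G, v ≠ z ∧ dg G v ≤ 4 := by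
      by_contra! hc
      rw [← Finset.add_sum_erase _ _ hzG] at hsum
      have := Finset.card_nsmul_le_sum ((sp G).erase z) (fun v => dg G v) 6 (fun v hv => by
        have := hc v (by grind) (by grind); have := (hE v).two_dvd; omega)
      rw [smul_eq_mul, Finset.card_erase_of_mem hzG] at this
      omega
    have hv24 : dg G v = 2 ∨ dg G v = 4 := by
      have := (hE v).two_dvd; have := hdg v hvG; omega
    rcases hv24 with hv2 | hv4
    · obtain ⟨T, hT, hTG, -, hzT, hvT⟩ := exists_cyc_through hB h2 h3 hzG hvG (Ne.symm hvz)
      have hz0 := supp_of_two hT hTG hzT hz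
      exact hbd (bd_red hp hE ih hT hTG hzG hvG (Or.inl hz0) (Or.inl (supp_of_two hT hTG hvT hv2))
        (Ne.symm hvz) (fun h => hz0 (mem_sp_of h)) fun _ => hz0)
    · by_cases hzv : G.Adj z v
      -- a cycle through `z` and a third neighbour `x` of `v` is not the triangle `z v t`, hence leaves
      -- `v` along an edge to a vertex not adjacent to `z`
      · obtain ⟨p, q, hpq, hnb⟩ := Finset.card_eq_two.mp hz
        have : ∃ t, nb G z = {v, t} ∧ v ≠ t := by
          have := (nb_adj hnb v).1 hzv
          rcases this with rfl | rfl
          · exact ⟨q, hnb, hpq⟩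
          · exact ⟨p, by rw [hnb, Finset.pair_comm], hpq.symm⟩
        obtain ⟨t, hnb, hvt⟩ := this
        have hzn := nb_adj hnb
        have hadj := hd2 _ _ _ hnb hvt
        have hzt : G.Adj z t := by simp [hzn]
        obtain ⟨x, y, hN⟩ := N4.exists_of_pair hv4 hzv.symm hadj hzt.ne
        have e := hN.2.2.2.2.2.2
        have hx := (e x).2 (by simp)
        have hzx : z ≠ x := hN.2.1
        obtain ⟨T, hT, hTG, -, hzT, hxT⟩ := exists_cyc_through hB h2 h3 hzG (mem_sp_of hx.symm) hzx
        have nzT : nb T z = {v, t} := by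
          rw [← hnb]
          refine Finset.eq_of_subset_of_card_le (fun w => by simpa using fun h => hTG h) ?_
          change dg G z ≤ dg T z
          rw [hz, hT.dg_two hzT]
        have hvT : v ∈ sp T := mem_sp_of ((nb_adj nzT v).2 (by simp)).symm
        have hvt' : ¬ T.Adj v t := by
          intro hvt'
          have := isCyc_eq_of_le hT (C := rs T {z, v, t}) ?_ ?_ (rs_le _ _)
          · rw [← this] at hxT
            obtain ⟨w, hw⟩ := mem_sp.mp hxT
            rw [rs_adj] at hw
            have := hw.2.1
            have := hx.ne
            have := hN.2.2.2.1
            simp at this; grind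
          · refine ne_bot_iff_exists_adj.mpr ⟨v, t, ?_⟩
            simp [hvt']
          · have t1 := (nb_adj nzT v).2 (by simp)
            have t2 := (nb_adj nzT t).2 (by simp)
            have n1 := t1.ne; have n2 := t2.ne
            intro w
            by_cases hw : w = z ∨ w = v ∨ w = t
            · right
              have s1 := t1.symm; have s2 := t2.symm; have s3 := hvt'.symm
              rcases hw with rfl | rfl | rfl
              · have : nb (rs T {w, v, t}) w = {v, t} := by
                  ext s; simp only [mem_nb, rs_adj, Finset.mem_insert, Finset.mem_singleton]
                  have := @SimpleGraph.Adj.ne _ T w s; grind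
                rw [dg, this, Finset.card_pair hvt]
              · have : nb (rs T {z, w, t}) w = {z, t} := by
                  ext s; simp only [mem_nb, rs_adj, Finset.mem_insert, Finset.mem_singleton]
                  have := @SimpleGraph.Adj.ne _ T w s; grind
                rw [dg, this, Finset.card_pair n2]
              · have : nb (rs T {z, v, w}) w = {z, v} := by
                  ext s; simp only [mem_nb, rs_adj, Finset.mem_insert, Finset.mem_singleton]
                  have := @SimpleGraph.Adj.ne _ T w s; grind
                rw [dg, this, Finset.card_pair n1]
            · left; rw [dg_eq_zero]; simp; grind
        have hok : Ok G T v := by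
          intro _ p q hp hq hpq
          have hzp : ∀ r, T.Adj v r → ¬ G.Adj z r := by
            intro r hr hzr
            rw [hzn] at hzr
            rcases hzr with rfl | rfl
            exacts [hr.ne rfl, hvt' hr]
          have hvz' : T.Adj v z := ((nb_adj nzT v).2 (by simp)).symm
          have h3 : ({p, q, z} : Finset V).card ≤ 2 := by
            rw [← hT.dg_two hvT]
            refine Finset.card_le_card fun w hw => ?_
            simp at hw; rcases hw with rfl | rfl | rfl <;> simpa
          by_cases e1 : p = z
          · exact hzp q hq (e1 ▸ hpq)
          by_cases e2 : q = z
          · exact hzp p hp (e2 ▸ hpq).symm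
          rw [Finset.card_eq_three.mpr ⟨p, q, z, hpq.ne, e1, e2, rfl⟩] at h3
          omega
        have hz0 := supp_of_two hT hTG hzT hz
        exact hbd (bd_red hp hE ih hT hTG hzG hvG (Or.inl hz0)
          (Supp.of_pair (supp_of_ok hP hT hTG hvT hv4 hok))
          (Ne.symm hvz) (fun h => hz0 (mem_sp_of h)) fun _ => hz0)
      · obtain ⟨T, hT, hTG, hzT, hvT, -, hok⟩ := exists_ok hP hB h2 h3 hzG hvG (Ne.symm hvz) hzv
        have hz0 := supp_of_two hT hTG hzT hz
        exact hbd (bd_red hp hE ih hT hTG hzG hvG (Or.inl hz0)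
          (Supp.of_pair (supp_of_ok hP hT hTG hvT hv4 hok))
          (Ne.symm hvz) (fun h => hz0 (mem_sp_of h)) fun _ => hz0)
  · push Not at hz
    have h6 : 6 ≤ ((sp G).filter fun v => dg G v = 4).card := by
      have : ∑ v ∈ sp G, 6 ≤ ∑ v ∈ sp G, (dg G v + if dg G v = 4 then 2 else 0) := by
        refine Finset.sum_le_sum fun v hv => ?_
        have := (hE v).two_dvd; have := hdg v hv; have := hz v
        split_ifs <;> omega
      rw [Finset.sum_add_distrib, ← Finset.sum_filter] at this
      simp only [Finset.sum_const, smul_eq_mul] at this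
      omega
    obtain ⟨u, hu, v, hv, huv, hadj, hcase⟩ := choose_pair hp hP (fun v hv => (Finset.mem_filter.mp hv).2) h6
    obtain ⟨huG, hu4⟩ := Finset.mem_filter.mp hu
    obtain ⟨hvG, hv4⟩ := Finset.mem_filter.mp hv
    have hadj' : ∀ T : SimpleGraph V, ¬ (G \ T).Adj u v := fun T h => hadj (by rw [sdiff_adj] at h; exact h.1)
    rcases hcase with hne | ⟨heq, a, b, c, d, hN, hac, hbd', hab, hcd⟩
    · obtain ⟨T, hT, hTG, huT, hvT, hoku, hokv⟩ := exists_ok hP hB h2 h3 huG hvG huv hadj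
      have su := supp_of_ok hP hT hTG huT hu4 hoku
      have sv := supp_of_ok hP hT hTG hvT hv4 hokv
      by_cases hnn : nb (G \ T) u = nb (G \ T) v
      -- both suppressions would create the edge `ab`; the 4-cycle `a u b v` is removed instead
      · obtain ⟨a, b, e1, hab, hnab⟩ := su
        have e2 := hnn.symm.trans e1
        have f1 : ∀ w, w = a ∨ w = b → G.Adj u w := fun w hw => by
          have := (nb_adj e1 w).2 hw; rw [sdiff_adj] at this; exact this.1
        have f2 : ∀ w, w = a ∨ w = b → G.Adj v w := fun w hw => by
          have := (nb_adj e2 w).2 hw; rw [sdiff_adj] at this; exact this.1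
        have ua := f1 a (by simp); have ub := f1 b (by simp)
        have va := f2 a (by simp); have vb := f2 b (by simp)
        obtain ⟨c, d, hN⟩ := N4.exists_of_pair hu4 ua ub hab
        obtain ⟨c', d', hN'⟩ := N4.exists_of_pair hv4 va vb hab
        have hC := cyc4 ua.ne.symm hab va.ne.symm ub.ne huv vb.ne.symm
        have nC1 : nb (edge a u ⊔ edge u b ⊔ (edge a v ⊔ edge v b)) u = {a, b} := by
          ext w; simp only [mem_nb, sup_adj, edge_adj, Finset.mem_insert, Finset.mem_singleton]
          have := ua.ne; have := ub.ne; grind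
        have nC2 : nb (edge a u ⊔ edge u b ⊔ (edge a v ⊔ edge v b)) v = {a, b} := by
          ext w; simp only [mem_nb, sup_adj, edge_adj, Finset.mem_insert, Finset.mem_singleton]
          have := va.ne; have := vb.ne; grind
        have r1 := hN.nb_sdiff nC1
        have r2 := hN'.nb_sdiff nC2
        refine hbd (bd_red hp hE ih hC (sup_le (sup_le (edge_le' ua.symm) (edge_le' ub))
          (sup_le (edge_le' va.symm) (edge_le' vb))) huG hvG (Supp.of_pair ⟨c, d, r1, hN.2.2.2.2.2.1,
            fun h => hnab (hP.1 _ _ _ _ _ hN.swap h)⟩) (Supp.of_pair ⟨c', d', r2, hN'.2.2.2.2.2.1,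
            fun h => hnab (hP.1 _ _ _ _ _ hN'.swap h)⟩) huv (hadj' _) fun h => absurd ?_ hne)
        rw [r1, r2] at h
        ext w
        have : w ∈ ({c, d} : Finset V) ↔ w ∈ ({c', d'} : Finset V) := by rw [h]
        simp only [Finset.mem_insert, Finset.mem_singleton] at this
        simp only [mem_nb, hN.2.2.2.2.2.2 w, hN'.2.2.2.2.2.2 w, this]
      · exact hbd (bd_red hp hE ih hT hTG huG hvG (Supp.of_pair su) (Supp.of_pair sv) huv (hadj' T)
          fun h => absurd h hnn)
    · have e := hN.2.2.2.2.2.2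
      have ev : ∀ w, G.Adj v w ↔ w = a ∨ w = b ∨ w = c ∨ w = d := by
        intro w; rw [← mem_nb, ← heq, mem_nb, e]
      have hN' : N4 G v c d a b := by
        obtain ⟨n1, n2, n3, n4, n5, n6, -⟩ := hN.swap
        exact ⟨n1, n2, n3, n4, n5, n6, fun w => by rw [ev]; tauto⟩
      have ua := (e a).2 (by simp); have ub := (e b).2 (by simp)
      have uc := (e c).2 (by simp); have ud := (e d).2 (by simp)
      have va := (ev a).2 (by simp); have vb := (ev b).2 (by simp)
      have vc := (ev c).2 (by simp); have vd := (ev d).2 (by simp)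
      obtain ⟨n1, n2, n3, n4, n5, n6, -⟩ := id hN
      have hC := cyc6 ua.ne.symm n1 va.ne.symm ub.ne huv vb.ne.symm n2.symm uc.ne.symm n4.symm
        vc.ne.symm n3.symm ud.ne.symm n5.symm vd.ne.symm n6
      have m1 := ua.ne; have m2 := ub.ne; have m3 := vc.ne; have m4 := vd.ne; have m5 := uc.ne
      have m6 := ud.ne; have m7 := va.ne; have m8 := vb.ne
      have nC1 : nb (edge a u ⊔ edge u b ⊔ (edge d b ⊔ edge v d ⊔ edge c v ⊔ edge a c)) u = {a, b} := by
        ext w; simp only [mem_nb, sup_adj, edge_adj, Finset.mem_insert, Finset.mem_singleton]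
        clear * - n1 n2 n3 n4 n5 n6 m1 m2 m3 m4 m5 m6 m7 m8 huv; grind
      have nC2 : nb (edge a u ⊔ edge u b ⊔ (edge d b ⊔ edge v d ⊔ edge c v ⊔ edge a c)) v = {c, d} := by
        ext w; simp only [mem_nb, sup_adj, edge_adj, Finset.mem_insert, Finset.mem_singleton]
        clear * - n1 n2 n3 n4 n5 n6 m1 m2 m3 m4 m5 m6 m7 m8 huv; grind
      have r1 := hN.nb_sdiff nC1
      have r2 := hN'.nb_sdiff nC2
      refine hbd (bd_red hp hE ih hC (sup_le (sup_le (edge_le' ua.symm) (edge_le' ub))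
        (sup_le (sup_le (sup_le (edge_le' hbd'.symm) (edge_le' vd)) (edge_le' vc.symm)) (edge_le' hac)))
        huG hvG (Supp.of_pair ⟨c, d, r1, n6, hcd⟩) (Supp.of_pair ⟨a, b, r2, n1, hab⟩) huv (hadj' _)
        fun h => ?_)
      rw [r1, r2] at h
      have : a ∈ ({c, d} : Finset V) := by rw [h]; simp
      simp only [Finset.mem_insert, Finset.mem_singleton] at this
      grind

/-- Hajós' bound for planar graphs: a planar even graph with `n` non-isolated vertices decomposes
into at most `(n - 1) / 2` cycles. -/
theorem hajos (hp : IsPlanar G) (hE : ∀ v, Even (dg G v)) : Bd G ((sp G).card - 1) := by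
  have : ∀ m, HajosBelow V m := by
    intro m
    induction m with
    | zero => intro G _ _ h; omega
    | succ m ih =>
      intro G hp hE h
      exact hajos_step hp hE fun G' hp' hE' h' => ih G' hp' hE' (by omega)
  exact this _ G hp hE (Nat.lt_succ_self _)

end HajosMain

/-! ### Parity corrections and the two ways to finish -/

section Join
variable {G : SimpleGraph V}

theorem dg_symmDiff (A B : SimpleGraph V) (v : V) : Even (dg (symmDiff A B) v + dg A v + dg B v) := by
  have h1 := dg_sdiff (inf_le_left : A ⊓ B ≤ A) v
  have h2 := dg_sdiff (inf_le_right : A ⊓ B ≤ B) v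
  have h3 : dg (symmDiff A B) v = dg (A \ B) v + dg (B \ A) v :=
    dg_sup disjoint_sdiff_sdiff v
  rw [sdiff_inf_self_left] at h1
  rw [sdiff_inf_self_right] at h2
  rw [h3, ← h1, ← h2]
  exact ⟨dg (A \ B) v + dg (B \ A) v + dg (A ⊓ B) v, by ring⟩

/-- `J` is a subgraph of `Z` inside `W`. -/
def Ins (J Z : SimpleGraph V) (W : Finset V) : Prop :=
  J ≤ Z ∧ ∀ a b, J.Adj a b → a ∈ W

theorem Ins.symmDiff {A B Z : SimpleGraph V} {W : Finset V} (hA : Ins A Z W) (hB : Ins B Z W) :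
    Ins (symmDiff A B) Z W := by
  refine ⟨(symmDiff_le_sup).trans (sup_le hA.1 hB.1), fun a b h => ?_⟩
  have := (symmDiff_le_sup : _ ≤ A ⊔ B) h
  rcases this with h | h
  exacts [hA.2 _ _ h, hB.2 _ _ h]

theorem Ins.dg_eq_zero {J Z : SimpleGraph V} {W : Finset V} (h : Ins J Z W) {v : V} (hv : v ∉ W) :
    dg J v = 0 := by
  rw [PlanarCDC.dg_eq_zero, mem_sp]
  rintro ⟨w, hw⟩; exact hv (h.2 _ _ hw)

/-- In a connected vertex set every parity function of even total weight is realised by the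
degrees of some edge set. -/
theorem exists_join {Z : SimpleGraph V} {W : Finset V} (hW : ConnSet Z W) (τ : V → ℕ)
    (he : Even (∑ v ∈ W, τ v)) : ∃ J, Ins J Z W ∧ ∀ v ∈ W, Even (dg J v + τ v) := by
  obtain ⟨w₀, hw₀⟩ := hW.1
  have step1 : ∀ w ∈ W, ∃ J, Ins J Z W ∧ ∀ v, v ≠ w₀ → (Odd (dg J v) ↔ v = w) := by
    intro w hw
    have key := hW.2 (W.filter fun w => ∃ J, Ins J Z W ∧ ∀ v, v ≠ w₀ →
      (Odd (dg J v) ↔ v = w))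
      ?_ w₀ hw₀ ?_ w hw
    · simp only [Finset.mem_filter] at key
      exact key.2
    · intro a ha b hb hab
      simp only [Finset.mem_filter] at ha ⊢
      obtain ⟨haW, J, hJ, h⟩ := ha
      refine ⟨hb, symmDiff J (edge a b), hJ.symmDiff ⟨edge_le' hab, ?_⟩, fun v hv => ?_⟩
      · intro c d hcd; rw [edge_adj] at hcd; grind
      · have h1 := dg_symmDiff J (edge a b) v
        rw [dg_edge hab.ne] at h1
        have := h v hv
        have := hab.ne
        split_ifs at h1 <;> grind
    · simp only [Finset.mem_filter]
      exact ⟨hw₀, ⊥, ⟨bot_le, by simp⟩, fun v hv => by simp [dg, nb, hv]⟩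
  have step2 : ∀ S ⊆ W, ∃ J, Ins J Z W ∧ ∀ v, v ≠ w₀ → (Odd (dg J v) ↔ v ∈ S) := by
    intro S
    induction S using Finset.induction_on with
    | empty => exact fun _ => ⟨⊥, ⟨bot_le, by simp⟩, fun v hv => by simp [dg, nb]⟩
    | insert a S ha ih =>
      intro hS
      obtain ⟨J, hJ, h⟩ := ih (fun x hx => hS (by simp [hx]))
      obtain ⟨J', hJ', h'⟩ := step1 a (hS (by simp))
      refine ⟨symmDiff J J', hJ.symmDiff hJ', fun v hv => ?_⟩
      have h1 := dg_symmDiff J J' v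
      have := h v hv; have := h' v hv
      grind
  obtain ⟨J, hJ, h⟩ := step2 (W.filter fun v => Odd (τ v)) (Finset.filter_subset _ _)
  have h1 : ∀ v ∈ W, v ≠ w₀ → Even (dg J v + τ v) := by
    intro v hv hne
    have := h v hne
    grind
  refine ⟨J, hJ, fun v hv => ?_⟩
  by_cases hvw : v = w₀
  · subst hvw
    have h2 : Even (∑ v ∈ W, dg J v) := by
      have := even_sum_dg J
      rwa [← Finset.sum_subset (Finset.subset_univ W) fun x _ hx => hJ.dg_eq_zero hx] at this
    have h3 : Even (∑ v ∈ W, (dg J v + τ v)) := by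
      rw [Finset.sum_add_distrib]; exact h2.add he
    rw [← Finset.add_sum_erase _ _ hv, Nat.even_add] at h3
    exact h3.2 (Finset.even_sum _ fun x hx => h1 x (by grind) (by grind))
  · exact h1 v hv hvw

end Join

section Finish
variable {G : SimpleGraph V}

/-- The conclusion about `H`, phrased with spanning subgraphs: a double cover of `G` by at most
`|V| - 1` cycles, one of which is `H`. -/
def Good (G H : SimpleGraph V) : Prop :=
  ∃ L : Multiset (SimpleGraph V), (∀ C ∈ L, IsCyc C ∧ C ≤ G) ∧
    (∀ a b, G.Adj a b → L.countP (fun C => C.Adj a b) = 2) ∧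
    L.card ≤ Fintype.card V - 1 ∧ H ∈ L

theorem bd_supp' (hp : IsPlanar G) (hE : ∀ v, Even (dg G v)) {v : V} (hv : Supp G v) :
    Bd G (Fintype.card V - 2) := by
  have := bd_supp (m := ∑ v, dg G v + 1) (fun G' hp' hE' _ => hajos hp' hE') hp hE (by omega) hv
  refine this.mono ?_
  have h1 : ((sp G).erase v).card ≤ (Finset.univ.erase v).card :=
    Finset.card_le_card (Finset.erase_subset_erase _ (Finset.subset_univ _))
  rw [Finset.card_erase_of_mem (Finset.mem_univ _), Finset.card_univ] at h1
  omega

/-- For even `|V|` the cycle `H` and decompositions of the chords together with complementary parts of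
`H` form the double cover. -/
theorem good_even (hp : IsPlanar G) {H : SimpleGraph V} (hH : IsCyc H) (hHG : H ≤ G)
    (hs : sp H = Finset.univ) (hn : Even (Fintype.card V)) : Good G H := by
  have hconn : ConnSet H Finset.univ := hs ▸ hH.conn
  obtain ⟨J, hJ, hpar⟩ := exists_join hconn (fun v => dg (G \ H) v) (even_sum_dg _)
  have hJ := hJ.1
  have c1 : J ≤ G := hJ.trans hHG
  have d1 : Disjoint (G \ H) J := (disjoint_sdiff_self_left).mono_right hJ
  have d2 : Disjoint (G \ H) (H \ J) := (disjoint_sdiff_self_left).mono_right sdiff_le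
  obtain ⟨L₁, h1, k1⟩ := hajos (G := (G \ H) ⊔ J) (planar_mono hp (sup_le sdiff_le c1)) (fun v => by
    rw [dg_sup d1]; have := hpar v (by simp); rwa [add_comm] at this)
  obtain ⟨L₂, h2, k2⟩ := hajos (G := (G \ H) ⊔ (H \ J)) (planar_mono hp (sup_le sdiff_le
    (sdiff_le.trans hHG))) (fun v => by
    rw [dg_sup d2]; have := hpar v (by simp)
    have h2 := dg_sdiff hJ v
    have := hH.even v
    rw [← h2] at this
    grind)
  refine ⟨H ::ₘ (L₁ + L₂), ?_, ?_, ?_, by simp⟩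
  · intro C hC
    simp at hC
    rcases hC with rfl | h | h
    · exact ⟨hH, hHG⟩
    · exact ⟨h1.1 _ h, (h1.le h).trans (sup_le sdiff_le c1)⟩
    · exact ⟨h2.1 _ h, (h2.le h).trans (sup_le sdiff_le (sdiff_le.trans hHG))⟩
  · intro a b hab
    rw [Multiset.countP_cons, Multiset.countP_add, h1.2, h2.2]
    have := @hJ a b
    simp only [sup_adj, sdiff_adj, hab]
    by_cases x : H.Adj a b <;> by_cases y : J.Adj a b <;> simp_all
  · simp
    have a1 := Finset.card_le_univ (sp (G \ H ⊔ J))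
    have a2 := Finset.card_le_univ (sp (G \ H ⊔ (H \ J)))
    have : 0 < Fintype.card V := by
      have := hconn.1; rw [← Finset.card_univ]; exact this.card_pos
    obtain ⟨k, hk⟩ := hn
    omega

/-- For odd `|V|` a cycle `T` disjoint from `H` and a parity correction `J` inside `T ⊔ H` suffice,
provided both remaining even graphs have a vertex that can be suppressed. -/
theorem good_odd (hp : IsPlanar G) {H T J : SimpleGraph V} (hH : IsCyc H) (hHG : H ≤ G)
    (hn : Odd (Fintype.card V)) (hT : IsCyc T) (hTG : T ≤ G \ H) (hJ : J ≤ T ⊔ H)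
    (hpar : ∀ v, Even (dg (G \ H) v + dg J v)) {u v : V} (hu : Supp (((G \ H) \ T) ⊔ J) u)
    (hv : Supp (((G \ H) \ T) ⊔ ((T ⊔ H) \ J)) v) : Good G H := by
  have hTG' := hTG.trans sdiff_le
  have c0 : T ⊔ H ≤ G := sup_le hTG' hHG
  have c1 : J ≤ G := hJ.trans c0
  have d0 : Disjoint ((G \ H) \ T) (T ⊔ H) := by
    rw [sdiff_sdiff, sup_comm]; exact disjoint_sdiff_self_left
  have d1 : Disjoint ((G \ H) \ T) J := d0.mono_right hJ
  have d2 : Disjoint ((G \ H) \ T) ((T ⊔ H) \ J) := d0.mono_right sdiff_le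
  have dTH : Disjoint T H := disjoint_sdiff_self_left.mono_left hTG
  have e1 : (G \ H) \ T ⊔ J ≤ G := sup_le (sdiff_le.trans sdiff_le) c1
  have e2 : (G \ H) \ T ⊔ ((T ⊔ H) \ J) ≤ G := sup_le (sdiff_le.trans sdiff_le) (sdiff_le.trans c0)
  have p1 : ∀ v, Even (dg ((G \ H) \ T ⊔ J) v) := fun v => by
    rw [dg_sup d1]
    have := hpar v; have h2 := dg_sdiff hTG v; have := hT.even v; grind
  have p2 : ∀ v, Even (dg ((G \ H) \ T ⊔ ((T ⊔ H) \ J)) v) := fun v => by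
    rw [dg_sup d2]
    have h1 := hpar v; have h2 := dg_sdiff hTG v; have h3 := hT.even v
    have h4 := dg_sdiff hJ v; have h5 := hH.even v
    rw [dg_sup dTH] at h4
    clear p1; grind
  obtain ⟨L₁, h1, k1⟩ := bd_supp' (planar_mono hp e1) p1 hu
  obtain ⟨L₂, h2, k2⟩ := bd_supp' (planar_mono hp e2) p2 hv
  refine ⟨H ::ₘ T ::ₘ (L₁ + L₂), ?_, ?_, ?_, by simp⟩
  · intro C hC
    simp at hC
    rcases hC with rfl | rfl | h | h
    · exact ⟨hH, hHG⟩
    · exact ⟨hT, hTG'⟩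
    · exact ⟨h1.1 _ h, (h1.le h).trans e1⟩
    · exact ⟨h2.1 _ h, (h2.le h).trans e2⟩
  · intro a b hab
    rw [Multiset.countP_cons, Multiset.countP_cons, Multiset.countP_add, h1.2, h2.2]
    have i1 := @hJ a b
    have i2 := disjoint_left.mp dTH a b
    simp only [sup_adj, sdiff_adj, hab] at i1 ⊢
    by_cases x : H.Adj a b <;> by_cases y : J.Adj a b <;> by_cases z : T.Adj a b <;> simp_all
  · simp
    have h3 := hT.1
    have : 3 ≤ Fintype.card V := (card_sp_ge hT.even h3).trans (Finset.card_le_univ _)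
    obtain ⟨k, hk⟩ := hn
    omega

end Finish

/-! ### Links in planar 4-connected graphs -/

section Links
variable {G : SimpleGraph V}

/-- 4-connectivity in terms of `ConnSet`. -/
def Con4 (G : SimpleGraph V) : Prop :=
  4 < Fintype.card V ∧ ∀ S : Finset V, S.card < 4 → ConnSet G Sᶜ

/-- In a 4-connected graph, a set `Q` with all outgoing edges in `S`, and with some vertex outside `Q`
not adjacent to it, has at least four neighbours in `S`. -/
theorem Con4.four_le (h : Con4 G) {Q S : Finset V} {y : V} (hQ : Q.Nonempty)
    (hc : ∀ a ∈ Q, ∀ b, G.Adj a b → b ∈ Q ∨ b ∈ S) (hQS : ∀ a ∈ Q, a ∉ S) (hy : y ∉ Q)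
    (hyQ : ¬ Tch G Q {y}) : 4 ≤ (S.filter fun s => Tch G Q {s}).card := by
  by_contra! hlt
  have hC := h.2 _ hlt
  obtain ⟨q, hq⟩ := hQ
  obtain ⟨c, hcQ, d, hd, hdQ, -, hcd⟩ := hC.exists_adj (a := q) (b := y) (X := Q)
    (by simp; intro h; exact absurd h (hQS q hq)) (by simp; exact fun _ => hyQ) hq hy
  rcases hc c hcQ d hcd with h | h
  · exact hdQ h
  · simp at hd
    exact hd h ⟨c, hcQ, d, by simp, hcd⟩

theorem Con4.dg_ge (h : Con4 G) (v : V) : 4 ≤ dg G v := by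
  by_contra! hlt
  obtain ⟨y, hy⟩ : ∃ y, y ∉ insert v (nb G v) := by
    by_contra! hc
    have : (insert v (nb G v)).card = Fintype.card V := by
      rw [Finset.eq_univ_iff_forall.mpr hc, Finset.card_univ]
    have := Finset.card_insert_le v (nb G v)
    have h1 := h.1
    unfold dg at hlt; omega
  have := h.four_le (Q := {v}) (S := nb G v) (y := y) (by simp) (by simp; tauto) (by simp)
    (by grind) (by rintro ⟨a, ha, b, hb, hab⟩; simp at ha hb; subst ha hb; simp at hy; tauto)
  have := Finset.card_filter_le (nb G v) (fun s => Tch G {v} {s})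
  unfold dg at hlt; omega

theorem tch_sing {a b : V} (h : G.Adj a b) : Tch G {a} {b} := ⟨a, by simp, b, by simp, h⟩

/-- A component of the complement of `S`. -/
theorem comp_spec (S : Finset V) {x : V} (hx : x ∉ S) :
    ConnSet G (cmp G Sᶜ x) ∧ x ∈ cmp G Sᶜ x ∧ (∀ a ∈ cmp G Sᶜ x, a ∉ S) ∧
      ∀ a ∈ cmp G Sᶜ x, ∀ b, G.Adj a b → b ∈ cmp G Sᶜ x ∨ b ∈ S := by
  refine ⟨cmp_conn, mem_cmp_self, fun a ha => ?_, fun a ha b hab => ?_⟩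
  · simpa using cmp_subset (by simpa using hx) ha
  · by_cases hb : b ∈ S
    · exact Or.inr hb
    · exact Or.inl (cmp_closed ha hab (by simpa using hb))

/-- A component of the complement of a `K₄` is adjacent to all four vertices, giving a `K₅` minor. -/
theorem no_K4 (hp : IsPlanar G) (h : Con4 G) {v a b c : V} (va : G.Adj v a) (vb : G.Adj v b)
    (vc : G.Adj v c) (ab : G.Adj a b) (ac : G.Adj a c) (bc : G.Adj b c) : False := by
  have hS : ({v, a, b, c} : Finset V).card ≤ 4 := Finset.card_le_four
  obtain ⟨x, hx⟩ : ∃ x, x ∉ ({v, a, b, c} : Finset V) := by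
    by_contra! hc
    rw [Finset.eq_univ_iff_forall.mpr hc, Finset.card_univ] at hS
    have := h.1; omega
  obtain ⟨q1, q2, q3, q4⟩ := comp_spec (G := G) _ hx
  obtain ⟨Q, hQ⟩ : ∃ Q, Q = cmp G ({v, a, b, c} : Finset V)ᶜ x := ⟨_, rfl⟩
  rw [← hQ] at q1 q2 q3 q4
  have key : ∀ y ∈ ({v, a, b, c} : Finset V), Tch G Q {y} := by
    intro y hy
    by_contra hc
    have h1 := h.four_le ⟨x, q2⟩ q4 q3 (fun h => q3 y h hy) hc
    have h2 := Finset.eq_of_subset_of_card_le (Finset.filter_subset _ _) (hS.trans h1)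
    rw [← h2] at hy
    exact hc (Finset.mem_filter.mp hy).2
  refine not_K5 hp q1 (ConnSet.singleton v) (ConnSet.singleton a) (ConnSet.singleton b)
    (ConnSet.singleton c) ?_ (key _ (by simp)) (key _ (by simp)) (key _ (by simp)) (key _ (by simp))
    (tch_sing va) (tch_sing vb) (tch_sing vc) (tch_sing ab) (tch_sing ac) (tch_sing bc)
  intro y; have h5 := q3 y
  have := va.ne; have := vb.ne; have := vc.ne; have := ab.ne; have := ac.ne; have := bc.ne
  simp only [Finset.mem_insert, Finset.mem_singleton] at h5 ⊢
  clear key q4 q3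
  refine ⟨?_, ?_, ?_, ?_⟩ <;> grind

theorem four_of_five {a b c d e : V} {P : V → Prop}
    (h : 4 ≤ (({a, b, c, d, e} : Finset V).filter P).card) {x : V}
    (hx : x ∈ ({a, b, c, d, e} : Finset V)) (hPx : ¬ P x) :
    ∀ y ∈ ({a, b, c, d, e} : Finset V), y ≠ x → P y := by
  intro y hy hyx
  by_contra hPy
  have h1 : ({a, b, c, d, e} : Finset V).filter P ⊆ (({a, b, c, d, e} : Finset V).erase x).erase y := by
    intro z hz; rw [Finset.mem_filter] at hz
    rw [Finset.mem_erase, Finset.mem_erase]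
    exact ⟨fun h => hPy (h ▸ hz.2), fun h => hPx (h ▸ hz.2), hz.1⟩
  have h2 := Finset.card_le_card h1
  rw [Finset.card_erase_of_mem (by rw [Finset.mem_erase]; exact ⟨hyx, hy⟩),
    Finset.card_erase_of_mem hx] at h2
  have : ({a, b, c, d, e} : Finset V).card ≤ 5 := Finset.card_le_five
  omega

/-- A vertex `v` of degree at most 5 has no neighbour `a` with three common neighbours `b`, `c`, `d`. -/
theorem no_star (hp : IsPlanar G) (h : Con4 G) {v a b c d : V} (hv : dg G v ≤ 5) (va : G.Adj v a)
    (vb : G.Adj v b) (vc : G.Adj v c) (vd : G.Adj v d) (ab : G.Adj a b) (ac : G.Adj a c)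
    (ad : G.Adj a d) (hbc : b ≠ c) (hbd : b ≠ d) (hcd : c ≠ d) : False := by
  have nbc : ¬ G.Adj b c := fun e => no_K4 hp h va vb vc ab ac e
  have nbd : ¬ G.Adj b d := fun e => no_K4 hp h va vb vd ab ad e
  have ncd : ¬ G.Adj c d := fun e => no_K4 hp h va vc vd ac ad e
  have n1 := va.ne; have n2 := vb.ne; have n3 := vc.ne; have n4 := vd.ne
  have n5 := ab.ne; have n6 := ac.ne; have n7 := ad.ne
  obtain ⟨S, hS⟩ : ∃ S, S = ({v, a, b, c, d} : Finset V) := ⟨_, rfl⟩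
  have mS : ∀ x, x ∈ S ↔ x = v ∨ x = a ∨ x = b ∨ x = c ∨ x = d := by simp [hS]
  have out : ∀ y, y = b ∨ y = c ∨ y = d → ∃ x, x ∉ S ∧ G.Adj y x := by
    intro y hy
    by_contra! hcon
    have h1 : nb G y ⊆ {v, a} := by
      intro x hx
      rw [mem_nb] at hx
      have h4 := hcon x
      have := hx.ne
      rw [mS] at h4
      have := hx.symm
      rcases hy with rfl | rfl | rfl <;> simp <;> grind
    have h2 := Finset.card_le_card h1
    have h3 := Finset.card_le_two (a := v) (b := a)
    have := h.dg_ge y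
    unfold dg at this; omega
  have vout : ∀ x x', x ∉ S → x' ∉ S → G.Adj v x → G.Adj v x' → x = x' := by
    intro x x' hx hx' e e'
    by_contra hne
    have h1 : ({a, b, c, d, x, x'} : Finset V) ⊆ nb G v := by
      intro y hy; simp at hy; rw [mem_nb]; rcases hy with rfl | rfl | rfl | rfl | rfl | rfl <;> assumption
    have h2 := Finset.card_le_card h1
    rw [mS] at hx hx'
    rw [Finset.card_insert_of_notMem (by simp; grind), Finset.card_insert_of_notMem (by simp; grind),
      Finset.card_insert_of_notMem (by simp; grind), Finset.card_insert_of_notMem (by simp; grind),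
      Finset.card_pair hne] at h2
    unfold dg at hv; omega
  have main : ∀ x, x ∉ S → ∃ w ∈ cmp G Sᶜ x, G.Adj v w ∧ ∃ y, (y = b ∨ y = c ∨ y = d) ∧
      ¬ Tch G (cmp G Sᶜ x) {y} := by
    intro x hx
    obtain ⟨q1, q2, q3, q4⟩ := comp_spec (G := G) S hx
    obtain ⟨Q, hQ⟩ : ∃ Q, Q = cmp G Sᶜ x := ⟨_, rfl⟩
    rw [← hQ] at q1 q2 q3 q4 ⊢
    obtain ⟨y, hy, hyQ⟩ : ∃ y, (y = b ∨ y = c ∨ y = d) ∧ ¬ Tch G Q {y} := by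
      by_contra! hc
      refine not_K33 hp q1 (ConnSet.singleton v) (ConnSet.singleton a) (ConnSet.singleton b)
        (ConnSet.singleton c) (ConnSet.singleton d) ?_ (hc b (by simp)) (hc c (by simp))
        (hc d (by simp)) (tch_sing vb) (tch_sing vc) (tch_sing vd) (tch_sing ab) (tch_sing ac)
        (tch_sing ad)
      intro y; have := q3 y
      simp only [mS, Finset.mem_singleton] at this ⊢
      clear q4 q3 hc out vout mS
      refine ⟨?_, ?_, ?_, ?_, ?_⟩ <;> grind
    have h1 := h.four_le ⟨x, q2⟩ q4 q3 (fun h => q3 y h ((mS y).2 (by tauto))) hyQ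
    rw [hS] at h1
    have hvQ := four_of_five h1 (x := y) (by simp; tauto) hyQ v (by simp) (by grind)
    obtain ⟨w, hw, v', hv', e⟩ := hvQ
    simp at hv'; subst hv'
    exact ⟨w, hw, e.symm, y, hy, hyQ⟩
  obtain ⟨x₀, hx₀, -⟩ := out b (by simp)
  obtain ⟨w, hwx, hvw, y, hy, hyQ⟩ := main x₀ hx₀
  have hw : w ∉ S := (comp_spec (G := G) S hx₀).2.2.1 w hwx
  obtain ⟨x, hx, hyx⟩ := out y hy
  obtain ⟨w', hwx', hvw', -⟩ := main x hx
  obtain rfl := vout w w' hw ((comp_spec (G := G) S hx).2.2.1 w' hwx') hvw hvw'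
  have hxx : x ∈ cmp G Sᶜ x₀ := cmp_conn.2 _ (fun p hp q hq hpq => cmp_closed hp hpq
    (by simpa using (comp_spec (G := G) S hx).2.2.1 q hq)) w hwx' hwx x mem_cmp_self
  exact hyQ ⟨x, hxx, y, by simp, hyx.symm⟩

/-- The neighbours of a vertex of degree at least 5 contain no 4-cycle. -/
theorem no_wheel4 (hp : IsPlanar G) (h : Con4 G) {v a b c d x : V} (va : G.Adj v a)
    (vb : G.Adj v b) (vc : G.Adj v c) (vd : G.Adj v d) (vx : G.Adj v x) (hxa : x ≠ a) (hxb : x ≠ b)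
    (hxc : x ≠ c) (hxd : x ≠ d) (hac : a ≠ c) (hbd : b ≠ d)
    (ab : G.Adj a b) (bc : G.Adj b c) (cd : G.Adj c d) (da : G.Adj d a) : False := by
  obtain ⟨S, hS⟩ : ∃ S, S = ({v, a, b, c, d} : Finset V) := ⟨_, rfl⟩
  have mS : ∀ x, x ∈ S ↔ x = v ∨ x = a ∨ x = b ∨ x = c ∨ x = d := by simp [hS]
  have n0 := vx.ne
  have n1 := va.ne; have n2 := vb.ne; have n3 := vc.ne; have n4 := vd.ne
  have n5 := ab.ne; have n6 := bc.ne; have n7 := cd.ne; have n8 := da.ne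
  have hx : x ∉ S := by rw [mS]; grind
  obtain ⟨q1, q2, q3, q4⟩ := comp_spec (G := G) S hx
  obtain ⟨Q, hQ⟩ : ∃ Q, Q = cmp G Sᶜ x := ⟨_, rfl⟩
  rw [← hQ] at q1 q2 q3 q4
  have hQv : Tch G Q {v} := ⟨x, q2, v, by simp, vx.symm⟩
  have key : (Tch G Q {c} ∧ Tch G Q {d} ∧ (Tch G Q {a} ∨ Tch G Q {b})) ∨
      (Tch G Q {a} ∧ Tch G Q {b} ∧ (Tch G Q {c} ∨ Tch G Q {d})) := by
    by_cases hall : ∀ y ∈ S, Tch G Q {y}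
    · left; refine ⟨hall c ?_, hall d ?_, Or.inl (hall a ?_)⟩ <;> simp [mS]
    · push Not at hall
      obtain ⟨y, hy, hyQ⟩ := hall
      have h1 := h.four_le ⟨x, q2⟩ q4 q3 (fun h => q3 y h hy) hyQ
      rw [hS] at h1 hy
      have h2 := four_of_five h1 hy hyQ
      have ka := h2 a (by simp); have kb := h2 b (by simp)
      have kc := h2 c (by simp); have kd := h2 d (by simp)
      clear h1 h2 q4 q3 mS
      simp at hy
      rcases hy with rfl | rfl | rfl | rfl | rfl <;> grind
  have fin : ∀ a b c d, G.Adj v a → G.Adj v b → G.Adj v c → G.Adj v d → a ∈ S → b ∈ S → c ∈ S →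
      d ∈ S → a ≠ c → b ≠ d → G.Adj a b → G.Adj b c → G.Adj c d → G.Adj d a → Tch G Q {c} →
      Tch G Q {d} → (Tch G Q {a} ∨ Tch G Q {b}) → False := by
    intro a b c d va vb vc vd aS bS cS dS hac hbd ab bc cd da Qc Qd Qab
    refine not_K5 hp q1 (ConnSet.singleton v) (ConnSet.pair ab) (ConnSet.singleton c)
      (ConnSet.singleton d) ?_ hQv ?_ Qc Qd ⟨v, by simp, a, by simp, va⟩ (tch_sing vc) (tch_sing vd)
      ⟨b, by simp, c, by simp, bc⟩ ⟨a, by simp, d, by simp, da.symm⟩ (tch_sing cd)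
    · intro y; have := q3 y
      have vS := (mS v).2 (by simp)
      clear q4 q3 hQ mS hS
      have n1 := va.ne; have n2 := vb.ne; have n3 := vc.ne; have n4 := vd.ne
      have n5 := ab.ne; have n6 := bc.ne; have n7 := cd.ne; have n8 := da.ne
      simp only [Finset.mem_insert, Finset.mem_singleton]
      refine ⟨?_, ?_, ?_, ?_⟩ <;> grind
    · rcases Qab with ⟨q, hq, y, hy, e⟩ | ⟨q, hq, y, hy, e⟩ <;>
        exact ⟨q, hq, y, by simp at hy ⊢; tauto, e⟩
  rcases key with ⟨k1, k2, k3⟩ | ⟨k1, k2, k3⟩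
  · exact fin a b c d va vb vc vd (by simp [mS]) (by simp [mS]) (by simp [mS]) (by simp [mS])
      hac hbd ab bc cd da k1 k2 k3
  · exact fin c d a b vc vd va vb (by simp [mS]) (by simp [mS]) (by simp [mS]) (by simp [mS])
      hac.symm hbd.symm cd da ab bc k1 k2 k3

end Links

/-! ### End blocks of the chord graph -/

section Block
variable {G H : SimpleGraph V}

/-- `H` is a Hamiltonian cycle of `G`. -/
def Ham (G H : SimpleGraph V) : Prop := IsCyc H ∧ H ≤ G ∧ sp H = Finset.univ

theorem Ham.dg_H (h : Ham G H) (v : V) : dg H v = 2 := h.1.dg_two (by simp [h.2.2])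

theorem Ham.dg_K (h : Ham G H) (v : V) : dg (G \ H) v + 2 = dg G v := by
  rw [← dg_sdiff h.2.1 v, h.dg_H]

/-- A maximal `G`-connected set `W` that is separated by a single vertex `z` in `K`; by maximality its
complement is 2-connected in `K`. -/
theorem exists_maximal_W (h4 : Con4 G) (K : SimpleGraph V) (hK : K ≤ G) :
    ∃ z W, z ∉ W ∧ (∃ x, x ∉ W ∧ x ≠ z) ∧ (W = ∅ ∨ ConnSet G W) ∧
      (∀ a ∈ W, ∀ b, K.Adj a b → b ∈ W ∨ b = z) ∧
      ∀ z' ∈ Wᶜ, ConnSet K (Wᶜ.erase z') := by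
  obtain ⟨P, hP⟩ : ∃ P : Finset V → Prop, P = fun W => ∃ z, z ∉ W ∧ (∃ x, x ∉ W ∧ x ≠ z) ∧
    (W = ∅ ∨ ConnSet G W) ∧ (∀ a ∈ W, ∀ b, K.Adj a b → b ∈ W ∨ b = z) := ⟨_, rfl⟩
  have hne : ((Finset.univ : Finset (Finset V)).filter P).Nonempty := by
    have hc := h4.1
    obtain ⟨z, x, hzx⟩ := Fintype.exists_pair_of_one_lt_card (show 1 < Fintype.card V by omega)
    exact ⟨∅, by rw [Finset.mem_filter, hP]; exact ⟨by simp, z, by simp, ⟨x, by simp, hzx.symm⟩, by simp, by simp⟩⟩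
  obtain ⟨W, hW, hmax⟩ := Finset.exists_max_image _ Finset.card hne
  rw [Finset.mem_filter] at hW
  have hW2 := hW.2
  rw [hP] at hW2
  obtain ⟨z, hz, ⟨x, hx, hxz⟩, hWc, hcl⟩ := hW2
  refine ⟨z, W, hz, ⟨x, hx, hxz⟩, hWc, hcl, fun z' hz' => ?_⟩
  have hz'W : z' ∉ W := by simpa using hz'
  by_contra hcon
  -- `d` is where the set `W` gets enlarged
  obtain ⟨d, hd, hdz', hdW, hdz⟩ : ∃ d, d ∉ W ∧ d ≠ z' ∧ (W = ∅ ∨ ∃ a ∈ W, G.Adj a d) ∧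
      (z = z' ∨ d = z ∨ ∀ a ∈ W, ¬ K.Adj a z) := by
    by_cases hzz : z ≠ z' ∧ ∃ a ∈ W, G.Adj a z
    · exact ⟨z, hz, hzz.1, Or.inr hzz.2, Or.inr (Or.inl rfl)⟩
    have key : z = z' ∨ ∀ a ∈ W, ¬ K.Adj a z := by
      by_contra! hc
      obtain ⟨h1, a, ha, hh⟩ := hc
      exact hzz ⟨h1, a, ha, hK hh⟩
    obtain ⟨y, hy, hyz'⟩ : ∃ y, y ∉ W ∧ y ≠ z' := by
      by_cases e : x = z'
      · exact ⟨z, hz, fun e' => hxz (e.trans e'.symm)⟩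
      · exact ⟨x, hx, e⟩
    rcases hWc with rfl | hWc
    · exact ⟨y, hy, hyz', Or.inl rfl, key.imp id Or.inr⟩
    · obtain ⟨a, ha⟩ := hWc.1
      have hC := h4.2 {z'} (by simp)
      obtain ⟨c, hcW, d, hd, hdW, -, hcd⟩ := hC.exists_adj (a := a) (b := y) (X := W)
        (by simp; exact fun h => hz'W (h ▸ ha)) (by simpa using hyz') ha hy
      exact ⟨d, hdW, by simpa using hd, Or.inr ⟨c, hcW, hcd⟩, key.imp id Or.inr⟩
  obtain ⟨Y, hY⟩ : ∃ Y, Y = cmp K (Wᶜ.erase z') d := ⟨_, rfl⟩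
  have hdB : d ∈ Wᶜ.erase z' := by simp [hd, hdz']
  have hYc : ConnSet K Y := hY ▸ cmp_conn
  have hYs : Y ⊆ Wᶜ.erase z' := hY ▸ cmp_subset hdB
  have hdY : d ∈ Y := hY ▸ mem_cmp_self
  have hYcl : ∀ a ∈ Y, ∀ b, K.Adj a b → b ∈ Wᶜ.erase z' → b ∈ Y := by
    subst hY; exact fun a ha b hab hb => cmp_closed ha hab hb
  obtain ⟨y, hyB, hyY⟩ : ∃ y ∈ Wᶜ.erase z', y ∉ Y := by
    by_contra! hc
    exact hcon (Finset.Subset.antisymm hYs hc ▸ hYc)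
  have hlt : W.card < (W ∪ Y).card := by
    refine Finset.card_lt_card ⟨Finset.subset_union_left, fun h => hd (h (by simp [hdY]))⟩
  refine absurd (hmax (W ∪ Y) ?_) (by omega)
  rw [Finset.mem_filter, hP]
  have hYs' : ∀ a ∈ Y, a ∉ W ∧ a ≠ z' := fun a ha => by have := hYs ha; simp at this; tauto
  refine ⟨by simp, z', ?_, ⟨y, ?_, ?_⟩, Or.inr ?_, ?_⟩
  · simp; exact ⟨hz'W, fun h => (hYs' _ h).2 rfl⟩
  · simp at hyB ⊢; tauto
  · simp at hyB ⊢; tauto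
  · rcases hdW with rfl | ⟨a, ha, had⟩
    · simpa using hYc.mono hK
    · rcases hWc with rfl | hWc
      · simp at ha
      · exact hWc.union (hYc.mono hK) ha hdY (Or.inl had)
  · intro a ha b hab
    by_cases hbz : b = z'
    · exact Or.inr hbz
    left
    rw [Finset.mem_union] at ha ⊢
    by_cases hbW : b ∈ W
    · exact Or.inl hbW
    right
    rcases ha with ha | ha
    · rcases hcl a ha b hab with h | rfl
      · exact absurd h hbW
      · rcases hdz with h | rfl | h
        · exact absurd h hbz
        · exact hdY
        · exact absurd hab (h a ha)
    · exact hYcl a ha b hab (by simp [hbz, hbW])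

/-- Counting step: contracting `W`, the edge bound limits the chord degrees in the complement. -/
theorem block_count (hp : IsPlanar G) (hH : Ham G H) {W : Finset V} (hW : W = ∅ ∨ ConnSet G W)
    (h3 : 3 ≤ Wᶜ.card) :
    ∑ x ∈ Wᶜ, dg (rs (G \ H) Wᶜ) x + 6 ≤ 4 * Wᶜ.card := by
  rcases hW with rfl | hW
  · have h1 := edge_bound hp (Finset.subset_univ (sp G)) (by simpa using h3)
    have h2 : ∑ x, dg (rs (G \ H) (∅ : Finset V)ᶜ) x + ∑ x : V, 2 ≤ ∑ x, dg G x := by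
      rw [← Finset.sum_add_distrib]
      refine Finset.sum_le_sum fun x _ => ?_
      rw [← hH.dg_K x]
      exact Nat.add_le_add_right (dg_mono (rs_le _ _) x) 2
    simp only [Finset.sum_const, smul_eq_mul, Finset.compl_empty] at h2 ⊢
    omega
  · obtain ⟨w, hw⟩ := hW.1
    obtain ⟨N, hN⟩ : ∃ N, N = ctr G W w := ⟨_, rfl⟩
    have hNp : IsPlanar N := hN ▸ planar_ctr hp hW hw
    have a1 : ∀ x y, x ∉ W → y ∉ W → (N.Adj x y ↔ G.Adj x y) := by
      intro x y hx hy
      have h1 : x ≠ w := fun h => hx (h ▸ hw)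
      have h2 : y ≠ w := fun h => hy (h ▸ hw)
      rw [hN, ctr_adj]
      simp only [cl, h1, h2, if_false, hx, hy, false_imp_iff, true_and]
      constructor
      · rintro ⟨-, a, ha, b, hb, h⟩
        simp at ha hb; subst ha hb; exact h
      · exact fun h => ⟨h.ne, tch_sing h⟩
    have a2 : ∀ x y, x ∉ W → y ∈ W → G.Adj x y → N.Adj x w := by
      intro x y hx hy h
      have h1 : x ≠ w := fun h => hx (h ▸ hw)
      rw [hN, ctr_adj]
      refine ⟨h1, fun h => absurd h hx, fun _ => rfl, x, by simp [cl, h1], y, by simp [cl, hy], h⟩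
    have hsN : sp N ⊆ insert w Wᶜ := by
      intro x hx
      obtain ⟨y, hy⟩ := mem_sp.mp hx
      rw [hN, ctr_adj] at hy
      simp; by_contra! hc
      exact hc.1 (hy.2.1 hc.2)
    have hwB : w ∉ Wᶜ := by simpa using hw
    have h1 := edge_bound hNp hsN (by rw [Finset.card_insert_of_notMem hwB]; omega)
    rw [Finset.sum_insert hwB, Finset.card_insert_of_notMem hwB] at h1
    have h2 : dg N w = ∑ x ∈ Wᶜ, (if N.Adj w x then 1 else 0) := by
      rw [sum_ind]
      intro x hx
      rw [mem_nb] at hx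
      have := hsN (mem_sp_of hx.symm)
      have := hx.ne
      grind
    have h3 : ∑ x ∈ Wᶜ, dg (rs (G \ H) Wᶜ) x + ∑ x ∈ Wᶜ, 2 ≤
        ∑ x ∈ Wᶜ, dg N x + ∑ x ∈ Wᶜ, (if N.Adj w x then 1 else 0) := by
      rw [← Finset.sum_add_distrib, ← Finset.sum_add_distrib]
      refine Finset.sum_le_sum fun x hx => ?_
      have hx' : x ∉ W := by simpa using hx
      obtain ⟨p, q, hpq, hnb⟩ := Finset.card_eq_two.mp (hH.dg_H x)
      have hHx := nb_adj hnb
      have Hp : H.Adj x p := by simp [hHx]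
      have Hq : H.Adj x q := by simp [hHx]
      have Gp := hH.2.1 Hp
      have Gq := hH.2.1 Hq
      obtain ⟨M, hM⟩ : ∃ M, M = nb (rs (G \ H) Wᶜ) x := ⟨_, rfl⟩
      have mM : ∀ y ∈ M, G.Adj x y ∧ ¬ H.Adj x y ∧ y ∉ W := by
        intro y hy; rw [hM] at hy; simp at hy; tauto
      have cM : dg (rs (G \ H) Wᶜ) x = M.card := by rw [hM]; rfl
      have pM : p ∉ M := fun h => (mM p h).2.1 Hp
      have qM : q ∉ M := fun h => (mM q h).2.1 Hq
      have wM : w ∉ M := fun h => (mM w h).2.2 hw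
      have MN : ∀ y ∈ M, y ∈ nb N x := fun y hy => by
        rw [mem_nb, a1 x y hx' (mM y hy).2.2]; exact (mM y hy).1
      have two : ∀ a b, a ≠ b → a ∉ M → b ∉ M → N.Adj x a → N.Adj x b → M.card + 2 ≤ dg N x := by
        intro a b hab ha hb h1 h2
        have : insert a (insert b M) ⊆ nb N x := by
          intro y hy; simp only [Finset.mem_insert] at hy
          rcases hy with rfl | rfl | hy
          · simpa
          · simpa
          · exact MN y hy
        have := Finset.card_le_card this
        rwa [Finset.card_insert_of_notMem (by grind), Finset.card_insert_of_notMem hb] at this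
      rw [cM]
      by_cases hp : p ∈ W <;> by_cases hq : q ∈ W
      · have h := a2 x p hx' hp Gp
        rw [if_pos h.symm]
        have : insert w M ⊆ nb N x := by
          intro y hy; simp only [Finset.mem_insert] at hy
          rcases hy with rfl | hy
          · simpa
          · exact MN y hy
        have := Finset.card_le_card this
        rw [Finset.card_insert_of_notMem wM] at this
        unfold dg; omega
      · have := two w q (fun h => hq (h ▸ hw)) wM qM (a2 x p hx' hp Gp) ((a1 x q hx' hq).2 Gq)
        omega
      · have := two w p (fun h => hp (h ▸ hw)) wM pM (a2 x q hx' hq Gq) ((a1 x p hx' hp).2 Gp)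
        omega
      · have := two p q hpq pM qM ((a1 x p hx' hp).2 Gp) ((a1 x q hx' hq).2 Gq)
        omega
    simp only [Finset.sum_const, smul_eq_mul] at h3
    omega

/-- An end block `B` of the chord graph `K = G \ H`, with attachment vertex `z`: it is 2-connected,
its other vertices have all their chords in `B`, and it has a vertex with two chords or three
vertices with three chords. -/
theorem exists_block (hp : IsPlanar G) (h4 : Con4 G) (hH : Ham G H) :
    ∃ z B, ConnSet (G \ H) B ∧ (∀ x ∈ B, ConnSet (G \ H) (B.erase x)) ∧ 3 ≤ B.card ∧
      (∀ x ∈ B, x ≠ z → ∀ y, (G \ H).Adj x y → y ∈ B) ∧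
      ((∃ v ∈ B, v ≠ z ∧ dg (G \ H) v = 2) ∨
        3 ≤ ((B.erase z).filter fun v => dg (G \ H) v = 3).card) := by
  obtain ⟨z, W, hz, ⟨x, hx, hxz⟩, hWc, hcl, hB⟩ := exists_maximal_W h4 (G \ H) sdiff_le
  have hK2 : ∀ v, 2 ≤ dg (G \ H) v := fun v => by
    have := hH.dg_K v; have := h4.dg_ge v; omega
  have hst : ∀ x ∈ Wᶜ, x ≠ z → ∀ y, (G \ H).Adj x y → y ∈ Wᶜ := by
    intro x hx hxz y hxy
    simp at hx ⊢
    intro hy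
    rcases hcl y hy x hxy.symm with h | h
    exacts [hx h, hxz h]
  have hxB : x ∈ Wᶜ := by simpa using hx
  have hzB : z ∈ Wᶜ := by simpa using hz
  obtain ⟨y, hy⟩ : (nb (G \ H) x).Nonempty := by
    rw [← Finset.card_pos]; have := hK2 x; unfold dg at this; omega
  have hy : (G \ H).Adj x y := by simpa using hy
  have h3 : 3 ≤ Wᶜ.card := by
    have : insert x (nb (G \ H) x) ⊆ Wᶜ := by
      intro y hy; simp only [Finset.mem_insert, mem_nb] at hy
      rcases hy with rfl | hy
      · exact hxB
      · exact hst x hxB hxz y hy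
    have := Finset.card_le_card this
    rw [Finset.card_insert_of_notMem (by simp)] at this
    have := hK2 x; unfold dg at this; omega
  have hBc : ConnSet (G \ H) Wᶜ := by
    have := (hB x hxB).union (ConnSet.singleton x) (a := y) (b := x)
      (by simp; exact ⟨hy.ne.symm, by simpa using hst x hxB hxz y hy⟩) (by simp) (Or.inl hy.symm)
    convert this using 1
    ext t; simp; grind
  refine ⟨z, Wᶜ, hBc, hB, h3, hst, ?_⟩
  by_contra! hcon
  have hcount := block_count hp hH hWc h3
  have hzd : 2 ≤ dg (rs (G \ H) Wᶜ) z := by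
    -- a single neighbour of `z` inside the block would be a cut vertex
    obtain ⟨c, hc, d, hd, hdX, -, hcd⟩ := hBc.exists_adj (a := z) (b := x) (X := {z}) hzB hxB
      (by simp) (by simpa using hxz)
    obtain ⟨e, he⟩ : ((Wᶜ.erase d).erase z).Nonempty := by
      rw [← Finset.card_pos]
      have h1 := Finset.pred_card_le_card_erase (s := Wᶜ.erase d) (a := z)
      have h2 := Finset.pred_card_le_card_erase (s := Wᶜ) (a := d)
      omega
    rw [Finset.mem_singleton] at hc hdX
    subst hc
    rw [Finset.mem_erase] at he
    obtain ⟨c', hc', d', hd', hdX', -, hcd'⟩ := (hB d hd).exists_adj (a := c) (b := e) (X := {c})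
      (Finset.mem_erase.mpr ⟨Ne.symm hdX, hzB⟩) he.2 (by simp) (by simpa using he.1)
    rw [Finset.mem_singleton] at hc'
    subst hc'
    rw [Finset.mem_erase] at hd'
    have : ({d, d'} : Finset V) ⊆ nb (rs (G \ H) Wᶜ) c' := by
      intro t ht; rw [Finset.mem_insert, Finset.mem_singleton] at ht
      rw [mem_nb, rs_adj]
      rcases ht with rfl | rfl
      exacts [⟨hcd, hzB, hd⟩, ⟨hcd', hzB, hd'.2⟩]
    have := Finset.card_le_card this
    rwa [Finset.card_pair (Ne.symm hd'.1)] at this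
  rw [← Finset.add_sum_erase _ _ hzB] at hcount
  have h5 : ∑ v ∈ Wᶜ.erase z, 4 ≤ ∑ v ∈ Wᶜ.erase z, (dg (rs (G \ H) Wᶜ) v +
      if dg (G \ H) v = 3 then 1 else 0) := by
    refine Finset.sum_le_sum fun v hv => ?_
    rw [Finset.mem_erase] at hv
    have e : dg (rs (G \ H) Wᶜ) v = dg (G \ H) v := by
      unfold dg; congr 1; ext y
      simp only [mem_nb, rs_adj]
      have := hst v hv.2 hv.1 y
      tauto
    have h6 := hcon.1 v hv.2 hv.1
    have := hK2 v
    rw [e]; split_ifs <;> omega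
  rw [Finset.sum_add_distrib, ← Finset.sum_filter] at h5
  simp only [Finset.sum_const, smul_eq_mul] at h5
  rw [Finset.card_erase_of_mem hzB] at h5
  omega

end Block

/-! ### Arcs of a Hamiltonian cycle -/

section Arcs
variable {G H : SimpleGraph V}

/-- `u` and `v` cut the Hamiltonian cycle `H` into the paths with vertex sets `S₁` and `S₂`. -/
def TwoArcs (H : SimpleGraph V) (u v : V) (S₁ S₂ : Finset V) : Prop :=
  ∃ A₁ A₂, Pth A₁ u v S₁ ∧ Pth A₂ u v S₂ ∧ A₁ ≤ H ∧ A₂ ≤ H ∧ S₁ ∪ S₂ = Finset.univ ∧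
    ∀ w ∈ S₁, w ∈ S₂ → w = u ∨ w = v

theorem TwoArcs.swap {u v : V} {S₁ S₂ : Finset V} (h : TwoArcs H u v S₁ S₂) :
    TwoArcs H u v S₂ S₁ := by
  obtain ⟨A₁, A₂, h1, h2, h3, h4, h5, h6⟩ := h
  exact ⟨A₂, A₁, h2, h1, h4, h3, by rwa [Finset.union_comm], fun w a b => h6 w b a⟩

theorem TwoArcs.rev {u v : V} {S₁ S₂ : Finset V} (h : TwoArcs H u v S₁ S₂) :
    TwoArcs H v u S₁ S₂ := by
  obtain ⟨A₁, A₂, h1, h2, h3, h4, h5, h6⟩ := h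
  exact ⟨A₁, A₂, h1.rev, h2.rev, h3, h4, h5, fun w a b => (h6 w a b).symm⟩

theorem TwoArcs.cut {u v w : V} {S₁ S₂ : Finset V} (h : TwoArcs H u v S₁ S₂) (hw : w ∈ S₁)
    (hwu : w ≠ u) (hwv : w ≠ v) (huv : u ≠ v) : ∃ S' S'', S' ∪ S'' = S₁ ∧ (∀ x ∈ S', x ∈ S'' → x = w) ∧
      TwoArcs H u w S' (S₂ ∪ S'') ∧ TwoArcs H v w S'' (S₂ ∪ S') ∧ u ∈ S' ∧ w ∈ S' ∧ v ∈ S'' ∧ w ∈ S'' := by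
  obtain ⟨A₁, A₂, h1, h2, h3, h4, h5, h6⟩ := h
  obtain ⟨B, C, S', S'', hB, hC, hBC, hS, hi⟩ := h1.split hw
  have m1 := hB.left_mem; have m2 := hB.right_mem
  have m3 := hC.left_mem; have m4 := hC.right_mem
  have hu : u ∉ S'' := fun h => hwu (hi u m1 h).symm
  have hv : v ∉ S' := fun h => hwv (hi v h m4).symm
  refine ⟨S', S'', hS, hi, ⟨B, A₂ ⊔ C, hB, h2.concat hC.rev ?_, le_trans (by simp [← hBC]) h3,
    sup_le h4 (le_trans (by simp [← hBC]) h3), ?_, ?_⟩, ⟨C, A₂ ⊔ B, hC.rev, h2.rev.concat hB ?_,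
    le_trans (by simp [← hBC]) h3, sup_le h4 (le_trans (by simp [← hBC]) h3), ?_, ?_⟩, m1, m2, m4, m3⟩
  · intro x hx hx'; have := h6 x (by grind) hx; grind
  · rw [← h5, ← hS]; ext x; simp; tauto
  · intro x hx hx'; have := h6 x (by grind); have := hi x hx; grind
  · intro x hx hx'; have := h6 x (by grind) hx; grind
  · rw [← h5, ← hS]; ext x; simp; tauto
  · intro x hx hx'; have := h6 x (by grind); have := hi x; grind

theorem arc_conn {A : SimpleGraph V} {u v : V} {S : Finset V} (h : Pth A u v S) (hA : A ≤ H)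
    (huv : u ≠ v) (hne : ((S.erase u).erase v).Nonempty) :
    ConnSet H ((S.erase u).erase v) ∧ (∃ p ∈ (S.erase u).erase v, H.Adj u p) ∧
      ∃ q ∈ (S.erase u).erase v, H.Adj v q := by
  obtain ⟨A', s', S', h', hs, rfl, rfl⟩ := h.ne_of_cons huv
  have e1 : (insert u S').erase u = S' := Finset.erase_insert hs
  rw [e1] at hne ⊢
  by_cases hs'v : v = s'
  · subst hs'v
    obtain ⟨x, hx⟩ := hne
    have := Pth.eq_nil h'
    grind
  obtain ⟨A'', t', S'', h'', hs'', rfl, rfl⟩ := h'.rev.ne_of_cons hs'v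
  have e2 : (insert v S'').erase v = S'' := Finset.erase_insert hs''
  rw [e2]
  have m1 := h''.left_mem; have m2 := h''.right_mem
  refine ⟨ConnSet.pth h'' (le_trans (le_trans le_sup_left le_sup_left) hA), ⟨s', m2, hA ?_⟩,
    ⟨t', m1, hA ?_⟩⟩
  · simp only [sup_adj, edge_adj]; grind
  · simp only [sup_adj, edge_adj]; grind

/-- `u` and `v` are not consecutive on `H`; `α` and `β` are the interiors of the two arcs. -/
def Arcs (H : SimpleGraph V) (u v : V) (α β : Finset V) : Prop :=
  ConnSet H α ∧ ConnSet H β ∧ (∀ x, x ∈ α ∨ x ∈ β ↔ x ≠ u ∧ x ≠ v) ∧ (∀ x, x ∈ α → x ∉ β) ∧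
    (∃ p ∈ β, ∃ q ∈ α, nb H v = {p, q}) ∧ ∃ p ∈ β, ∃ q ∈ α, nb H u = {p, q}

theorem Arcs.symm {u v : V} {α β : Finset V} (h : Arcs H u v α β) : Arcs H v u α β :=
  ⟨h.1, h.2.1, fun x => (h.2.2.1 x).trans and_comm, h.2.2.2.1, h.2.2.2.2.2, h.2.2.2.2.1⟩

theorem Arcs.swap {u v : V} {α β : Finset V} (h : Arcs H u v α β) : Arcs H u v β α := by
  obtain ⟨h1, h2, h3, h4, ⟨p, hp, q, hq, e⟩, p', hp', q', hq', e'⟩ := h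
  exact ⟨h2, h1, fun x => or_comm.trans (h3 x), fun x a b => h4 x b a,
    ⟨q, hq, p, hp, by rw [e, Finset.pair_comm]⟩, q', hq', p', hp', by rw [e', Finset.pair_comm]⟩

theorem TwoArcs.arcs {u v : V} {S₁ S₂ : Finset V} {τ : V → ℕ} (h : TwoArcs H u v S₁ S₂)
    (hH : ∀ x, dg H x = 2) (huv : u ≠ v) (hu : Odd (τ u)) (hv : Odd (τ v)) (hτ : Even (∑ x, τ x))
    (ho : Odd (∑ x ∈ (S₁.erase u).erase v, τ x)) :
    Arcs H u v ((S₂.erase u).erase v) ((S₁.erase u).erase v) := by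
  obtain ⟨A₁, A₂, h1, h2, h3, h4, h5, h6⟩ := h
  have cov : ∀ x, x ∈ S₁ ∨ x ∈ S₂ := fun x => by rw [← Finset.mem_union, h5]; simp
  have hd : Disjoint ((S₁.erase u).erase v) ((S₂.erase u).erase v) := by
    rw [Finset.disjoint_left]; intro x hx hx'; have := h6 x; grind
  have ho2 : Odd (∑ x ∈ (S₂.erase u).erase v, τ x) := by
    have e : (Finset.univ : Finset V) =
        insert u (insert v (((S₁.erase u).erase v) ∪ ((S₂.erase u).erase v))) := by
      ext x; have := cov x; simp; grind
    rw [e, Finset.sum_insert (by simp [huv]), Finset.sum_insert (by simp), Finset.sum_union hd] at hτ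
    grind
  have ne : ∀ S : Finset V, Odd (∑ x ∈ S, τ x) → S.Nonempty := by
    intro S hS; rw [Finset.nonempty_iff_ne_empty]; rintro rfl; simp at hS
  obtain ⟨c1, ⟨p', hp', up⟩, p, hp, vp⟩ := arc_conn h1 h3 huv (ne _ ho)
  obtain ⟨c2, ⟨q', hq', uq⟩, q, hq, vq⟩ := arc_conn h2 h4 huv (ne _ ho2)
  rw [Finset.disjoint_left] at hd
  have two : ∀ w a b, H.Adj w a → H.Adj w b → a ≠ b → nb H w = {a, b} := by
    intro w a b ha hb hab
    symm
    refine Finset.eq_of_subset_of_card_le ?_ ?_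
    · intro x hx; simp at hx; rcases hx with rfl | rfl <;> simpa
    · rw [Finset.card_pair hab]; exact (hH w).le
  refine ⟨c2, c1, fun x => ?_, fun x a b => hd b a, ⟨p, hp, q, hq, two v p q vp vq ?_⟩, p', hp', q',
    hq', two u p' q' up uq ?_⟩
  · have := cov x; simp; grind
  · rintro rfl; exact hd hp hq
  · rintro rfl; exact hd hp' hq'

/-- Of three vertices of odd weight, two cut `H` into arcs whose interiors both have odd weight. -/
theorem exists_arcs (hH : Ham G H) {τ : V → ℕ} (hτ : Even (∑ x, τ x)) {x y w : V} (hxy : x ≠ y)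
    (hxw : x ≠ w) (hyw : y ≠ w) (hx : Odd (τ x)) (hy : Odd (τ y)) (hw : Odd (τ w)) :
    ∃ u v α β, (u = x ∨ u = y ∨ u = w) ∧ (v = x ∨ v = y ∨ v = w) ∧ u ≠ v ∧ Arcs H u v α β ∧
      Odd (∑ t ∈ β, τ t) ∧ Odd (∑ t ∈ α, τ t) := by
  suffices ∃ u v α β, (u = x ∨ u = y ∨ u = w) ∧ (v = x ∨ v = y ∨ v = w) ∧ u ≠ v ∧ Arcs H u v α β ∧
      Odd (∑ t ∈ β, τ t) by
    obtain ⟨u, v, α, β, hu, hv, huv, hA, ho⟩ := this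
    refine ⟨u, v, α, β, hu, hv, huv, hA, ho, ?_⟩
    have e : (Finset.univ : Finset V) = insert u (insert v (α ∪ β)) := by
      ext t; have := hA.2.2.1 t; simp; grind
    have d : Disjoint α β := Finset.disjoint_left.mpr fun t => hA.2.2.2.1 t
    have hu' := hA.2.2.1 u; have hv' := hA.2.2.1 v
    have hu2 : Odd (τ u) := by rcases hu with rfl | rfl | rfl <;> assumption
    have hv2 : Odd (τ v) := by rcases hv with rfl | rfl | rfl <;> assumption
    rw [e, Finset.sum_insert (by simp; grind), Finset.sum_insert (by simp; grind),
      Finset.sum_union d] at hτ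
    clear hu' hv' hu hv
    grind
  have h2 := hH.dg_H
  obtain ⟨A, B, S, S', hA, hB, hAB, -, hS, hi⟩ := hH.1.split (v := x) (y := y) (by simp [hH.2.2])
    (by simp [hH.2.2]) hxy
  have base : TwoArcs H x y S S' := ⟨A, B, hA, hB, by simp [← hAB], by simp [← hAB],
    by rw [hS, hH.2.2], hi⟩
  obtain ⟨S₁, S₂, hT, hwS⟩ : ∃ S₁ S₂, TwoArcs H x y S₁ S₂ ∧ w ∈ S₁ := by
    have : w ∈ S ∪ S' := by rw [hS, hH.2.2]; simp
    rcases Finset.mem_union.mp this with h | h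
    exacts [⟨S, S', base, h⟩, ⟨S', S, base.swap, h⟩]
  by_cases o2 : Odd (∑ t ∈ (S₂.erase x).erase y, τ t)
  · exact ⟨x, y, _, _, by simp, by simp, hxy, hT.swap.arcs h2 hxy hx hy hτ o2, o2⟩
  obtain ⟨R, R', hR, hRi, t1, t2, xR, wR, yR, wR'⟩ := hT.cut hwS hxw.symm hyw.symm hxy
  by_cases o3 : Odd (∑ t ∈ (R.erase x).erase w, τ t)
  · exact ⟨x, w, _, _, by simp, by simp, hxw, t1.arcs h2 hxw hx hw hτ o3, o3⟩
  refine ⟨y, w, _, _, by simp, by simp, hyw, t2.arcs h2 hyw hy hw hτ ?_, ?_⟩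
  all_goals
  · obtain ⟨_, _, _, _, _, _, hu, h6⟩ := hT
    have cov : ∀ t, t ∈ S₁ ∨ t ∈ S₂ := fun t => by rw [← Finset.mem_union, hu]; simp
    have e : (Finset.univ : Finset V) = insert x (insert y (insert w
      (((S₂.erase x).erase y) ∪ (((R.erase x).erase w) ∪ ((R'.erase y).erase w))))) := by
      ext t; have := cov t; simp; grind
    have d1 : Disjoint ((R.erase x).erase w) ((R'.erase y).erase w) := by
      rw [Finset.disjoint_left]; intro t ht ht'; have := hRi t; grind
    have d2 : Disjoint ((S₂.erase x).erase y) (((R.erase x).erase w) ∪ ((R'.erase y).erase w)) := by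
      rw [Finset.disjoint_left]; intro t ht ht'; have := h6 t; grind
    have hw2 : w ∉ S₂ := fun h => by have := h6 w hwS h; grind
    have hxR' : x ∉ R' := fun h => by have := hRi x xR h; grind
    have hyR : y ∉ R := fun h => by have := hRi y h yR; grind
    rw [e, Finset.sum_insert (by simp; grind), Finset.sum_insert (by simp; grind),
      Finset.sum_insert (by simp; grind), Finset.sum_union d2, Finset.sum_union d1] at hτ
    clear d1 d2 e cov t1 t2 h6 hRi base hi hu
    grind

theorem Ham.conn_erase (h : Ham G H) (v : V) : ConnSet H (Finset.univ.erase v) := by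
  have h2 := h.dg_H v
  obtain ⟨p, q, hpq, hnb⟩ := Finset.card_eq_two.mp h2
  have hp : H.Adj v p := (nb_adj hnb p).2 (by simp)
  obtain ⟨A, B, S, S', hA, hB, hAB, hd, hS, hi⟩ := h.1.split (v := v) (y := p) (by simp [h.2.2])
    (by simp [h.2.2]) hp.ne
  have key : ∀ {A : SimpleGraph V} {S : Finset V}, Pth A v p S → A ≤ H → ConnSet H (S.erase v) := by
    intro A S hA hAH
    obtain ⟨A', s', S', h', hs, rfl, rfl⟩ := hA.ne_of_cons hp.ne
    rw [Finset.erase_insert hs]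
    exact ConnSet.pth h' (le_trans le_sup_left hAH)
  have := (key hA (by simp [← hAB])).union (key hB (by simp [← hAB])) (a := p) (b := p)
    (by simp [hp.ne.symm, hA.right_mem]) (by simp [hp.ne.symm, hB.right_mem]) (Or.inr rfl)
  rwa [← Finset.erase_union_distrib, hS, h.2.2] at this

end Arcs

/-! ### Corrections with prescribed edges -/

section Prescribed
variable {G H T : SimpleGraph V}

/-- Finishing with a correction `J` whose edges `P` at the vertex set `A` are prescribed. The rest of
`J` lives on the complement of `A`, which is connected in `T ⊔ H`, or falls into two `H`-connected
parts whose parities are right. -/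
theorem good_pre (hp : IsPlanar G) (hH : Ham G H) (hn : Odd (Fintype.card V)) (hT : IsCyc T)
    (hTG : T ≤ G \ H) {P : SimpleGraph V} {A : Finset V} (hP : P ≤ T ⊔ H)
    (hPA : ∀ a b, P.Adj a b → a ∈ A ∨ b ∈ A) (hpar : ∀ v ∈ A, Even (dg (G \ H) v + dg P v))
    (hW : ConnSet (T ⊔ H) Aᶜ ∨ ∃ α β, ConnSet H α ∧ ConnSet H β ∧ (∀ x, x ∈ α ∨ x ∈ β ↔ x ∉ A) ∧
      (∀ x, x ∈ α → x ∉ β) ∧ Even (∑ x ∈ β, (dg (G \ H) x + dg P x)))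
    {u v : V} (huA : u ∈ A) (hvA : v ∈ A)
    (hu : ∃ x y, nb (((G \ H) \ T) ⊔ P) u = {x, y} ∧ x ≠ y ∧ ¬ G.Adj x y)
    (hv : ∃ x y, nb (((G \ H) \ T) ⊔ ((T ⊔ H) \ P)) v = {x, y} ∧ x ≠ y ∧ ¬ G.Adj x y) :
    Good G H := by
  have hTG' := hTG.trans sdiff_le
  have c0 : T ⊔ H ≤ G := sup_le hTG' hH.2.1
  have htot : Even (∑ x ∈ Aᶜ, (dg (G \ H) x + dg P x)) := by
    have h1 : Even (∑ x, (dg (G \ H) x + dg P x)) := by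
      rw [Finset.sum_add_distrib]; exact (even_sum_dg _).add (even_sum_dg _)
    rw [← Finset.sum_add_sum_compl A, Nat.even_add] at h1
    exact h1.1 (Finset.even_sum _ hpar)
  obtain ⟨J', hJ', hJ'p⟩ : ∃ J', Ins J' (T ⊔ H) Aᶜ ∧
      ∀ x ∈ Aᶜ, Even (dg J' x + (dg (G \ H) x + dg P x)) := by
    rcases hW with hW | ⟨α, β, hα, hβ, hcov, hdis, hev⟩
    · exact exists_join hW _ htot
    · have e : Aᶜ = α ∪ β := by ext x; simp [← hcov]
      have d : Disjoint α β := Finset.disjoint_left.mpr fun x => hdis x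
      have hev' : Even (∑ x ∈ α, (dg (G \ H) x + dg P x)) := by
        rw [e, Finset.sum_union d, Nat.even_add] at htot
        exact htot.2 hev
      obtain ⟨J₁, i1, p1⟩ := exists_join (hα.mono (le_sup_right : H ≤ T ⊔ H)) _ hev'
      obtain ⟨J₂, i2, p2⟩ := exists_join (hβ.mono (le_sup_right : H ≤ T ⊔ H)) _ hev
      have dJ : Disjoint J₁ J₂ := by
        rw [disjoint_left]; intro a b h1 h2; exact hdis a (i1.2 _ _ h1) (i2.2 _ _ h2)
      refine ⟨J₁ ⊔ J₂, ⟨sup_le i1.1 i2.1, ?_⟩, ?_⟩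
      · rintro a b (h | h)
        · rw [e]; exact Finset.mem_union_left _ (i1.2 _ _ h)
        · rw [e]; exact Finset.mem_union_right _ (i2.2 _ _ h)
      · intro x hx
        rw [dg_sup dJ]
        rw [e, Finset.mem_union] at hx
        rcases hx with h | h
        · rw [i2.dg_eq_zero (hdis x h), add_zero]; exact p1 x h
        · rw [i1.dg_eq_zero (fun h' => hdis x h' h), zero_add]; exact p2 x h
  have dPJ : Disjoint P J' := by
    rw [disjoint_left]; intro a b h1 h2
    have m1 := hJ'.2 _ _ h2; have m2 := hJ'.2 _ _ h2.symm
    simp at m1 m2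
    rcases hPA a b h1 with h | h
    exacts [m1 h, m2 h]
  have J'v : ∀ v ∈ A, ∀ b, ¬ J'.Adj v b := by
    intro v hv b hb
    have := hJ'.2 _ _ hb; simp at this; exact this hv
  refine good_odd hp hH.1 hH.2.1 hn hT hTG (J := P ⊔ J') (sup_le hP hJ'.1) ?_ (u := u) (v := v)
    (Or.inr ?_) (Or.inr ?_)
  · intro x
    rw [dg_sup dPJ]
    by_cases hx : x ∈ A
    · rw [hJ'.dg_eq_zero (by simpa), add_zero]; exact hpar x hx
    · have := hJ'p x (by simpa using hx)
      convert this using 1; ring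
  · obtain ⟨x, y, e, hxy, hadj⟩ := hu
    refine ⟨x, y, ?_, hxy, fun h => hadj ?_⟩
    · rw [← e]; ext t; have := J'v u huA t; simp only [mem_nb, sup_adj, sdiff_adj]; tauto
    · rcases h with h | h | h
      exacts [h.1.1, c0 (hP h), c0 (hJ'.1 h)]
  · obtain ⟨x, y, e, hxy, hadj⟩ := hv
    refine ⟨x, y, ?_, hxy, fun h => hadj ?_⟩
    · rw [← e]; ext t; have := J'v v hvA t; simp only [mem_nb, sup_adj, sdiff_adj]; tauto
    · rcases h with h | h
      exacts [h.1.1, c0 h.1]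

/-- A vertex with exactly two chords, both in a cycle of chords, finishes the odd case. -/
theorem good_two (hp : IsPlanar G) (h4 : Con4 G) (hH : Ham G H) (hn : Odd (Fintype.card V))
    (hT : IsCyc T) (hTG : T ≤ G \ H) {v : V} (hv : v ∈ sp T) (hd : dg (G \ H) v = 2) :
    Good G H := by
  obtain ⟨a, b, hab, hK⟩ := Finset.card_eq_two.mp hd
  obtain ⟨p, q, hpq, hHv⟩ := Finset.card_eq_two.mp (hH.dg_H v)
  have hTv : nb T v = {a, b} := by
    rw [← hK]
    refine Finset.eq_of_subset_of_card_le (fun w => by rw [mem_nb, mem_nb]; exact fun h => hTG h) ?_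
    change dg (G \ H) v ≤ dg T v
    rw [hd, hT.dg_two hv]
  have kK := nb_adj hK; have kH := nb_adj hHv; have kT := nb_adj hTv
  have hdis : ∀ x, (G \ H).Adj v x → ¬ H.Adj v x := fun x h => by rw [sdiff_adj] at h; exact h.2
  have hap : a ≠ p ∧ a ≠ q ∧ b ≠ p ∧ b ≠ q := by
    have h1 := hdis a ((kK a).2 (by simp)); have h2 := hdis b ((kK b).2 (by simp))
    rw [kH] at h1 h2; tauto
  have gv : ∀ x, x = a ∨ x = b ∨ x = p ∨ x = q → G.Adj v x := by
    rintro x (rfl | rfl | rfl | rfl)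
    · exact sdiff_le (a := G) (b := H) ((kK x).2 (by simp))
    · exact sdiff_le (a := G) (b := H) ((kK x).2 (by simp))
    · exact hH.2.1 ((kH x).2 (by simp))
    · exact hH.2.1 ((kH x).2 (by simp))
  have hd5 : dg G v ≤ 5 := by rw [← hH.dg_K, hd]; omega
  have tri : ∀ x y z, G.Adj v x → G.Adj v y → G.Adj v z → G.Adj x y → G.Adj x z → G.Adj y z → False :=
    fun x y z => no_K4 hp h4
  have star : ∀ x y z t, G.Adj v x → G.Adj v y → G.Adj v z → G.Adj v t → G.Adj x y → G.Adj x z →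
    G.Adj x t → y ≠ z → y ≠ t → z ≠ t → False := fun x y z t => no_star hp h4 hd5
  have main : ∀ s t s' t', s ≠ t → s' ≠ t' → ¬ G.Adj s t → ¬ G.Adj s' t' →
      (∀ x, (x = s ∨ x = t ∨ x = s' ∨ x = t') ↔ (x = a ∨ x = b ∨ x = p ∨ x = q)) →
      s ≠ s' → s ≠ t' → t ≠ s' → t ≠ t' → Good G H := by
    intro s t s' t' hst hst' n1 n2 hx n3 n4 n5 n6
    have hZ : ∀ x, (T ⊔ H).Adj v x ↔ (x = s ∨ x = t ∨ x = s' ∨ x = t') := by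
      intro x; rw [hx, sup_adj, kT, kH]; tauto
    have zs := (hZ s).2 (by simp); have zt := (hZ t).2 (by simp)
    have hKT : ∀ x, ¬ ((G \ H) \ T).Adj v x := by
      intro x h; rw [sdiff_adj, kK, kT] at h; tauto
    have hPv : ∀ x, (edge v s ⊔ edge v t).Adj v x ↔ x = s ∨ x = t := by
      intro x; simp only [sup_adj, edge_adj]; have := zs.ne; have := zt.ne; grind
    have dgP : dg (edge v s ⊔ edge v t) v = 2 := by
      have : nb (edge v s ⊔ edge v t) v = {s, t} := by ext x; simp [mem_nb, hPv]
      rw [dg, this, Finset.card_pair hst]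
    refine good_pre hp hH hn hT hTG (P := edge v s ⊔ edge v t) (A := {v})
      (sup_le (edge_le' zs) (edge_le' zt)) ?_ ?_ (Or.inl ?_) (u := v) (v := v) (by simp) (by simp)
      ⟨s, t, ?_, hst, n1⟩ ⟨s', t', ?_, hst', n2⟩
    · intro x y h; simp only [sup_adj, edge_adj] at h; simp; tauto
    · intro x hx; rw [Finset.mem_singleton] at hx; subst hx; rw [dgP, hd]; decide
    · have := (hH.conn_erase v).mono (le_sup_right : H ≤ T ⊔ H)
      convert this using 1; ext x; simp
    · ext x; have h1 := hKT x; have h2 := hPv x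
      rw [mem_nb, sup_adj, h2, Finset.mem_insert, Finset.mem_singleton]
      exact or_iff_right h1
    · ext x; have h1 := hKT x; have h2 := hPv x; have h3 := hZ x
      have e : ((T ⊔ H) \ (edge v s ⊔ edge v t)).Adj v x ↔
        (T ⊔ H).Adj v x ∧ ¬ (edge v s ⊔ edge v t).Adj v x := sdiff_adj ..
      rw [mem_nb, sup_adj, e, h2, h3, Finset.mem_insert, Finset.mem_singleton]
      refine (or_iff_right h1).trans ?_
      clear hx tri star e h1 h2 h3
      grind
  obtain ⟨h1, h2, h3, h4'⟩ := hap
  have ga := gv a (by simp); have gb := gv b (by simp)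
  have gp := gv p (by simp); have gq := gv q (by simp)
  by_contra hcon
  have m1 : G.Adj a b ∨ G.Adj p q := by
    by_contra! hc
    exact hcon (main a b p q hab hpq hc.1 hc.2 (by simp) h1 h2 h3 h4')
  have m2 : G.Adj a p ∨ G.Adj b q := by
    by_contra! hc
    exact hcon (main a p b q h1 h4' hc.1 hc.2 (fun x => by rw [or_left_comm (b := x = b)]) hab h2 h3.symm hpq)
  have m3 : G.Adj a q ∨ G.Adj b p := by
    by_contra! hc
    exact hcon (main a q b p h2 h3 hc.1 hc.2 (fun x => by
      constructor <;> (rintro (h | h | h | h) <;> simp [h])) hab h1 h4'.symm hpq.symm)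
  have sy := G.symm
  rcases m1 with e1 | e1 <;> rcases m2 with e2 | e2 <;> rcases m3 with e3 | e3
  · exact star a b p q ga gb gp gq e1 e2 e3 h3 h4' hpq
  · exact tri a b p ga gb gp e1 e2 e3
  · exact tri a b q ga gb gq e1 e3 e2
  · exact star b a q p gb ga gq gp e1.symm e2 e3 h2 h1 hpq.symm
  · exact tri a p q ga gp gq e2 e3 e1
  · exact star p a q b gp ga gq gb e2.symm e1 e3.symm h2 hab h4'.symm
  · exact star q a p b gq ga gp gb e3.symm e1.symm e2.symm h1 hab h3.symm
  · exact tri b p q gb gp gq e3 e2 e1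

end Prescribed

/-! ### Vertices with three chords -/

section Stars
variable {G H T : SimpleGraph V} {α β : Finset V}

/-- The union of the stars joining `u` to `Nu` and `v` to `Nv`. -/
def stars (u v : V) (Nu Nv : Finset V) : SimpleGraph V :=
  SimpleGraph.fromRel fun s t => (s = v ∧ t ∈ Nv) ∨ (s = u ∧ t ∈ Nu)

theorem stars_adj {u v : V} {Nu Nv : Finset V} (hu : u ∉ Nu) (hv : v ∉ Nv) {s t : V} :
    (stars u v Nu Nv).Adj s t ↔
      (s = v ∧ t ∈ Nv) ∨ (s = u ∧ t ∈ Nu) ∨ (t = v ∧ s ∈ Nv) ∨ (t = u ∧ s ∈ Nu) := by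
  rw [stars, SimpleGraph.fromRel_adj]; grind

/-- `good_pre` for two vertices `u`, `v` of chord degree three whose arcs have odd parity: the
correction joins `u` to `Nu` and `v` to `Nv`. -/
theorem good_star (hp : IsPlanar G) (hH : Ham G H) (hn : Odd (Fintype.card V)) (hT : IsCyc T)
    (hTG : T ≤ G \ H) {u v : V} (huv : u ≠ v) (hA : Arcs H u v α β)
    (hβ : Odd (∑ x ∈ β, dg (G \ H) x)) (du : dg (G \ H) u = 3) (dv : dg (G \ H) v = 3)
    {Nu Nv : Finset V} (hNu : ∀ x ∈ Nu, (T ⊔ H).Adj u x ∧ x ≠ v)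
    (hNv : ∀ x ∈ Nv, (T ⊔ H).Adj v x ∧ x ≠ u) (cu : Odd Nu.card) (cv : Odd Nv.card)
    (hc : (∃ s ∈ α, ∃ t ∈ β, T.Adj s t) ∨
      Odd ((β.filter (· ∈ Nv)).card + (β.filter (· ∈ Nu)).card))
    (hu : ∃ x y, (∀ w, ((G \ H) \ T).Adj u w ∨ w ∈ Nu ↔ w = x ∨ w = y) ∧ x ≠ y ∧ ¬ G.Adj x y)
    (hv : ∃ x y, (∀ w, ((G \ H) \ T).Adj v w ∨ ((T ⊔ H).Adj v w ∧ w ∉ Nv) ↔ w = x ∨ w = y) ∧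
      x ≠ y ∧ ¬ G.Adj x y) : Good G H := by
  have hu0 : u ∉ Nu := fun h => (hNu u h).1.ne rfl
  have hv0 : v ∉ Nv := fun h => (hNv v h).1.ne rfl
  have hu1 : u ∉ Nv := fun h => (hNv u h).2 rfl
  have hv1 : v ∉ Nu := fun h => (hNu v h).2 rfl
  obtain ⟨P, hP⟩ : ∃ P, P = stars u v Nu Nv := ⟨_, rfl⟩
  have pa : ∀ s t, P.Adj s t ↔
      (s = v ∧ t ∈ Nv) ∨ (s = u ∧ t ∈ Nu) ∨ (t = v ∧ s ∈ Nv) ∨ (t = u ∧ s ∈ Nu) := by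
    intro s t; rw [hP]; exact stars_adj hu0 hv0
  have pu : ∀ w, P.Adj u w ↔ w ∈ Nu := by intro w; rw [pa]; grind
  have pv : ∀ w, P.Adj v w ↔ w ∈ Nv := by intro w; rw [pa]; grind
  obtain ⟨c1, c2, c3, c4, -, -⟩ := hA
  have hsum : ∑ x ∈ β, dg P x = (β.filter (· ∈ Nv)).card + (β.filter (· ∈ Nu)).card := by
    rw [Finset.card_filter, Finset.card_filter, ← Finset.sum_add_distrib]
    refine Finset.sum_congr rfl fun x hx => ?_
    have hx' := (c3 x).1 (Or.inr hx)
    have e : nb P x = (if x ∈ Nv then {v} else ∅) ∪ (if x ∈ Nu then {u} else ∅) := by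
      ext w; rw [mem_nb, pa]; split_ifs <;> simp <;> grind
    rw [dg, e, Finset.card_union_of_disjoint]
    · split_ifs <;> simp
    · rw [Finset.disjoint_left]; split_ifs <;> simp [huv.symm]
  have hmem : ∀ x, x ∈ ({u, v} : Finset V) ↔ x = u ∨ x = v := by simp
  refine good_pre hp hH hn hT hTG (P := P) (A := {u, v}) ?_ ?_ ?_ ?_ (u := u) (v := v)
    (by simp) (by simp) ?_ ?_
  · intro s t h
    rcases (pa s t).1 h with ⟨rfl, h⟩ | ⟨rfl, h⟩ | ⟨rfl, h⟩ | ⟨rfl, h⟩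
    exacts [(hNv _ h).1, (hNu _ h).1, (hNv _ h).1.symm, (hNu _ h).1.symm]
  · intro s t h; rw [hmem, hmem]; rw [pa] at h; tauto
  · intro x hx
    have e1 : nb P u = Nu := by ext w; rw [mem_nb, pu]
    have e2 : nb P v = Nv := by ext w; rw [mem_nb, pv]
    rcases (hmem x).1 hx with rfl | rfl
    · rw [du, dg, e1]; exact Odd.add_odd (by decide) cu
    · rw [dv, dg, e2]; exact Odd.add_odd (by decide) cv
  · rcases hc with ⟨s, hs, t, ht, hst⟩ | hc
    · left
      have e : ({u, v} : Finset V)ᶜ = α ∪ β := by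
        ext x; rw [Finset.mem_compl, hmem, Finset.mem_union, c3]; tauto
      rw [e]
      exact (c1.mono le_sup_right).union (c2.mono le_sup_right) hs ht (Or.inl (Or.inl hst))
    · right
      refine ⟨α, β, c1, c2, fun x => by rw [hmem, c3]; tauto, c4, ?_⟩
      rw [Finset.sum_add_distrib, hsum]
      exact hβ.add_odd hc
  · obtain ⟨x, y, e, h⟩ := hu
    refine ⟨x, y, ?_, h⟩
    ext w; rw [mem_nb, sup_adj, pu, e]; simp
  · obtain ⟨x, y, e, h⟩ := hv
    refine ⟨x, y, ?_, h⟩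
    have e' : ∀ w, ((T ⊔ H) \ P).Adj v w ↔ (T ⊔ H).Adj v w ∧ ¬ P.Adj v w := fun w => sdiff_adj ..
    ext w; rw [mem_nb, sup_adj, e', pv, e]; simp

/-- The neighbourhood of a vertex `v` of chord degree three on a cycle `T` of chords: the chords go
to `a`, `b`, `c`, those to `a` and `b` lie in `T`, and the neighbours on `H` are `p ∈ β`, `q ∈ α`. -/
structure Loc (G H T : SimpleGraph V) (α β : Finset V) (v a b c p q : V) : Prop where
  tv : ∀ w, T.Adj v w ↔ w = a ∨ w = b
  kv : ∀ w, (G \ H).Adj v w ↔ w = a ∨ w = b ∨ w = c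
  hv : ∀ w, H.Adj v w ↔ w = p ∨ w = q
  hp : p ∈ β
  hq : q ∈ α
  hab : a ≠ b
  hac : a ≠ c
  hbc : b ≠ c

theorem Loc.swap {v a b c p q : V} (h : Loc G H T α β v a b c p q) :
    Loc G H T α β v b a c p q :=
  ⟨fun w => by rw [h.tv, or_comm], fun w => by rw [h.kv, or_left_comm], h.hv, h.hp, h.hq,
    h.hab.symm, h.hbc, h.hac⟩

theorem Loc.re {T' : SimpleGraph V} {v a b c p q : V} (h : Loc G H T α β v a b c p q)
    (ht : ∀ w, T'.Adj v w ↔ w = a ∨ w = c) : Loc G H T' α β v a c b p q :=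
  ⟨ht, fun w => by rw [h.kv, or_comm (a := w = b)], h.hv, h.hp, h.hq, h.hac, h.hab, h.hbc.symm⟩

theorem Loc.same {T' : SimpleGraph V} {v a b c p q : V} (h : Loc G H T α β v a b c p q)
    (ht : nb T' v = nb T v) : Loc G H T' α β v a b c p q :=
  ⟨fun w => by rw [← h.tv, ← mem_nb, ht, mem_nb], h.kv, h.hv, h.hp, h.hq, h.hab, h.hac, h.hbc⟩

theorem Loc.ne {v a b c p q : V} (h : Loc G H T α β v a b c p q) :
    p ≠ a ∧ p ≠ b ∧ p ≠ c ∧ q ≠ a ∧ q ≠ b ∧ q ≠ c := by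
  have h1 : ∀ x, (G \ H).Adj v x → ¬ H.Adj v x := fun x h => by rw [sdiff_adj] at h; exact h.2
  have k := h.kv; have l := h.hv
  have k1 := h1 a; have k2 := h1 b; have k3 := h1 c
  rw [k, l] at k1 k2 k3
  grind

theorem Loc.adj {v a b c p q : V} (h : Loc G H T α β v a b c p q) (hH : H ≤ G) {x : V}
    (hx : x = a ∨ x = b ∨ x = c ∨ x = p ∨ x = q) : G.Adj v x := by
  rcases hx with hx | hx | hx | hx
  · exact sdiff_le (a := G) (b := H) ((h.kv x).2 (by simp [hx]))
  · exact sdiff_le (a := G) (b := H) ((h.kv x).2 (by simp [hx]))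
  · exact sdiff_le (a := G) (b := H) ((h.kv x).2 (by simp [hx]))
  · exact hH ((h.hv x).2 hx)

theorem exists_loc (hT : IsCyc T) (hTG : T ≤ G \ H) {u v : V} (hA : Arcs H u v α β)
    (hv : v ∈ sp T) (dv : dg (G \ H) v = 3) : ∃ a b c p q, Loc G H T α β v a b c p q := by
  obtain ⟨-, -, -, -, ⟨p, hp, q, hq, hHv⟩, -⟩ := hA
  obtain ⟨a, b, hab, hTv⟩ := Finset.card_eq_two.mp (hT.dg_two hv)
  have hs : nb T v ⊆ nb (G \ H) v := fun w => by rw [mem_nb, mem_nb]; exact fun h => hTG h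
  have hc : (nb (G \ H) v \ nb T v).card = 1 := by
    rw [Finset.card_sdiff_of_subset hs]
    change dg (G \ H) v - dg T v = 1
    rw [dv, hT.dg_two hv]
  obtain ⟨c, hc⟩ := Finset.card_eq_one.mp hc
  have e : nb (G \ H) v = {a, b} ∪ {c} := by
    rw [← hc, ← hTv, Finset.union_sdiff_of_subset hs]
  have hc' : c ∉ nb T v := (Finset.mem_sdiff.1 (hc ▸ Finset.mem_singleton_self c)).2
  rw [hTv] at hc'
  refine ⟨a, b, c, p, q, nb_adj hTv, fun w => ?_, nb_adj hHv, hp, hq, hab, ?_, ?_⟩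
  · rw [← mem_nb, e]; simp
  · rintro rfl; simp at hc'
  · rintro rfl; simp at hc'

end Stars

/-! ### Prescribed edges at two vertices with three chords -/

section Local
variable {G H T : SimpleGraph V} {α β : Finset V} {u v : V}

/-- The situation at two non-consecutive vertices `u`, `v` of chord degree three that cut `H` into
arcs `α`, `β` of odd chord parity. -/
structure Cfg (G H : SimpleGraph V) (α β : Finset V) (u v : V) : Prop where
  hp : IsPlanar G
  h4 : Con4 G
  hH : Ham G H
  hn : Odd (Fintype.card V)
  huv : u ≠ v
  hA : Arcs H u v α β
  hβ : Odd (∑ x ∈ β, dg (G \ H) x)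
  du : dg (G \ H) u = 3
  dv : dg (G \ H) v = 3

theorem Cfg.symm (h : Cfg G H α β u v) : Cfg G H α β v u :=
  ⟨h.hp, h.h4, h.hH, h.hn, h.huv.symm, h.hA.symm, h.hβ, h.dv, h.du⟩

theorem Cfg.mem (h : Cfg G H α β u v) {x : V} (h1 : x ≠ u) (h2 : x ≠ v) : x ∈ α ↔ x ∉ β := by
  have := (h.hA.2.2.1 x).2 ⟨h1, h2⟩; have := h.hA.2.2.2.1 x; tauto

theorem Cfg.not_mem (h : Cfg G H α β u v) : u ∉ α ∧ u ∉ β ∧ v ∉ α ∧ v ∉ β := by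
  have := (h.hA.2.2.1 u).1; have := (h.hA.2.2.1 v).1; tauto

/-- Two vertices of chord degree three not joined by an edge of `T`: the correction takes
three of the four edges of `T ⊔ H` at `v`, and one at `u`. -/
theorem Cfg.s1 (h : Cfg G H α β u v) (hT : IsCyc T) (hTG : T ≤ G \ H)
    {a b c p q a' b' c' p' q' x x' : V} (lv : Loc G H T α β v a b c p q)
    (lu : Loc G H T α β u a' b' c' p' q') (hTuv : ¬ T.Adj u v)
    (hx : x = a ∨ x = b ∨ x = p ∨ x = q) (hx' : x' = a' ∨ x' = b' ∨ x' = p' ∨ x' = q')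
    (nx : ¬ G.Adj c x) (nx' : ¬ G.Adj c' x')
    (hc : (∃ s ∈ α, ∃ t ∈ β, T.Adj s t) ∨ ((x ∈ β ↔ x' ∈ β) ↔ (a ∈ β ↔ b ∈ β))) : Good G H := by
  obtain ⟨n1, n2, n3, n4, n5, n6⟩ := lv.ne
  obtain ⟨n1', n2', n3', n4', n5', n6'⟩ := lu.ne
  have hpq : p ≠ q := fun e => h.hA.2.2.2.1 q lv.hq (e ▸ lv.hp)
  have hqβ := h.hA.2.2.2.1 q lv.hq
  have hpβ := lv.hp
  obtain ⟨m1, m2, m3, m4⟩ := h.not_mem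
  have hab := lv.hab; have hac := lv.hac; have hbc := lv.hbc
  have hac' := lu.hac; have hbc' := lu.hbc
  have zv : ∀ w, (T ⊔ H).Adj v w ↔ w = a ∨ w = b ∨ w = p ∨ w = q := by
    intro w; rw [sup_adj, lv.tv, lv.hv, or_assoc]
  have zu : ∀ w, (T ⊔ H).Adj u w ↔ w = a' ∨ w = b' ∨ w = p' ∨ w = q' := by
    intro w; rw [sup_adj, lu.tv, lu.hv, or_assoc]
  have hZuv : ¬ (T ⊔ H).Adj u v := by
    rintro (e | e)
    · exact hTuv e
    · rw [lu.hv] at e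
      rcases e with e | e
      · exact m4 (e ▸ lu.hp)
      · exact m3 (e ▸ lu.hq)
  have na : a ∉ ({b, p, q} : Finset V) := by simp [hab, n1.symm, n4.symm]
  have nb' : b ∉ ({p, q} : Finset V) := by simp [n2.symm, n5.symm]
  have c4 : ({a, b, p, q} : Finset V).card = 4 := by
    rw [Finset.card_insert_of_notMem na, Finset.card_insert_of_notMem nb',
      Finset.card_pair hpq]
  have mS : x ∈ ({a, b, p, q} : Finset V) := by simpa using hx
  have kv : ∀ w, ((G \ H) \ T).Adj v w ↔ w = c := by
    intro w
    have e : ((G \ H) \ T).Adj v w ↔ (G \ H).Adj v w ∧ ¬ T.Adj v w := sdiff_adj ..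
    rw [e, lv.kv, lv.tv]; grind
  have ku : ∀ w, ((G \ H) \ T).Adj u w ↔ w = c' := by
    intro w
    have e : ((G \ H) \ T).Adj u w ↔ (G \ H).Adj u w ∧ ¬ T.Adj u w := sdiff_adj ..
    rw [e, lu.kv, lu.tv]; grind
  refine good_star h.hp h.hH h.hn hT hTG h.huv h.hA h.hβ h.du h.dv (Nu := {x'})
    (Nv := ({a, b, p, q} : Finset V).erase x) ?_ ?_ (by simp) ?_ (hc.imp_right fun hc => ?_)
    ⟨c', x', ?_, ?_, nx'⟩ ⟨c, x, ?_, ?_, nx⟩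
  · intro w hw
    rw [Finset.mem_singleton] at hw
    have := (zu w).2 (by rw [hw]; exact hx')
    refine ⟨this, ?_⟩
    rintro rfl; exact hZuv this
  · intro w hw
    have := (zv w).2 (by simpa using Finset.mem_of_mem_erase hw)
    refine ⟨this, ?_⟩
    rintro rfl; exact hZuv this.symm
  · rw [Finset.card_erase_of_mem mS, c4]; decide
  · have e1 : (β.filter (· ∈ ({x'} : Finset V))).card = if x' ∈ β then 1 else 0 := by
      split_ifs with hb
      · rw [Finset.card_eq_one]; refine ⟨x', ?_⟩; ext w; simp; rintro rfl; exact hb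
      · rw [Finset.card_eq_zero]; ext w; simp; rintro hw rfl; exact hb hw
    have e2 : (β.filter (· ∈ ({a, b, p, q} : Finset V).erase x)).card + (if x ∈ β then 1 else 0)
        = (if a ∈ β then 1 else 0) + (if b ∈ β then 1 else 0) + 1 := by
      have f1 : ∑ w ∈ ({a, b, p, q} : Finset V), (if w ∈ β then 1 else 0) =
          (if a ∈ β then 1 else 0) + (if b ∈ β then 1 else 0) + 1 := by
        rw [Finset.sum_insert na, Finset.sum_insert nb',
          Finset.sum_pair hpq, if_pos hpβ, if_neg hqβ]
        ring
      rw [← f1, ← Finset.sum_erase_add _ _ mS, ← Finset.card_filter]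
      congr 2; ext w; simp only [Finset.mem_filter]; exact and_comm
    rw [e1]
    clear mS c4 kv ku zv zu
    grind
  · intro w; rw [ku, Finset.mem_singleton]
  · rintro rfl; grind
  · intro w; rw [kv, zv, Finset.mem_erase]; simp; grind
  · rintro rfl; grind

/-- Two vertices of chord degree three joined by an edge of `T`: at `v`, the correction takes all
edges of `T ⊔ H` except `uv`; at `u`, a single one. -/
theorem Cfg.s2 (h : Cfg G H α β u v) (hT : IsCyc T) (hTG : T ≤ G \ H)
    {a c p q a' c' p' q' x' : V} (lv : Loc G H T α β v a u c p q)
    (lu : Loc G H T α β u a' v c' p' q')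
    (hx' : x' = a' ∨ x' = p' ∨ x' = q')
    (nx : ¬ G.Adj c u) (nx' : ¬ G.Adj c' x')
    (hc : (∃ s ∈ α, ∃ t ∈ β, T.Adj s t) ∨ (x' ∈ β ↔ a ∈ β)) : Good G H := by
  obtain ⟨n1, n2, n3, n4, n5, n6⟩ := lv.ne
  obtain ⟨n1', n2', n3', n4', n5', n6'⟩ := lu.ne
  have hpq : p ≠ q := fun e => h.hA.2.2.2.1 q lv.hq (e ▸ lv.hp)
  have hqβ := h.hA.2.2.2.1 q lv.hq
  have hpβ := lv.hp
  have hab := lv.hab; have hac := lv.hac; have hbc := lv.hbc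
  have hab' := lu.hab; have hac' := lu.hac; have hbc' := lu.hbc
  have zv : ∀ w, (T ⊔ H).Adj v w ↔ w = a ∨ w = u ∨ w = p ∨ w = q := by
    intro w; rw [sup_adj, lv.tv, lv.hv, or_assoc]
  have zu : ∀ w, (T ⊔ H).Adj u w ↔ w = a' ∨ w = v ∨ w = p' ∨ w = q' := by
    intro w; rw [sup_adj, lu.tv, lu.hv, or_assoc]
  have na : a ∉ ({p, q} : Finset V) := by simp [n1.symm, n4.symm]
  have c4 : ({a, p, q} : Finset V).card = 3 := by
    rw [Finset.card_insert_of_notMem na, Finset.card_pair hpq]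
  have kv : ∀ w, ((G \ H) \ T).Adj v w ↔ w = c := by
    intro w
    have e : ((G \ H) \ T).Adj v w ↔ (G \ H).Adj v w ∧ ¬ T.Adj v w := sdiff_adj ..
    rw [e, lv.kv, lv.tv]; grind
  have ku : ∀ w, ((G \ H) \ T).Adj u w ↔ w = c' := by
    intro w
    have e : ((G \ H) \ T).Adj u w ↔ (G \ H).Adj u w ∧ ¬ T.Adj u w := sdiff_adj ..
    rw [e, lu.kv, lu.tv]; grind
  refine good_star h.hp h.hH h.hn hT hTG h.huv h.hA h.hβ h.du h.dv (Nu := {x'})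
    (Nv := {a, p, q}) ?_ ?_ (by simp) ?_ (hc.imp_right fun hc => ?_)
    ⟨c', x', ?_, ?_, nx'⟩ ⟨c, u, ?_, hbc.symm, nx⟩
  · intro w hw
    rw [Finset.mem_singleton] at hw
    exact ⟨(zu w).2 (by rw [hw]; tauto), by grind⟩
  · intro w hw
    simp only [Finset.mem_insert, Finset.mem_singleton] at hw
    exact ⟨(zv w).2 (by tauto), by grind⟩
  · rw [c4]; decide
  · have e1 : (β.filter (· ∈ ({x'} : Finset V))).card = if x' ∈ β then 1 else 0 := by
      split_ifs with hb
      · rw [Finset.card_eq_one]; refine ⟨x', ?_⟩; ext w; simp; rintro rfl; exact hb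
      · rw [Finset.card_eq_zero]; ext w; simp; rintro hw rfl; exact hb hw
    have e2 : (β.filter (· ∈ ({a, p, q} : Finset V))).card = (if a ∈ β then 1 else 0) + 1 := by
      have f1 : ∑ w ∈ ({a, p, q} : Finset V), (if w ∈ β then 1 else 0) =
          (if a ∈ β then 1 else 0) + 1 := by
        rw [Finset.sum_insert na, Finset.sum_pair hpq, if_pos hpβ, if_neg hqβ]
      rw [← f1, ← Finset.card_filter]
      congr 1; ext w; simp only [Finset.mem_filter]; exact and_comm
    rw [e1, e2]
    clear c4 kv ku zv zu
    grind
  · intro w; rw [ku, Finset.mem_singleton]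
  · rintro rfl; grind
  · intro w; rw [kv, zv]; simp; grind

end Local

/-! ### When the prescription fails -/

section Fail
variable {G H T : SimpleGraph V} {α β : Finset V} {u v : V}

/-- Among the neighbours of `v` there is no triangle. -/
theorem Loc.tri (h : Cfg G H α β u v) {a b c p q x y z : V} (l : Loc G H T α β v a b c p q)
    (hx : x = a ∨ x = b ∨ x = c ∨ x = p ∨ x = q) (hy : y = a ∨ y = b ∨ y = c ∨ y = p ∨ y = q)
    (hz : z = a ∨ z = b ∨ z = c ∨ z = p ∨ z = q) (hxy : G.Adj x y) (hxz : G.Adj x z) :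
    ¬ G.Adj y z :=
  no_K4 h.hp h.h4 (l.adj h.hH.2.1 hx) (l.adj h.hH.2.1 hy) (l.adj h.hH.2.1 hz) hxy hxz

/-- Among the neighbours of `v` there is no vertex adjacent to three others. -/
theorem Loc.star (h : Cfg G H α β u v) {a b c p q x y z t : V} (l : Loc G H T α β v a b c p q)
    (hx : x = a ∨ x = b ∨ x = c ∨ x = p ∨ x = q) (hy : y = a ∨ y = b ∨ y = c ∨ y = p ∨ y = q)
    (hz : z = a ∨ z = b ∨ z = c ∨ z = p ∨ z = q) (ht : t = a ∨ t = b ∨ t = c ∨ t = p ∨ t = q)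
    (hyz : y ≠ z) (hyt : y ≠ t) (hzt : z ≠ t) (hxy : G.Adj x y) (hxz : G.Adj x z) :
    ¬ G.Adj x t := fun hxt =>
  no_star h.hp h.h4 (by rw [← h.hH.dg_K, h.dv]) (l.adj h.hH.2.1 hx) (l.adj h.hH.2.1 hy)
    (l.adj h.hH.2.1 hz) (l.adj h.hH.2.1 ht) hxy hxz hxt hyz hyt hzt

/-- Among the neighbours of `v` there is no 4-cycle. -/
theorem Loc.wheel (h : Cfg G H α β u v) {a b c p q x y z t s : V} (l : Loc G H T α β v a b c p q)
    (hx : x = a ∨ x = b ∨ x = c ∨ x = p ∨ x = q) (hy : y = a ∨ y = b ∨ y = c ∨ y = p ∨ y = q)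
    (hz : z = a ∨ z = b ∨ z = c ∨ z = p ∨ z = q) (ht : t = a ∨ t = b ∨ t = c ∨ t = p ∨ t = q)
    (hs : s = a ∨ s = b ∨ s = c ∨ s = p ∨ s = q)
    (hsx : s ≠ x) (hsy : s ≠ y) (hsz : s ≠ z) (hst : s ≠ t) (hxz : x ≠ z) (hyt : y ≠ t)
    (hxy : G.Adj x y) (hyz : G.Adj y z) (hzt : G.Adj z t) : ¬ G.Adj t x :=
  no_wheel4 h.hp h.h4 (l.adj h.hH.2.1 hx) (l.adj h.hH.2.1 hy) (l.adj h.hH.2.1 hz)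
    (l.adj h.hH.2.1 ht) (l.adj h.hH.2.1 hs) hsx hsy hsz hst hxz hyt hxy hyz hzt

/-- The propositional core of `Cfg.s1_fail`: `A`, `B` say on which side `a` and `b` lie, and `ca`, …, `cq`
which of `a`, `b`, `p`, `q` are adjacent to `c`. -/
theorem fail_aux (A B A' B' ca cb cp cq ca' cb' cp' cq' : Prop)
    (s1 : ¬ (ca ∧ cb ∧ cp)) (s2 : ¬ (ca ∧ cb ∧ cq)) (s3 : ¬ (ca ∧ cp ∧ cq)) (s4 : ¬ (cb ∧ cp ∧ cq))
    (s1' : ¬ (ca' ∧ cb' ∧ cp')) (s2' : ¬ (ca' ∧ cb' ∧ cq')) (s3' : ¬ (ca' ∧ cp' ∧ cq'))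
    (s4' : ¬ (cb' ∧ cp' ∧ cq')) (top : ¬ (A ∧ B ∧ ¬ A' ∧ ¬ B')) (top' : ¬ (¬ A ∧ ¬ B ∧ A' ∧ B'))
    (key : ∀ X X' : Prop, ((X = A ∧ ¬ ca) ∨ (X = B ∧ ¬ cb) ∨ (X = True ∧ ¬ cp) ∨ (X = False ∧ ¬ cq)) →
      ((X' = A' ∧ ¬ ca') ∨ (X' = B' ∧ ¬ cb') ∨ (X' = True ∧ ¬ cp') ∨ (X' = False ∧ ¬ cq')) →
      ¬ ((X ↔ X') ↔ (A ↔ B)) ∧ ¬ ((X' ↔ X) ↔ (A' ↔ B'))) :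
    (A ↔ ¬ B) ∧ (A' ↔ ¬ B') ∧ ∃ σ : Prop, ((ca ↔ (A ↔ σ)) ∧ (cb ↔ (B ↔ σ)) ∧ (cp ↔ σ) ∧ (cq ↔ ¬ σ)) ∧
      ((ca' ↔ (A' ↔ σ)) ∧ (cb' ↔ (B' ↔ σ)) ∧ (cp' ↔ σ) ∧ (cq' ↔ ¬ σ)) := by
  have k11 := key A A'; have k12 := key A B'; have k13 := key A True; have k14 := key A False
  have k21 := key B A'; have k22 := key B B'; have k23 := key B True; have k24 := key B False
  have k31 := key True A'; have k32 := key True B'; have k33 := key True True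
  have k34 := key True False
  have k41 := key False A'; have k42 := key False B'; have k43 := key False True
  have k44 := key False False
  clear key
  suffices (A ↔ ¬ B) ∧ (A' ↔ ¬ B') ∧ ((ca ↔ (A ↔ cp)) ∧ (cb ↔ (B ↔ cp)) ∧ (cq ↔ ¬ cp)) ∧
      ((ca' ↔ (A' ↔ cp)) ∧ (cb' ↔ (B' ↔ cp)) ∧ (cp' ↔ cp) ∧ (cq' ↔ ¬ cp)) from
    ⟨this.1, this.2.1, cp, ⟨this.2.2.1.1, this.2.2.1.2.1, Iff.rfl, this.2.2.1.2.2⟩, this.2.2.2⟩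
  by_cases A <;> by_cases B <;> by_cases A' <;> by_cases B' <;> by_cases cp <;> grind

/-- When `Cfg.s1` does not apply, the sides of `a` and `b` differ, and the remaining chord end `c` is
adjacent to precisely those of `a`, `b`, `p`, `q` on one side; the same holds at `u`, with the same
side. The side `β` is encoded by a true `σ`, the side `α` by a false one. -/
theorem Cfg.s1_fail (h : Cfg G H α β u v) (hT : IsCyc T) (hTG : T ≤ G \ H)
    {a b c p q a' b' c' p' q' : V} (lv : Loc G H T α β v a b c p q)
    (lu : Loc G H T α β u a' b' c' p' q') (hTuv : ¬ T.Adj u v) (hG : ¬ Good G H) :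
    (a ∈ β ↔ ¬ b ∈ β) ∧ (a' ∈ β ↔ ¬ b' ∈ β) ∧ ∃ σ : Prop,
      ((G.Adj c a ↔ (a ∈ β ↔ σ)) ∧ (G.Adj c b ↔ (b ∈ β ↔ σ)) ∧ (G.Adj c p ↔ σ) ∧
        (G.Adj c q ↔ ¬ σ)) ∧
      ((G.Adj c' a' ↔ (a' ∈ β ↔ σ)) ∧ (G.Adj c' b' ↔ (b' ∈ β ↔ σ)) ∧ (G.Adj c' p' ↔ σ) ∧
        (G.Adj c' q' ↔ ¬ σ)) := by
  have hq := h.hA.2.2.2.1 q lv.hq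
  have hq' := h.hA.2.2.2.1 q' lu.hq
  have hp := lv.hp; have hp' := lu.hp
  obtain ⟨n1, n2, n3, n4, n5, n6⟩ := lv.ne
  obtain ⟨n1', n2', n3', n4', n5', n6'⟩ := lu.ne
  have hpq : p ≠ q := by rintro rfl; exact hq hp
  have hpq' : p' ≠ q' := by rintro rfl; exact hq' hp'
  have hs := h.symm
  have nonc : ¬ ∃ s ∈ α, ∃ t ∈ β, T.Adj s t := by
    intro hc
    -- at most two of the four vertices are adjacent to the leftover `c`, so a choice exists
    obtain ⟨x, hx, nx⟩ : ∃ x, (x = a ∨ x = b ∨ x = p ∨ x = q) ∧ ¬ G.Adj c x := by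
      by_contra! hcon
      exact lv.star h (x := c) (y := a) (z := b) (t := p) (by simp) (by simp) (by simp) (by simp)
        lv.hab n1.symm n2.symm (hcon a (by simp)) (hcon b (by simp)) (hcon p (by simp))
    obtain ⟨x', hx', nx'⟩ : ∃ x, (x = a' ∨ x = b' ∨ x = p' ∨ x = q') ∧ ¬ G.Adj c' x := by
      by_contra! hcon
      exact lu.star hs (x := c') (y := a') (z := b') (t := p') (by simp) (by simp) (by simp)
        (by simp) lu.hab n1'.symm n2'.symm (hcon a' (by simp)) (hcon b' (by simp))
        (hcon p' (by simp))
    exact hG (h.s1 hT hTG lv lu hTuv hx hx' nx nx' (Or.inl hc))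
  have key : ∀ x x', (x = a ∨ x = b ∨ x = p ∨ x = q) → (x' = a' ∨ x' = b' ∨ x' = p' ∨ x' = q') →
      ¬ G.Adj c x → ¬ G.Adj c' x' → ¬ ((x ∈ β ↔ x' ∈ β) ↔ (a ∈ β ↔ b ∈ β)) ∧
        ¬ ((x' ∈ β ↔ x ∈ β) ↔ (a' ∈ β ↔ b' ∈ β)) := by
    intro x x' hx hx' nx nx'
    exact ⟨fun hc => hG (h.s1 hT hTG lv lu hTuv hx hx' nx nx' (Or.inr hc)),
      fun hc => hG (hs.s1 hT hTG lu lv (fun e => hTuv e.symm) hx' hx nx' nx (Or.inr hc))⟩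
  have tva := (lv.tv a).2 (by simp); have tvb := (lv.tv b).2 (by simp)
  have tua := (lu.tv a').2 (by simp); have tub := (lu.tv b').2 (by simp)
  have uT : u ∈ sp T := mem_sp_of tua
  have vT : v ∈ sp T := mem_sp_of tva
  have mem : ∀ x, x ≠ u → x ≠ v → (x ∈ α ↔ x ∉ β) := fun x => h.mem
  have hau : a ≠ u := by rintro rfl; exact hTuv tva.symm
  have hbu : b ≠ u := by rintro rfl; exact hTuv tvb.symm
  have hav' : a' ≠ v := by rintro rfl; exact hTuv tua
  have hbv' : b' ≠ v := by rintro rfl; exact hTuv tub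
  have hm := h.not_mem
  have hm1 := hm.1; have hm2 := hm.2.1; have hm3 := hm.2.2.1; have hm4 := hm.2.2.2
  -- a closed set containing `v` but not `u` contradicts the connectedness of `T`
  have top : ∀ X : Set V, v ∈ X → u ∉ X → (∀ s ∈ X, ∀ t, T.Adj s t → t ∈ X) → False :=
    fun X h1 h2 h3 => h2 (hT.2.2 X h3 v h1 vT u uT)
  have nonc' : ∀ s t, s ∈ α → t ∈ β → ¬ T.Adj s t := fun s t h1 h2 h3 => nonc ⟨s, h1, t, h2, h3⟩
  have huv := h.huv
  have tv := lv.tv; have tu := lu.tv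
  refine fail_aux (a ∈ β) (b ∈ β) (a' ∈ β) (b' ∈ β) (G.Adj c a) (G.Adj c b) (G.Adj c p) (G.Adj c q)
    (G.Adj c' a') (G.Adj c' b') (G.Adj c' p') (G.Adj c' q') ?_ ?_ ?_ ?_ ?_ ?_ ?_ ?_ ?_ ?_ ?_
  · rintro ⟨e1, e2, e3⟩
    exact lv.star h (by simp) (by simp) (by simp) (by simp) lv.hab n1.symm n2.symm e1 e2 e3
  · rintro ⟨e1, e2, e3⟩
    exact lv.star h (by simp) (by simp) (by simp) (by simp) lv.hab n4.symm n5.symm e1 e2 e3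
  · rintro ⟨e1, e2, e3⟩
    exact lv.star h (by simp) (by simp) (by simp) (by simp) n1.symm n4.symm hpq e1 e2 e3
  · rintro ⟨e1, e2, e3⟩
    exact lv.star h (by simp) (by simp) (by simp) (by simp) n2.symm n5.symm hpq e1 e2 e3
  · rintro ⟨e1, e2, e3⟩
    exact lu.star hs (by simp) (by simp) (by simp) (by simp) lu.hab n1'.symm n2'.symm e1 e2 e3
  · rintro ⟨e1, e2, e3⟩
    exact lu.star hs (by simp) (by simp) (by simp) (by simp) lu.hab n4'.symm n5'.symm e1 e2 e3
  · rintro ⟨e1, e2, e3⟩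
    exact lu.star hs (by simp) (by simp) (by simp) (by simp) n1'.symm n4'.symm hpq' e1 e2 e3
  · rintro ⟨e1, e2, e3⟩
    exact lu.star hs (by simp) (by simp) (by simp) (by simp) n2'.symm n5'.symm hpq' e1 e2 e3
  · rintro ⟨e1, e2, e3, e4⟩
    refine top {x | x = v ∨ x ∈ β} (Or.inl rfl) (fun e => ?_) fun s hsX t hst => ?_
    · rcases e with e | e
      exacts [huv e, hm2 e]
    · have hsX : s = v ∨ s ∈ β := hsX
      change t = v ∨ t ∈ β
      rcases hsX with rfl | hsX
      · rcases (tv t).1 hst with rfl | rfl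
        exacts [Or.inr e1, Or.inr e2]
      · by_contra! hc
        by_cases htu : t = u
        · subst htu
          rcases (tu s).1 hst.symm with rfl | rfl
          exacts [e3 hsX, e4 hsX]
        · exact nonc' t s ((mem t htu hc.1).2 hc.2) hsX hst.symm
  · rintro ⟨e1, e2, e3, e4⟩
    refine top {x | x = v ∨ x ∈ α} (Or.inl rfl) (fun e => ?_) fun s hsX t hst => ?_
    · rcases e with e | e
      exacts [huv e, hm1 e]
    · have hsX : s = v ∨ s ∈ α := hsX
      change t = v ∨ t ∈ α
      rcases hsX with rfl | hsX
      · rcases (tv t).1 hst with rfl | rfl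
        exacts [Or.inr ((mem _ hau tva.ne.symm).2 e1), Or.inr ((mem _ hbu tvb.ne.symm).2 e2)]
      · by_contra! hc
        by_cases htu : t = u
        · subst htu
          rcases (tu s).1 hst.symm with rfl | rfl
          exacts [(mem _ tua.ne.symm hav').1 hsX e3, (mem _ tub.ne.symm hbv').1 hsX e4]
        · have := mem t htu hc.1
          exact nonc' s t hsX (by tauto) hst
  · intro X X' hX hX'
    have k : ∃ x, (x = a ∨ x = b ∨ x = p ∨ x = q) ∧ ¬ G.Adj c x ∧ X = (x ∈ β) := by
      rcases hX with ⟨e, n⟩ | ⟨e, n⟩ | ⟨e, n⟩ | ⟨e, n⟩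
      · exact ⟨a, by simp, n, e⟩
      · exact ⟨b, by simp, n, e⟩
      · exact ⟨p, by simp, n, by simp [e, hp]⟩
      · exact ⟨q, by simp, n, by simp [e, hq]⟩
    have k' : ∃ x, (x = a' ∨ x = b' ∨ x = p' ∨ x = q') ∧ ¬ G.Adj c' x ∧ X' = (x ∈ β) := by
      rcases hX' with ⟨e, n⟩ | ⟨e, n⟩ | ⟨e, n⟩ | ⟨e, n⟩
      · exact ⟨a', by simp, n, e⟩
      · exact ⟨b', by simp, n, e⟩
      · exact ⟨p', by simp, n, by simp [e, hp']⟩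
      · exact ⟨q', by simp, n, by simp [e, hq']⟩
    obtain ⟨x, hx, nx, rfl⟩ := k
    obtain ⟨x', hx', nx', rfl⟩ := k'
    exact key x x' hx hx' nx nx'

end Fail

/-! ### A cycle of chords avoiding the edge `uv` -/

section CaseOne
variable {G H T : SimpleGraph V} {α β : Finset V} {u v : V}

theorem pair_cases {x y a b : V} (h : ∀ w, (w = x ∨ w = y) ↔ (w = a ∨ w = b)) :
    (x = a ∧ y = b) ∨ (x = b ∧ y = a) := by
  have := h x; have := h y; have := h a; have := h b; grind

/-- A cycle through the edge `vc`, otherwise using only `a`, `b` at `v`, uses exactly one of these. -/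
theorem two_of_three {T' : SimpleGraph V} {a b c : V} (hT' : IsCyc T') (hc : T'.Adj v c)
    (hw : ∀ w, T'.Adj v w → w = c ∨ w = a ∨ w = b) :
    (∀ w, T'.Adj v w ↔ w = a ∨ w = c) ∨ (∀ w, T'.Adj v w ↔ w = b ∨ w = c) := by
  obtain ⟨x, y, hxy, e⟩ := Finset.card_eq_two.mp (hT'.dg_two (mem_sp_of hc))
  have k := nb_adj e
  have h1 := (k c).1 hc
  have h2 := hw x ((k x).2 (by simp)); have h3 := hw y ((k y).2 (by simp))
  simp only [k]
  grind

/-- If `c` is adjacent to `a`, a cycle of chords that uses `b` and `c` at `v` always finishes. -/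
theorem Cfg.left_a (h : Cfg G H α β u v) {T' : SimpleGraph V} (hT' : IsCyc T') (hTG' : T' ≤ G \ H)
    {a b c p q : V} (lv : Loc G H T α β v a b c p q) (hb : ∀ w, T'.Adj v w ↔ w = b ∨ w = c)
    (hu : u ∈ sp T') (huv : ¬ T'.Adj u v) {σ : Prop} (k1 : a ∈ β ↔ σ) (k2 : b ∈ β ↔ ¬ σ)
    (k3 : G.Adj c a) (k4 : G.Adj c p ↔ σ) (k5 : G.Adj c q ↔ ¬ σ) : Good G H := by
  by_contra hG
  obtain ⟨a', b', c', p', q', lu⟩ := exists_loc hT' hTG' h.hA.symm hu h.du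
  obtain ⟨f1, -, τ, ⟨g1, g2, g3, g4⟩, -⟩ := h.s1_fail hT' hTG' (lv.swap.re hb) lu huv hG
  have t1 := lv.tri h (x := c) (y := a) (z := p) (by simp) (by simp) (by simp)
  have t2 := lv.tri h (x := c) (y := a) (z := q) (by simp) (by simp) (by simp)
  have k3' := k3.symm
  grind

/-- After exchanging `a` and `b` if necessary, `a` is on the side to which `c` is adjacent. -/
theorem Loc.wlog_side {a b c p q : V} (l : Loc G H T α β v a b c p q) {σ : Prop}
    (f : a ∈ β ↔ ¬ b ∈ β) (g1 : G.Adj c a ↔ (a ∈ β ↔ σ)) (g2 : G.Adj c b ↔ (b ∈ β ↔ σ)) :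
    ∃ a b, Loc G H T α β v a b c p q ∧ (a ∈ β ↔ σ) ∧ (b ∈ β ↔ ¬ σ) ∧ G.Adj c a ∧ ¬ G.Adj c b := by
  by_cases e : a ∈ β ↔ σ
  · exact ⟨a, b, l, e, by tauto, by tauto, by tauto⟩
  · exact ⟨b, a, l.swap, by tauto, by tauto, by tauto, by tauto⟩

/-- The case of a cycle of chords through `u` and `v` that avoids the edge `uv`. -/
theorem Cfg.case_one (h : Cfg G H α β u v) {B : Finset V} (hv : v ∈ B)
    (hcl : ∀ y, (G \ H).Adj v y → y ∈ B) (h2 : ∀ x ∈ B, ConnSet (G \ H) (B.erase x))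
    (hT : IsCyc T) (hTG : T ≤ G \ H) (hTB : sp T ⊆ B) (huT : u ∈ sp T) (hvT : v ∈ sp T)
    (hTuv : ¬ T.Adj u v) : Good G H := by
  by_contra hG
  obtain ⟨a₀, b₀, c, p, q, lv₀⟩ := exists_loc hT hTG h.hA hvT h.dv
  obtain ⟨a₁, b₁, c', p', q', lu₀⟩ := exists_loc hT hTG h.hA.symm huT h.du
  obtain ⟨f, f', σ, ⟨g1, g2, g3, g4⟩, g1', g2', g3', g4'⟩ := h.s1_fail hT hTG lv₀ lu₀ hTuv hG
  obtain ⟨a, b, lv, k1, k2, k3, k4⟩ := lv₀.wlog_side f g1 g2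
  obtain ⟨a', b', lu, k1', k2', k3', k4'⟩ := lu₀.wlog_side f' g1' g2'
  clear g1 g2 g1' g2' f f' lv₀ lu₀ a₀ b₀ a₁ b₁
  have hvc : (G \ H).Adj v c := (lv.kv c).2 (by simp)
  have hcT : ¬ T.Adj v c := by
    rw [lv.tv]; have := lv.hac; have := lv.hbc; grind
  have hua : a ≠ u := by rintro rfl; exact hTuv ((lv.tv a).2 (by simp)).symm
  have hub : b ≠ u := by rintro rfl; exact hTuv ((lv.tv b).2 (by simp)).symm
  obtain ⟨n1, n2, n3, n4, n5, n6⟩ := lv.ne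
  obtain ⟨n1', n2', n3', n4', n5', n6'⟩ := lu.ne
  have hpq : p ≠ q := fun e => h.hA.2.2.2.1 q lv.hq (e ▸ lv.hp)
  have hpq' : p' ≠ q' := fun e => h.hA.2.2.2.1 q' lu.hq (e ▸ lu.hp)
  have hR := reroute hT hTG hTB hvT huT h.huv hvc (hcl c hvc) hcT (h2 v hv)
  by_cases hcu : c = u
  · subst hcu
    have hcv : c' = v := by
      have h1 := (lu.kv v).1 hvc.symm
      have h3 : ¬ T.Adj c v := hTuv
      rw [lu.tv] at h3
      grind
    subst hcv
    rcases hR with ⟨T', hT', -, -, hadj, -, hnb, -⟩ |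
      ⟨x₁, x₂, t₁, t₂, e, T₁, T₂, hT₁, hT₁G, hT₁B, hT₂, hT₂G, hT₂B, ex, et, e1, e2, e3, e4, -, -⟩
    · refine hTuv ?_
      rw [← mem_nb, ← hnb, mem_nb]; exact hadj.symm
    · obtain ⟨S, t, hS, hSG, sv, su, ht⟩ : ∃ S t, IsCyc S ∧ S ≤ G \ H ∧ nb S c' = {c, a} ∧
          nb S c = {e, t} ∧ (t = a' ∨ t = b') := by
        have hx := pair_cases (x := x₁) (y := x₂) (a := a) (b := b)
          fun w => by rw [← nb_adj ex, lv.tv]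
        have ht := pair_cases (x := t₁) (y := t₂) (a := a') (b := b')
          fun w => by rw [← nb_adj et, lu.tv]
        rcases hx with ⟨rfl, rfl⟩ | ⟨rfl, rfl⟩
        · exact ⟨T₁, t₁, hT₁, hT₁G, e1, e3, ht.imp And.left And.left⟩
        · exact ⟨T₂, t₂, hT₂, hT₂G, e2, e4, (ht.imp And.right And.right).symm⟩
      have sv' := nb_adj sv
      have htv : t ≠ c' := by
        have h3 : ¬ T.Adj c c' := hTuv
        rw [lu.tv] at h3
        grind
      have hev : e = c' := by
        have h1 := ((sv' c).2 (by simp)).symm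
        rw [nb_adj su] at h1
        rcases h1 with h1 | h1
        exacts [h1.symm, absurd h1.symm htv]
      subst hev
      have lv' := lv.re (T' := S) fun w => by rw [sv', or_comm]
      have nbu : ¬ G.Adj b c := fun e => k4 e.symm
      obtain ⟨r, s, hr, hs, hrs, hrβ, hvr⟩ : ∃ r s, (r = p' ∨ r = q') ∧ (s = p' ∨ s = q') ∧ s ≠ r ∧
          (r ∈ β ↔ σ) ∧ G.Adj e r := by
        have hq' := h.hA.2.2.2.1 q' lu.hq
        by_cases e : σ
        · exact ⟨p', q', by simp, by simp, hpq'.symm, ⟨fun _ => e, fun _ => lu.hp⟩, g3'.2 e⟩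
        · exact ⟨q', p', by simp, by simp, hpq', ⟨fun e' => absurd e' hq', fun e' => absurd e' e⟩,
            g4'.2 e⟩
      rcases ht with rfl | rfl
      · have lu' := lu.re (T' := S) fun w => by rw [nb_adj su, or_comm]
        have : ∃ x', (x' = t ∨ x' = r) ∧ ¬ G.Adj b' x' := by
          by_contra! hcon
          refine lu.wheel h.symm (x := e) (y := t) (z := b') (t := r) (s := s) (by simp) (by simp)
            (by simp) (Or.inr (Or.inr (Or.inr hr))) (Or.inr (Or.inr (Or.inr hs))) ?_ ?_ ?_ hrs lu.hbc.symm ?_ k3'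
            (hcon t (by simp)).symm (hcon r (by simp)) hvr.symm
          all_goals rcases hs with rfl | rfl
          all_goals first | assumption | (rcases hr with rfl | rfl <;> first | assumption | exact Ne.symm ‹_›)
        obtain ⟨x', hx', nx'⟩ := this
        refine hG (h.s2 hS hSG lv' lu' (x' := x') ?_ nbu nx' (Or.inr ?_))
        · rcases hx' with e' | e'
          exacts [Or.inl e', Or.inr (by rw [e']; exact hr)]
        · rcases hx' with rfl | rfl
          exacts [k1'.trans k1.symm, hrβ.trans k1.symm]
      · have lu' := lu.swap.re (T' := S) fun w => by rw [nb_adj su, or_comm]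
        refine hG (h.s2 hS hSG lv' lu' (x' := r) (Or.inr hr) nbu ?_
          (Or.inr (hrβ.trans k1.symm)))
        exact lu.tri h.symm (x := e) (by simp) (by simp)
          (Or.inr (Or.inr (Or.inr hr))) k3' hvr
  · rcases hR with ⟨T', hT', hTG', -, hadj, hw, hnb, -⟩ |
      ⟨x₁, x₂, t₁, t₂, e, T₁, T₂, hT₁, hT₁G, hT₁B, hT₂, hT₂G, hT₂B, ex, et, e1, e2, e3, e4, -, -⟩
    · have huv' : ¬ T'.Adj u v := by rw [← mem_nb, hnb, mem_nb]; exact hTuv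
      have hu' : u ∈ sp T' := by
        have : T'.Adj u a' := by rw [← mem_nb, hnb, mem_nb, lu.tv]; simp
        exact mem_sp_of this
      rcases two_of_three hT' hadj (fun w hw' => by rw [← lv.tv]; exact hw w hw') with hb | hb
      · obtain ⟨f1, -, τ, ⟨y1, y2, y3, y4⟩, -⟩ :=
          h.s1_fail hT' hTG' (lv.re hb) (lu.same hnb) huv' hG
        have w1 := lv.wheel h (x := c) (y := a) (z := b) (t := p) (s := q) (by simp) (by simp)
          (by simp) (by simp) (by simp) n6 n4 n5 hpq.symm lv.hbc.symm n1.symm k3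
        have w2 := lv.wheel h (x := c) (y := a) (z := b) (t := q) (s := p) (by simp) (by simp)
          (by simp) (by simp) (by simp) n3 n1 n2 hpq lv.hbc.symm n4.symm k3
        rw [G.adj_comm a b, G.adj_comm p c] at w1
        rw [G.adj_comm a b, G.adj_comm q c] at w2
        rw [G.adj_comm c b] at k4
        grind
      · exact hG (h.left_a hT' hTG' lv hb hu' huv' k1 k2 k3 g3 g4)
    · obtain ⟨S, t, hS, hSG, sv, su⟩ : ∃ S t, IsCyc S ∧ S ≤ G \ H ∧ nb S v = {c, b} ∧
          nb S u = {e, t} := by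
        have hx := pair_cases (x := x₁) (y := x₂) (a := a) (b := b)
          fun w => by rw [← nb_adj ex, lv.tv]
        rcases hx with ⟨rfl, rfl⟩ | ⟨rfl, rfl⟩
        · exact ⟨T₂, t₂, hT₂, hT₂G, e2, e4⟩
        · exact ⟨T₁, t₁, hT₁, hT₁G, e1, e3⟩
      have sv' := nb_adj sv
      refine hG (h.left_a hS hSG lv (fun w => by rw [sv', or_comm])
        (mem_sp_of ((nb_adj su e).2 (by simp))) ?_ k1 k2 k3 g3 g4)
      intro e
      have := (sv' u).1 e.symm
      grind

end CaseOne

/-! ### Cycles of chords through the edge `uv` -/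

section CaseTwo
variable {G H T : SimpleGraph V} {α β : Finset V} {u v : V}

theorem Loc.cover {a b c p q : V} (l : Loc G H T α β v a b c p q) {x : V} (hx : G.Adj v x) :
    x = a ∨ x = b ∨ x = c ∨ x = p ∨ x = q := by
  by_cases e : H.Adj v x
  · exact Or.inr (Or.inr (Or.inr ((l.hv x).1 e)))
  · have : (G \ H).Adj v x := by rw [sdiff_adj]; exact ⟨hx, e⟩
    have := (l.kv x).1 this
    tauto

/-- A cycle that uses `uv` and does not cross between the arcs stays on one side. -/
theorem Cfg.side_eq (h : Cfg G H α β u v) (hT : IsCyc T) {a a' : V}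
    (tv : ∀ w, T.Adj v w ↔ w = a ∨ w = u) (tu : ∀ w, T.Adj u w ↔ w = a' ∨ w = v)
    (hc : ∀ s t, s ∈ α → t ∈ β → ¬ T.Adj s t) : a ∈ β ↔ a' ∈ β := by
  obtain ⟨m1, m2, m3, m4⟩ := h.not_mem
  have huv := h.huv
  have hd : ∀ x ∈ β, dg T x = dg (rs T β) x + ((if x = a then 1 else 0) + if x = a' then 1 else 0) := by
    intro x hx
    have e : nb T x = nb (rs T β) x ∪ ((if x = a then {v} else ∅) ∪ if x = a' then {u} else ∅) := by
      ext w
      rw [Finset.mem_union, mem_nb, mem_nb, rs_adj]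
      have e1 : w ∈ ((if x = a then {v} else ∅) ∪ if x = a' then {u} else ∅ : Finset V) ↔
          (x = a ∧ w = v) ∨ (x = a' ∧ w = u) := by
        split_ifs with i1 i2 i2 <;> simp [i1, i2]
        all_goals grind
      rw [e1]
      have hxu : x ≠ u := by rintro rfl; exact m2 hx
      have hxv : x ≠ v := by rintro rfl; exact m4 hx
      have tv' := tv x; have tu' := tu x
      constructor
      · intro hw
        by_cases hwu : w = u
        · subst hwu
          rcases tu'.1 hw.symm with e | e
          exacts [Or.inr (Or.inr ⟨e, rfl⟩), absurd e hxv]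
        · by_cases hwv : w = v
          · subst hwv
            rcases tv'.1 hw.symm with e | e
            exacts [Or.inr (Or.inl ⟨e, rfl⟩), absurd e hxu]
          · refine Or.inl ⟨hw, hx, ?_⟩
            by_contra hwβ
            exact hc w x ((h.mem hwu hwv).2 hwβ) hx hw.symm
      · rintro (hw | ⟨h1, rfl⟩ | ⟨h1, rfl⟩)
        · exact hw.1
        · exact (tv'.2 (Or.inl h1)).symm
        · exact (tu'.2 (Or.inl h1)).symm
    rw [dg, e, Finset.card_union_of_disjoint, Finset.card_union_of_disjoint]
    · congr 1; split_ifs <;> simp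
    · rw [Finset.disjoint_left]; split_ifs <;> simp [huv.symm]
    · rw [Finset.disjoint_left]; intro w hw; rw [mem_nb, rs_adj] at hw
      have : w ≠ v := by rintro rfl; exact m4 hw.2.2
      have : w ≠ u := by rintro rfl; exact m2 hw.2.2
      split_ifs <;> simp [*]
  have hs : ∑ x ∈ β, dg T x = ∑ x ∈ β, dg (rs T β) x +
      ((if a ∈ β then 1 else 0) + if a' ∈ β then 1 else 0) := by
    rw [Finset.sum_congr rfl hd, Finset.sum_add_distrib, Finset.sum_add_distrib,
      Finset.sum_ite_eq', Finset.sum_ite_eq']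
  have he : Even (∑ x ∈ β, dg T x) := Finset.even_sum _ fun x _ => by
    rcases hT.2.1 x with e | e <;> rw [e] <;> decide
  have he' : Even (∑ x ∈ β, dg (rs T β) x) := by
    have := even_sum_dg (rs T β)
    rwa [← Finset.sum_subset (Finset.subset_univ β)] at this
    intro x _ hx
    rw [dg_eq_zero, mem_sp]
    rintro ⟨w, hw⟩
    rw [rs_adj] at hw
    exact hx hw.2.1
  rw [hs, Nat.even_add] at he
  have := he.1 he'
  clear hd hs he he'
  split_ifs at this <;> simp_all

/-- Two common neighbours of `u` and `v` give a 4-cycle that avoids the edge `uv`. -/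
theorem four_cycle {K : SimpleGraph V} {a c : V} (h1 : K.Adj v a) (h2 : K.Adj a u) (h3 : K.Adj v c)
    (h4 : K.Adj c u) (hac : a ≠ c) (huv : u ≠ v) :
    ∃ S, IsCyc S ∧ S ≤ K ∧ (∀ x ∈ sp S, x = v ∨ x = a ∨ x = u ∨ x = c) ∧ u ∈ sp S ∧ v ∈ sp S ∧
      ¬ S.Adj u v := by
  have n1 := h1.ne; have n2 := h2.ne; have n3 := h3.ne; have n4 := h4.ne
  have p1 : Pth (edge a u ⊔ edge v a) v u (insert v {a, u}) :=
    (Pth.single n2).cons (by simp [n1, huv.symm])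
  have p2 : Pth (edge c u ⊔ edge v c) v u (insert v {c, u}) :=
    (Pth.single n4).cons (by simp [n3, huv.symm])
  have hd : Disjoint (edge a u ⊔ edge v a) (edge c u ⊔ edge v c) := by
    rw [disjoint_left]; intro x y; simp only [sup_adj, edge_adj]; grind
  refine ⟨_, isCyc_glue p1 p2 huv.symm hd ?_, sup_le (sup_le (edge_le' h2) (edge_le' h1))
    (sup_le (edge_le' h4) (edge_le' h3)), ?_, ?_, ?_, ?_⟩
  · intro w; simp; grind
  · intro x; rw [mem_sp]; rintro ⟨w, hw⟩; simp only [sup_adj, edge_adj] at hw; grind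
  · rw [mem_sp]; refine ⟨a, ?_⟩; simp only [sup_adj, edge_adj]; grind
  · rw [mem_sp]; refine ⟨a, ?_⟩; simp only [sup_adj, edge_adj]; grind
  · simp only [sup_adj, edge_adj]; grind

/-- The edge `uv` lies on `T`, and the remaining chord end `c` at `v` is not adjacent to `u`. -/
theorem Cfg.case_two_aux (h : Cfg G H α β u v) {B : Finset V} (hu : u ∈ B)
    (hcl : ∀ y, (G \ H).Adj u y → y ∈ B) (h2 : ∀ x ∈ B, ConnSet (G \ H) (B.erase x))
    (hall : ∀ S, IsCyc S → S ≤ G \ H → sp S ⊆ B → u ∈ sp S → v ∈ sp S → S.Adj u v)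
    (hT : IsCyc T) (hTG : T ≤ G \ H) (hTB : sp T ⊆ B) {a c p q a' c' p' q' : V}
    (lv : Loc G H T α β v a u c p q) (lu : Loc G H T α β u a' v c' p' q') (hcu : ¬ G.Adj c u) :
    Good G H := by
  by_contra hG
  have tuv : T.Adj u v := (lu.tv v).2 (by simp)
  have huT : u ∈ sp T := mem_sp_of tuv
  have hvT : v ∈ sp T := mem_sp_of tuv.symm
  obtain ⟨n1, n2, n3, n4, n5, n6⟩ := lu.ne
  have hqβ := h.hA.2.2.2.1 q' lu.hq
  have hpq : p' ≠ q' := fun e => h.hA.2.2.2.1 q' lu.hq (e ▸ lu.hp)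
  have nonc : ∀ s t, s ∈ α → t ∈ β → ¬ T.Adj s t := by
    intro s t hs ht hst
    obtain ⟨x, hx, nx⟩ : ∃ x, (x = a' ∨ x = p' ∨ x = q') ∧ ¬ G.Adj c' x := by
      by_contra! hcon
      exact lu.star h.symm (x := c') (y := a') (z := p') (t := q') (by simp) (by simp) (by simp)
        (by simp) n1.symm n4.symm hpq (hcon a' (by simp)) (hcon p' (by simp)) (hcon q' (by simp))
    exact hG (h.s2 hT hTG lv lu hx hcu nx (Or.inl ⟨s, hs, t, ht, hst⟩))
  have hside := h.side_eq hT lv.tv lu.tv nonc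
  obtain ⟨r, hr, hrβ⟩ : ∃ r, (r = p' ∨ r = q') ∧ (r ∈ β ↔ a ∈ β) := by
    by_cases e : a ∈ β
    · exact ⟨p', by simp, ⟨fun _ => e, fun _ => lu.hp⟩⟩
    · exact ⟨q', by simp, ⟨fun e' => absurd e' hqβ, fun e' => absurd e' e⟩⟩
  have ca : G.Adj c' a' := by
    by_contra nx
    exact hG (h.s2 hT hTG lv lu (by simp) hcu nx (Or.inr hside.symm))
  have cr : G.Adj c' r := by
    by_contra nx
    exact hG (h.s2 hT hTG lv lu (Or.inr hr) hcu nx (Or.inr hrβ))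
  have nar := lu.tri h.symm (by simp) (by simp) (Or.inr (Or.inr (Or.inr hr))) ca cr
  have huc : (G \ H).Adj u c' := (lu.kv c').2 (by simp)
  have hcT : ¬ T.Adj u c' := by
    rw [lu.tv]; have := lu.hac; have := lu.hbc; grind
  rcases reroute hT hTG hTB huT hvT h.huv.symm huc (hcl c' huc) hcT (h2 u hu) with
    ⟨T', hT', hTG', -, hadj, hw, hnb, -⟩ |
    ⟨x₁, x₂, t₁, t₂, e, T₁, T₂, hT₁, hT₁G, hT₁B, hT₂, hT₂G, hT₂B, ex, et, e1, e2, e3, e4, -, -⟩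
  · have huv' : T'.Adj u v := by
      have : T'.Adj v u := by rw [← mem_nb, hnb, mem_nb]; exact tuv.symm
      exact this.symm
    rcases two_of_three hT' hadj (fun w hw' => by rw [← lu.tv]; exact hw w hw') with hb | hb
    · have := (hb v).1 huv'
      have := lu.hab; have := lu.hbc; grind
    · exact hG (h.s2 hT' hTG' (lv.same hnb) (lu.swap.re hb).swap (Or.inr hr) hcu nar (Or.inr hrβ))
  · obtain ⟨S, t, hS, hSG, hSB, su, sv⟩ : ∃ S t, IsCyc S ∧ S ≤ G \ H ∧ sp S ⊆ B ∧
        nb S u = {c', a'} ∧ nb S v = {e, t} := by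
      have hx := pair_cases (x := x₁) (y := x₂) (a := a') (b := v)
        fun w => by rw [← nb_adj ex, lu.tv]
      rcases hx with ⟨rfl, rfl⟩ | ⟨rfl, rfl⟩
      · exact ⟨T₁, t₁, hT₁, hT₁G, hT₁B, e1, e3⟩
      · exact ⟨T₂, t₂, hT₂, hT₂G, hT₂B, e2, e4⟩
    have := hall S hS hSG hSB (mem_sp_of ((nb_adj su c').2 (by simp)))
      (mem_sp_of ((nb_adj sv e).2 (by simp)))
    rw [nb_adj su] at this
    have := lu.hab; have := lu.hbc; grind

/-- The edge `uv` lies on `T`: if this does not finish, both other chord ends at `v` are adjacent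
to `u`. -/
theorem Cfg.case_two_adj (h : Cfg G H α β u v) {B : Finset V} (hu : u ∈ B) (hv : v ∈ B)
    (hclu : ∀ y, (G \ H).Adj u y → y ∈ B) (hclv : ∀ y, (G \ H).Adj v y → y ∈ B)
    (h2 : ∀ x ∈ B, ConnSet (G \ H) (B.erase x))
    (hall : ∀ S, IsCyc S → S ≤ G \ H → sp S ⊆ B → u ∈ sp S → v ∈ sp S → S.Adj u v)
    (hT : IsCyc T) (hTG : T ≤ G \ H) (hTB : sp T ⊆ B) {a c p q a' c' p' q' : V}
    (lv : Loc G H T α β v a u c p q) (lu : Loc G H T α β u a' v c' p' q') (hG : ¬ Good G H) :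
    G.Adj c u ∧ G.Adj a u := by
  have tuv : T.Adj u v := (lu.tv v).2 (by simp)
  have huT : u ∈ sp T := mem_sp_of tuv
  have hvT : v ∈ sp T := mem_sp_of tuv.symm
  refine ⟨?_, ?_⟩
  · by_contra hcu
    exact hG (h.case_two_aux hu hclu h2 hall hT hTG hTB lv lu hcu)
  by_contra hau
  have hvc : (G \ H).Adj v c := (lv.kv c).2 (by simp)
  have hcT : ¬ T.Adj v c := by
    rw [lv.tv]; have := lv.hac; have := lv.hbc; grind
  rcases reroute hT hTG hTB hvT huT h.huv hvc (hclv c hvc) hcT (h2 v hv) with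
    ⟨T', hT', hTG', hTB', hadj, hw, hnb, -⟩ |
    ⟨x₁, x₂, t₁, t₂, e, T₁, T₂, hT₁, hT₁G, hT₁B, hT₂, hT₂G, hT₂B, ex, et, e1, e2, e3, e4, -, -⟩
  · have huv' : T'.Adj u v := by rw [← mem_nb, hnb, mem_nb]; exact tuv
    rcases two_of_three hT' hadj (fun w hw' => by rw [← lv.tv]; exact hw w hw') with hb | hb
    · have := (hb u).1 huv'.symm
      have := lv.hab; have := lv.hbc; grind
    · exact hG (h.case_two_aux hu hclu h2 hall hT' hTG' hTB' (lv.swap.re hb).swap (lu.same hnb) hau)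
  · obtain ⟨S, t, hS, hSG, hSB, sv, su⟩ : ∃ S t, IsCyc S ∧ S ≤ G \ H ∧ sp S ⊆ B ∧
        nb S v = {c, a} ∧ nb S u = {e, t} := by
      have hx := pair_cases (x := x₁) (y := x₂) (a := a) (b := u)
        fun w => by rw [← nb_adj ex, lv.tv]
      rcases hx with ⟨rfl, rfl⟩ | ⟨rfl, rfl⟩
      · exact ⟨T₁, t₁, hT₁, hT₁G, hT₁B, e1, e3⟩
      · exact ⟨T₂, t₂, hT₂, hT₂G, hT₂B, e2, e4⟩
    have := (hall S hS hSG hSB (mem_sp_of ((nb_adj su e).2 (by simp)))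
      (mem_sp_of ((nb_adj sv c).2 (by simp)))).symm
    rw [nb_adj sv] at this
    have := lv.hab; have := lv.hbc; grind

theorem Loc.normal {a b c p q : V} (l : Loc G H T α β v a b c p q) (h : T.Adj v u) :
    ∃ a, Loc G H T α β v a u c p q := by
  rcases (l.tv u).1 h with rfl | rfl
  exacts [⟨b, l.swap⟩, ⟨a, l⟩]

/-- The case where every cycle of chords in `B` through `u` and `v` uses the edge `uv`. -/
theorem Cfg.case_two (h : Cfg G H α β u v) {B : Finset V} (hu : u ∈ B) (hv : v ∈ B)
    (hclu : ∀ y, (G \ H).Adj u y → y ∈ B) (hclv : ∀ y, (G \ H).Adj v y → y ∈ B)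
    (h2 : ∀ x ∈ B, ConnSet (G \ H) (B.erase x))
    (hall : ∀ S, IsCyc S → S ≤ G \ H → sp S ⊆ B → u ∈ sp S → v ∈ sp S → S.Adj u v)
    (hT : IsCyc T) (hTG : T ≤ G \ H) (hTB : sp T ⊆ B) (huT : u ∈ sp T) (hvT : v ∈ sp T) :
    Good G H := by
  by_contra hG
  have tuv := hall T hT hTG hTB huT hvT
  obtain ⟨a₀, b₀, c, p, q, lv₀⟩ := exists_loc hT hTG h.hA hvT h.dv
  obtain ⟨a₁, b₁, c', p', q', lu₀⟩ := exists_loc hT hTG h.hA.symm huT h.du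
  obtain ⟨a, lv⟩ := lv₀.normal tuv.symm
  obtain ⟨a', lu⟩ := lu₀.normal tuv
  obtain ⟨k1, k2⟩ := h.case_two_adj hu hv hclu hclv h2 hall hT hTG hTB lv lu hG
  obtain ⟨k3, k4⟩ := h.symm.case_two_adj hv hu hclv hclu h2
    (fun S a b c d e => (hall S a b c e d).symm) hT hTG hTB lu lv hG
  -- `u` and `v` have at most two common neighbours, so the chord ends at `u` and `v` coincide
  have key : ∀ x, (G \ H).Adj u x → G.Adj x v → x = a ∨ x = c := by
    intro x hx hxv
    by_contra! hcon
    exact lv.star h (x := u) (y := a) (z := c) (t := x) (by simp) (by simp) (by simp)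
      (lv.cover hxv.symm) lv.hac hcon.1.symm hcon.2.symm k2.symm k1.symm
      (sdiff_le (a := G) (b := H) hx)
  have ka := (lu.kv a').2 (by simp)
  have kc := (lu.kv c').2 (by simp)
  have e1 := key a' ka k4
  have e2 := key c' kc k3
  have hne := lu.hac
  have hK : (G \ H).Adj u a ∧ (G \ H).Adj u c := by
    rcases e1 with rfl | rfl <;> rcases e2 with rfl | rfl
    · exact absurd rfl hne
    · exact ⟨ka, kc⟩
    · exact ⟨kc, ka⟩
    · exact absurd rfl hne
  obtain ⟨S, hS, hSG, hSs, su, sv, nuv⟩ := four_cycle ((lv.kv a).2 (by simp)) hK.1.symm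
    ((lv.kv c).2 (by simp)) hK.2.symm lv.hac h.huv
  refine nuv (hall S hS hSG (fun x hx => ?_) su sv)
  rcases hSs x hx with rfl | rfl | rfl | rfl
  exacts [hv, hclu _ hK.1, hu, hclu _ hK.2]

/-- In a planar 4-connected graph, every Hamiltonian cycle belongs to a small cycle double cover. -/
theorem good_all (hp : IsPlanar G) (h4 : Con4 G) (hH : Ham G H) : Good G H := by
  rcases Nat.even_or_odd (Fintype.card V) with hn | hn
  · exact good_even hp hH.1 hH.2.1 hH.2.2 hn
  obtain ⟨z, B, hB, h2, hB3, hcl, hcase⟩ := exists_block hp h4 hH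
  rcases hcase with ⟨v, hv, hvz, hd⟩ | hcard
  · obtain ⟨w, hw, hwv⟩ : ∃ w ∈ B, w ≠ v := by
      obtain ⟨w, hw⟩ := (Finset.card_pos (s := B.erase v)).1 (by
        rw [Finset.card_erase_of_mem hv]; omega)
      exact ⟨w, Finset.mem_of_mem_erase hw, Finset.ne_of_mem_erase hw⟩
    obtain ⟨T, hT, hTG, -, hvT, -⟩ := exists_cyc_through hB h2 hB3 hv hw hwv.symm
    exact good_two hp h4 hH hn hT hTG hvT hd
  · obtain ⟨x, hx, y, hy, w, hw, hxy, hxw, hyw⟩ := Finset.two_lt_card.1 (show 2 < _ from hcard)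
    have hm : ∀ x, x ∈ (B.erase z).filter (fun v => dg (G \ H) v = 3) →
        x ∈ B ∧ x ≠ z ∧ dg (G \ H) x = 3 := by
      intro x hx
      rw [Finset.mem_filter, Finset.mem_erase] at hx
      exact ⟨hx.1.2, hx.1.1, hx.2⟩
    have hx' := hm x hx; have hy' := hm y hy; have hw' := hm w hw
    have o : ∀ n, n = 3 → Odd n := by rintro _ rfl; decide
    obtain ⟨u, v, α, β, hu, hv, huv, hA, hβ, -⟩ := exists_arcs hH (τ := dg (G \ H)) (even_sum_dg _)
      hxy hxw hyw (o _ hx'.2.2) (o _ hy'.2.2) (o _ hw'.2.2)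
    have hu' : u ∈ B ∧ u ≠ z ∧ dg (G \ H) u = 3 := by rcases hu with rfl | rfl | rfl <;> assumption
    have hv' : v ∈ B ∧ v ≠ z ∧ dg (G \ H) v = 3 := by rcases hv with rfl | rfl | rfl <;> assumption
    have h : Cfg G H α β u v := ⟨hp, h4, hH, hn, huv, hA, hβ, hu'.2.2, hv'.2.2⟩
    have hclu := hcl u hu'.1 hu'.2.1
    have hclv := hcl v hv'.1 hv'.2.1
    by_cases hall : ∀ S, IsCyc S → S ≤ G \ H → sp S ⊆ B → u ∈ sp S → v ∈ sp S → S.Adj u v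
    · obtain ⟨T, hT, hTG, hTB, huT, hvT⟩ := exists_cyc_through hB h2 hB3 hu'.1 hv'.1 huv
      exact h.case_two hu'.1 hv'.1 hclu hclv h2 hall hT hTG hTB huT hvT
    · push Not at hall
      obtain ⟨S, hS, hSG, hSB, su, sv, nuv⟩ := hall
      exact h.case_one hv'.1 hclv h2 hS hSG hSB su sv nuv

end CaseTwo

/-! ### Translation to subgraphs -/

section Subgraphs
variable {G H : SimpleGraph V}

/-- The subgraph of `G` formed by the edges of `C` and their ends. -/
def toSub (G C : SimpleGraph V) : G.Subgraph where
  verts := {v | ∃ w, C.Adj v w ∧ G.Adj v w}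
  Adj a b := C.Adj a b ∧ G.Adj a b
  adj_sub h := h.2
  edge_vert h := ⟨_, h⟩
  symm := ⟨fun _ _ h => ⟨h.1.symm, h.2.symm⟩⟩

theorem ncard_nb (C : SimpleGraph V) (v : V) {S : Set V} (hS : ∀ w, w ∈ S ↔ C.Adj v w) :
    S.ncard = dg C v := by
  rw [dg, ← Set.ncard_coe_finset]
  congr 1; ext w; simp [hS]

theorem isCycleSubgraph_toSub {C : SimpleGraph V} (hC : IsCyc C) (hle : C ≤ G) :
    IsCycleSubgraph (toSub G C) := by
  have hm : ∀ v, v ∈ (toSub G C).verts ↔ v ∈ sp C := by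
    intro v; rw [mem_sp]
    exact ⟨fun ⟨w, h, _⟩ => ⟨w, h⟩, fun ⟨w, h⟩ => ⟨w, h, hle h⟩⟩
  have ha : ∀ a b, (toSub G C).Adj a b ↔ C.Adj a b := fun a b => ⟨fun h => h.1, fun h => ⟨h, hle h⟩⟩
  refine ⟨?_, fun v hv => ?_⟩
  · have hc := connSet_iff.1 hC.conn
    have hv : (toSub G C).verts = (sp C : Set V) := by ext v; exact hm v
    have iso : C.induce (sp C : Set V) ≃g (toSub G C).coe :=
      { toEquiv := Equiv.setCongr hv.symm
        map_rel_iff' := by intro a b; exact ha _ _ }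
    exact iso.connected_iff.1 hc
  · exact (ncard_nb C v (S := (toSub G C).neighborSet v) fun w => ha v w).trans
      (hC.dg_two ((hm v).1 hv))

theorem ham_spanningCoe {𝔥 : G.Subgraph} (h : IsHamCycle G 𝔥) : Ham G 𝔥.spanningCoe := by
  obtain ⟨⟨hc, h2⟩, hu⟩ := h
  have hd : ∀ v, dg 𝔥.spanningCoe v = 2 := fun v => by
    rw [← h2 v (hu ▸ Set.mem_univ v)]
    exact (ncard_nb _ v fun w => Iff.rfl).symm
  have hs : sp 𝔥.spanningCoe = Finset.univ := by
    ext v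
    have := hd v
    simp only [Finset.mem_univ, iff_true]
    by_contra hv
    rw [← dg_eq_zero] at hv; omega
  refine ⟨⟨?_, fun v => Or.inr (hd v), ?_⟩, 𝔥.spanningCoe_le, hs⟩
  · rw [Ne, ← ne_eq, ne_bot_iff_sp, hs]
    obtain ⟨v⟩ := hc.nonempty
    exact ⟨v, Finset.mem_univ _⟩
  · intro X hX a ha _ b _
    obtain ⟨w⟩ := hc.preconnected ⟨a, hu ▸ Set.mem_univ a⟩ ⟨b, hu ▸ Set.mem_univ b⟩
    have : ∀ x y : 𝔥.verts, 𝔥.coe.Walk x y → x.1 ∈ X → y.1 ∈ X := by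
      intro x y w
      induction w with
      | nil => exact id
      | cons h _ ih => exact fun hx => ih (hX _ hx _ h)
    exact this _ _ w ha

theorem con4_of (h : IsKConnected 4 G) : Con4 G := by
  refine ⟨h.1, fun S hS => connSet_iff.2 ?_⟩
  have := h.2 (S : Set V) (by rwa [Set.ncard_coe_finset])
  rwa [Finset.coe_compl]

/-- Every Hamiltonian cycle of a planar 4-connected graph lies in a cycle double cover with fewer
members than there are vertices. -/
theorem exists_cdc (hp : IsPlanar G) (h4 : IsKConnected 4 G) {𝔥 : G.Subgraph}
    (hham : IsHamCycle G 𝔥) : ∃ 𝒮 : Multiset G.Subgraph, IsCDC G 𝒮 ∧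
      Multiset.card 𝒮 ≤ Fintype.card V - 1 ∧ 𝔥 ∈ 𝒮 := by
  obtain ⟨L, h1, h2, h3, h5⟩ := good_all hp (con4_of h4) (ham_spanningCoe hham)
  refine ⟨L.map (toSub G), ⟨?_, ?_⟩, by rwa [Multiset.card_map], ?_⟩
  · intro C hC
    obtain ⟨D, hD, rfl⟩ := Multiset.mem_map.1 hC
    exact isCycleSubgraph_toSub (h1 D hD).1 (h1 D hD).2
  · intro e
    induction e using Sym2.ind with
    | _ a b =>
      intro hab
      rw [mem_edgeSet] at hab
      rw [← h2 a b hab, Multiset.countP_map, Multiset.countP_eq_card_filter]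
      congr 1
      refine Multiset.filter_congr fun C hC => ?_
      rw [Subgraph.mem_edgeSet]
      exact ⟨fun h => h.1, fun h => ⟨h, hab⟩⟩
  · refine Multiset.mem_map.2 ⟨_, h5, ?_⟩
    ext a b
    · simp only [hham.2, Set.mem_univ, iff_true]
      have : a ∈ sp 𝔥.spanningCoe := by rw [(ham_spanningCoe hham).2.2]; exact Finset.mem_univ a
      rw [mem_sp] at this
      obtain ⟨w, hw⟩ := this
      exact ⟨w, hw, 𝔥.spanningCoe_le hw⟩
    · exact ⟨fun h => h.1, fun h => ⟨h, 𝔥.adj_sub h⟩⟩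

end Subgraphs

end
end PlanarCDC

/-- For a planar 4-connected graph `G` on `n` vertices with a vertex `v` of degree 4 or 5:
for every Hamiltonian cycle `𝔥` there is a CDC `𝒮` of size at most `n - 1` such that either
(a) `𝔥 ∈ 𝒮`, or (b) `n` is odd and there are cycles `C¹, C² ∈ 𝒮` whose edge intersection is a
single edge `e` incident to `v` and whose symmetric difference is `𝔥`.  Moreover, if `n` is
even then (a) holds. -/
theorem statement_2 {V : Type*} [Fintype V] (G : SimpleGraph V)
    (hplanar : IsPlanar G) (h4 : IsKConnected 4 G)
    (v : V) (hv : (G.neighborSet v).ncard = 4 ∨ (G.neighborSet v).ncard = 5)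
    (𝔥 : G.Subgraph) (hham : IsHamCycle G 𝔥) :
    ∃ 𝒮 : Multiset G.Subgraph, IsCDC G 𝒮 ∧
      Multiset.card 𝒮 ≤ Fintype.card V - 1 ∧
      (𝔥 ∈ 𝒮 ∨
        (Odd (Fintype.card V) ∧
          ∃ C₁ ∈ 𝒮, ∃ C₂ ∈ 𝒮, ∃ e : Sym2 V,
            v ∈ e ∧
            C₁.edgeSet ∩ C₂.edgeSet = {e} ∧
            𝔥.edgeSet = symmDiff C₁.edgeSet C₂.edgeSet)) ∧
      (Even (Fintype.card V) → 𝔥 ∈ 𝒮) := by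
  obtain ⟨𝒮, h1, h2, h3⟩ := PlanarCDC.exists_cdc hplanar h4 hham
  exact ⟨𝒮, h1, h2, Or.inl h3, fun _ => h3⟩
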